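/- Every 5-regular graph G is independent in the generic 3-dimensional rigidity matroid if and only if G is 3-sparse, i.e., every set X of at least 3 vertices induces at most 3|X| - 6 edges. In particular, the rank of the rigidity matrix R_3(G,p) at a generic configuration p equals the number of edges of G whenever G is 5-regular and 3-sparse. -/

import Mathlib

open Finset

variable {V : Type*} [Fintype V] [DecidableEq V]

/-- `i(X)`: the number of edges of `G` with both endpoints in `X`. -/
def edgesWithin (G : SimpleGraph V) [DecidableRel G.Adj] (X : Finset V) : ℕ :=
  ((X ×ˢ X).filter fun p => G.Adj p.1 p.2).card / 2

/-- `d(X,Y)`: the number of edges of `G` with one endpoint in `X \ Y` and the other in `Y \ X`. -/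
def edgesBetween (G : SimpleGraph V) [DecidableRel G.Adj] (X Y : Finset V) : ℕ :=
  (((X \ Y) ×ˢ (Y \ X)).filter fun p => G.Adj p.1 p.2).card

/-- `G` is 3-sparse: `i(X) ≤ 3|X| - 6` for all `X` with `|X| ≥ 3`. -/
def Sparse3 (G : SimpleGraph V) [DecidableRel G.Adj] : Prop :=
  ∀ X : Finset V, 3 ≤ X.card → edgesWithin G X + 6 ≤ 3 * X.card

/-- The set of common neighbours of `u` and `v`. -/
def commonNbrs (G : SimpleGraph V) [DecidableRel G.Adj] (u v : V) : Finset V :=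
  Finset.univ.filter fun t => G.Adj u t ∧ G.Adj v t

/-- The row of the rigidity matrix R_3(G,p) corresponding to an edge e = uv,
viewed as a vector in the space of maps V → ℝ³: its value at u is p u - p v,
its value at v is p v - p u, and it is zero elsewhere. -/
noncomputable def rigidityRow (p : V → Fin 3 → ℝ) (e : Sym2 V) : V → Fin 3 → ℝ :=
  fun w i => if h : w ∈ e then p w i - p (Sym2.Mem.other h) i else 0

set_option linter.unusedSectionVars false
set_option linter.unusedSimpArgs false
set_option linter.unusedVariables false

open Classical in
noncomputable def ad (F : SimpleGraph V) (i j : V) : ℤ := if F.Adj i j then 1 else 0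

noncomputable def dg (F : SimpleGraph V) (X : Finset V) (i : V) : ℤ := ∑ j ∈ X, ad F i j

noncomputable def ee (F : SimpleGraph V) (X : Finset V) : ℤ := ∑ i ∈ X, dg F X i

noncomputable def ff (F : SimpleGraph V) (X : Finset V) : ℤ := 6 * (X.card : ℤ) - ee F X

def Sp (F : SimpleGraph V) : Prop := ∀ X : Finset V, 3 ≤ X.card → 12 ≤ ff F X

open Classical in
noncomputable def nb (F : SimpleGraph V) (t : V) : Finset V := univ.filter fun j => F.Adj t j

open Classical in
noncomputable def su (F : SimpleGraph V) : Finset V := univ.filter fun i => ∃ j, F.Adj i j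

theorem ad_comm (F : SimpleGraph V) (i j : V) : ad F i j = ad F j i := by
  unfold ad
  by_cases h : F.Adj i j
  · rw [if_pos h, if_pos h.symm]
  · rw [if_neg h, if_neg fun h' => h h'.symm]

theorem ad_self (F : SimpleGraph V) (i : V) : ad F i i = 0 := by simp [ad]

theorem ad_nonneg (F : SimpleGraph V) (i j : V) : 0 ≤ ad F i j := by
  unfold ad; split_ifs <;> simp

theorem ad_le_one (F : SimpleGraph V) (i j : V) : ad F i j ≤ 1 := by
  unfold ad; split_ifs <;> simp

theorem ad_eq_one {F : SimpleGraph V} {i j : V} (h : F.Adj i j) : ad F i j = 1 := by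
  simp [ad, h]

theorem ad_eq_zero {F : SimpleGraph V} {i j : V} (h : ¬ F.Adj i j) : ad F i j = 0 := by
  simp [ad, h]

theorem ad_congr {F F' : SimpleGraph V} {i j k l : V} (h : F.Adj i j ↔ F'.Adj k l) :
    ad F i j = ad F' k l := by
  by_cases h' : F.Adj i j
  · rw [ad_eq_one h', ad_eq_one (h.1 h')]
  · rw [ad_eq_zero h', ad_eq_zero fun h'' => h' (h.2 h'')]

theorem dg_eq_card (F : SimpleGraph V) (X : Finset V) (i : V) :
    dg F X i = ((X ∩ nb F i).card : ℤ) := by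
  classical
  unfold dg ad nb
  rw [Finset.sum_boole]
  congr 2
  ext j; simp

theorem mem_nb {F : SimpleGraph V} {i j : V} : j ∈ nb F i ↔ F.Adj i j := by simp [nb]

theorem mem_su {F : SimpleGraph V} {i : V} : i ∈ su F ↔ ∃ j, F.Adj i j := by simp [su]

theorem dg_univ (F : SimpleGraph V) (i : V) : dg F univ i = ((nb F i).card : ℤ) := by
  rw [dg_eq_card]; simp

theorem dg_nonneg (F : SimpleGraph V) (X : Finset V) (i : V) : 0 ≤ dg F X i :=
  Finset.sum_nonneg fun j _ => ad_nonneg F i j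

theorem dg_mono (F : SimpleGraph V) {X Y : Finset V} (h : X ⊆ Y) (i : V) : dg F X i ≤ dg F Y i :=
  Finset.sum_le_sum_of_subset_of_nonneg h fun j _ _ => ad_nonneg F i j

theorem dg_le_univ (F : SimpleGraph V) (X : Finset V) (i : V) : dg F X i ≤ dg F univ i :=
  dg_mono F (subset_univ X) i

theorem dg_le_card (F : SimpleGraph V) (X : Finset V) (i : V) : dg F X i ≤ X.card := by
  rw [dg_eq_card]; exact_mod_cast card_le_card inter_subset_left

theorem dg_insert (F : SimpleGraph V) {X : Finset V} {t : V} (h : t ∉ X) (i : V) :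
    dg F (insert t X) i = ad F i t + dg F X i := by
  unfold dg; rw [sum_insert h]

theorem dg_union_inter (F : SimpleGraph V) (X Y : Finset V) (i : V) :
    dg F (X ∪ Y) i + dg F (X ∩ Y) i = dg F X i + dg F Y i := by
  unfold dg; exact sum_union_inter

theorem dg_gmono {F F' : SimpleGraph V} (h : F ≤ F') (X : Finset V) (i : V) :
    dg F X i ≤ dg F' X i := by
  refine Finset.sum_le_sum fun j _ => ?_
  by_cases hj : F.Adj i j
  · rw [ad_eq_one hj, ad_eq_one (h hj)]
  · rw [ad_eq_zero hj]; exact ad_nonneg _ _ _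

theorem ff_gmono {F F' : SimpleGraph V} (h : F ≤ F') (X : Finset V) : ff F' X ≤ ff F X := by
  unfold ff ee
  have : ∑ i ∈ X, dg F X i ≤ ∑ i ∈ X, dg F' X i := Finset.sum_le_sum fun i _ => dg_gmono h X i
  linarith

theorem Sp.mono {F F' : SimpleGraph V} (h : F ≤ F') (hs : Sp F') : Sp F :=
  fun X hX => (hs X hX).trans (ff_gmono h X)

theorem ff_insert (F : SimpleGraph V) {X : Finset V} {t : V} (h : t ∉ X) :
    ff F (insert t X) = ff F X + 6 - 2 * dg F X t := by
  unfold ff ee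
  rw [sum_insert h, card_insert_of_notMem h, dg_insert F h, ad_self]
  have : ∑ x ∈ X, dg F (insert t X) x = dg F X t + ∑ x ∈ X, dg F X x := by
    rw [show dg F X t = ∑ x ∈ X, ad F x t from Finset.sum_congr rfl fun j _ => ad_comm F t j,
      ← sum_add_distrib]
    exact sum_congr rfl fun x _ => dg_insert F h x
  rw [this]; push_cast; ring

theorem ff_erase (F : SimpleGraph V) {X : Finset V} {t : V} (h : t ∈ X) :
    ff F X = ff F (X.erase t) + 6 - 2 * dg F X t := by
  have h1 := ff_insert F (notMem_erase t X)
  have h2 := dg_insert F (notMem_erase t X) t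
  rw [insert_erase h] at h1 h2
  rw [ad_self] at h2; rw [h1, h2]; ring

theorem ff_empty (F : SimpleGraph V) : ff F ∅ = 0 := by simp [ff, ee]

theorem ff_even (F : SimpleGraph V) (X : Finset V) : ∃ k, ff F X = 2 * k := by
  induction X using Finset.induction_on with
  | empty => exact ⟨0, by simp [ff_empty]⟩
  | insert t X h ih =>
    obtain ⟨k, hk⟩ := ih
    exact ⟨k + 3 - dg F X t, by rw [ff_insert F h, hk]; ring⟩

theorem ff_submod (F : SimpleGraph V) (X Y : Finset V) :
    ff F (X ∪ Y) + ff F (X ∩ Y) ≤ ff F X + ff F Y := by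
  have key : ee F X + ee F Y ≤ ee F (X ∪ Y) + ee F (X ∩ Y) := by
    have h : ∀ Z : Finset V, ee F Z =
        ∑ i, ∑ j, (if i ∈ Z ∧ j ∈ Z then ad F i j else 0) := by
      intro Z
      unfold ee dg
      rw [← Finset.sum_filter_add_sum_filter_not univ (· ∈ Z)]
      rw [Finset.sum_eq_zero (s := univ.filter (¬ · ∈ Z))]
      · simp only [add_zero]
        refine Finset.sum_congr (by ext; simp) fun i hi => ?_
        rw [← Finset.sum_filter]
        have hi' : i ∈ Z := by simpa using hi
        refine Finset.sum_congr (by ext; simp [hi']) fun _ _ => rfl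
      · intro i hi; simp at hi; simp [hi]
    rw [h, h, h, h, ← sum_add_distrib, ← sum_add_distrib]
    refine sum_le_sum fun i _ => ?_
    rw [← sum_add_distrib, ← sum_add_distrib]
    refine sum_le_sum fun j _ => ?_
    have := ad_nonneg F i j
    by_cases h1 : i ∈ X <;> by_cases h2 : i ∈ Y <;> by_cases h3 : j ∈ X <;> by_cases h4 : j ∈ Y <;>
      simp [h1, h2, h3, h4, this]
  have hc := card_union_add_card_inter X Y
  have hc' : ((X ∪ Y).card : ℤ) + (X ∩ Y).card = X.card + Y.card := by exact_mod_cast hc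
  unfold ff
  linarith

theorem ff_ge_of_card_le (F : SimpleGraph V) (X : Finset V) :
    6 * (X.card : ℤ) - X.card * (X.card - 1) ≤ ff F X := by
  unfold ff ee
  have : ∑ i ∈ X, dg F X i ≤ ∑ i ∈ X, ((X.card : ℤ) - 1) := by
    refine sum_le_sum fun i hi => ?_
    rw [dg_eq_card]
    have : X ∩ nb F i ⊆ X.erase i := by
      intro j hj
      simp [mem_nb] at hj ⊢
      exact ⟨hj.2.ne', hj.1⟩
    have h2 := card_le_card this
    rw [card_erase_of_mem hi] at h2
    have : 0 < X.card := card_pos.2 ⟨i, hi⟩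
    omega
  simp at this
  linarith

theorem ff_two (F : SimpleGraph V) {X : Finset V} (h : X.card = 2) : 10 ≤ ff F X := by
  have := ff_ge_of_card_le F X; rw [h] at this; norm_num at this; exact this

theorem ff_ge_ten {F : SimpleGraph V} (hs : Sp F) {X : Finset V} (h : 2 ≤ X.card) : 10 ≤ ff F X := by
  rcases h.lt_or_eq with h | h
  · linarith [hs X h]
  · exact ff_two F h.symm

/-- tight sets have large degrees -/
theorem tight_dg {F : SimpleGraph V} (hs : Sp F) {X : Finset V} (h : 4 ≤ X.card) (ht : ff F X = 12)
    {z : V} (hz : z ∈ X) : 3 ≤ dg F X z := by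
  have h1 := ff_erase F hz
  have h2 := hs (X.erase z) (by rw [card_erase_of_mem hz]; omega)
  omega

theorem tight_union {F : SimpleGraph V} (hs : Sp F) {X Y : Finset V} (hX : ff F X = 12)
    (hY : ff F Y = 12) (h : 3 ≤ (X ∩ Y).card) : ff F (X ∪ Y) = 12 ∧ ff F (X ∩ Y) = 12 := by
  have h1 := ff_submod F X Y
  have h2 := hs _ h
  have h3 := hs (X ∪ Y) (h.trans (card_le_card (inter_subset_left.trans subset_union_left)))
  omega

/-! graph operations -/

def gdel (F : SimpleGraph V) (t : V) : SimpleGraph V where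
  Adj i j := F.Adj i j ∧ i ≠ t ∧ j ≠ t
  symm := ⟨fun i j h => ⟨h.1.symm, h.2.2, h.2.1⟩⟩
  loopless := ⟨fun i h => F.loopless.irrefl i h.1⟩

def gadd (F : SimpleGraph V) (a b : V) : SimpleGraph V where
  Adj i j := F.Adj i j ∨ (a ≠ b ∧ ((i = a ∧ j = b) ∨ (i = b ∧ j = a)))
  symm := ⟨fun i j h => by
    rcases h with h | ⟨h, h'⟩
    · exact Or.inl h.symm
    · exact Or.inr ⟨h, by tauto⟩⟩
  loopless := ⟨fun i h => by
    rcases h with h | ⟨h, ⟨h1, h2⟩ | ⟨h1, h2⟩⟩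
    · exact F.loopless.irrefl i h
    · exact h (h1.symm.trans h2)
    · exact h (h2.symm.trans h1)⟩

def gcut (F : SimpleGraph V) (x y : V) : SimpleGraph V where
  Adj i j := F.Adj i j ∧ ¬ ((i = x ∧ j = y) ∨ (i = y ∧ j = x))
  symm := ⟨fun i j h => ⟨h.1.symm, by have := h.2; tauto⟩⟩
  loopless := ⟨fun i h => F.loopless.irrefl i h.1⟩

theorem gdel_le (F : SimpleGraph V) (t : V) : gdel F t ≤ F := fun _ _ h => h.1
theorem le_gadd (F : SimpleGraph V) (a b : V) : F ≤ gadd F a b := fun _ _ h => Or.inl h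
theorem gcut_le (F : SimpleGraph V) (a b : V) : gcut F a b ≤ F := fun _ _ h => h.1

theorem ff_congr {F F' : SimpleGraph V} {X : Finset V}
    (h : ∀ i ∈ X, ∀ j ∈ X, F.Adj i j ↔ F'.Adj i j) : ff F X = ff F' X := by
  unfold ff ee dg
  congr 1
  exact sum_congr rfl fun i hi => sum_congr rfl fun j hj => ad_congr (h i hi j hj)

theorem ff_gdel (F : SimpleGraph V) {t : V} {X : Finset V} (h : t ∉ X) :
    ff (gdel F t) X = ff F X := by
  apply ff_congr
  intro i hi j hj
  have h1 : i ≠ t := fun h' => h (h' ▸ hi)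
  have h2 : j ≠ t := fun h' => h (h' ▸ hj)
  simp [gdel, h1, h2]

theorem ff_gadd_of_not (F : SimpleGraph V) {a b : V} {X : Finset V} (h : ¬ (a ∈ X ∧ b ∈ X)) :
    ff (gadd F a b) X = ff F X := by
  apply ff_congr
  intro i hi j hj
  simp only [gadd]
  constructor
  · rintro (h' | ⟨_, ⟨rfl, rfl⟩ | ⟨rfl, rfl⟩⟩)
    · exact h'
    · exact absurd ⟨hi, hj⟩ h
    · exact absurd ⟨hj, hi⟩ h
  · exact Or.inl

theorem ad_gadd (F : SimpleGraph V) {a b : V} (hab : a ≠ b) (hn : ¬ F.Adj a b) (i j : V) :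
    ad (gadd F a b) i j = ad F i j + (if i = a then (if j = b then 1 else 0) else 0)
      + (if i = b then (if j = a then 1 else 0) else 0) := by
  have hn' : ¬ F.Adj b a := fun h => hn h.symm
  by_cases h : (i = a ∧ j = b) ∨ (i = b ∧ j = a)
  · rw [ad_eq_one (F := gadd F a b) (Or.inr ⟨hab, h⟩)]
    rcases h with ⟨rfl, rfl⟩ | ⟨rfl, rfl⟩
    · rw [ad_eq_zero hn]; simp [hab]
    · rw [ad_eq_zero hn']; simp [hab, hab.symm]
  · rw [ad_congr (F := gadd F a b) (F' := F) (k := i) (l := j)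
      ⟨fun h' => h'.resolve_right fun h'' => h h''.2, Or.inl⟩]
    push Not at h
    by_cases h1 : i = a
    · by_cases h2 : i = b
      · exact absurd (h1.symm.trans h2) hab
      · simp [h1, hab, h.1 h1]
    · by_cases h2 : i = b
      · simp [h2, hab.symm, h.2 h2]
      · simp [h1, h2]

theorem ff_gadd (F : SimpleGraph V) {a b : V} (hab : a ≠ b) (hn : ¬ F.Adj a b) {X : Finset V}
    (ha : a ∈ X) (hb : b ∈ X) : ff (gadd F a b) X = ff F X - 2 := by
  unfold ff ee dg
  simp only [ad_gadd F hab hn, sum_add_distrib]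
  simp [Finset.sum_ite_eq', ha, hb]
  ring

theorem ff_gadd_ge (F : SimpleGraph V) {a b : V} (X : Finset V) :
    ff F X - 2 ≤ ff (gadd F a b) X := by
  by_cases hab : a = b
  · have : gadd F a b = F := by ext i j; simp [gadd, hab]
    rw [this]; linarith
  by_cases hn : F.Adj a b
  · have : gadd F a b = F := by
      ext i j; simp only [gadd]
      constructor
      · rintro (h' | ⟨_, ⟨rfl, rfl⟩ | ⟨rfl, rfl⟩⟩)
        exacts [h', hn, hn.symm]
      · exact Or.inl
    rw [this]; linarith
  by_cases h : a ∈ X ∧ b ∈ X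
  · rw [ff_gadd F hab hn h.1 h.2]
  · rw [ff_gadd_of_not F h]; linarith

theorem dg_gadd_le (F : SimpleGraph V) {a b : V} (hab : a ≠ b) (hn : ¬ F.Adj a b) (i : V) :
    dg (gadd F a b) univ i = dg F univ i + (if i = a then 1 else 0) + (if i = b then 1 else 0) := by
  unfold dg
  simp only [ad_gadd F hab hn, sum_add_distrib]
  by_cases h1 : i = a <;> by_cases h2 : i = b <;> simp [h1, h2]

theorem dg_gdel (F : SimpleGraph V) {t i : V} (h : i ≠ t) :
    dg (gdel F t) univ i = dg F univ i - ad F i t := by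
  have h1 := dg_insert F (notMem_erase t univ) i
  rw [insert_erase (mem_univ t)] at h1
  have h2 := dg_insert (gdel F t) (notMem_erase t univ) i
  rw [insert_erase (mem_univ t)] at h2
  rw [h1, h2, ad_eq_zero (F := gdel F t) (by simp [gdel])]
  have : dg (gdel F t) (univ.erase t) i = dg F (univ.erase t) i := by
    refine sum_congr rfl fun j hj => ?_
    have : j ≠ t := by simpa using hj
    exact ad_congr (by simp [gdel, h, this])
  rw [this]; ring

theorem dg_gdel_self (F : SimpleGraph V) (t : V) (X : Finset V) : dg (gdel F t) X t = 0 :=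
  sum_eq_zero fun j _ => ad_eq_zero (by simp [gdel])

/-- sparsity check ignoring an isolated vertex -/
theorem sp_of_isolated {F : SimpleGraph V} {t : V} (ht : ∀ j, ¬ F.Adj t j)
    (h : ∀ X : Finset V, 3 ≤ X.card → t ∉ X → 12 ≤ ff F X) : Sp F := by
  intro X hX
  by_cases htX : t ∈ X
  · have h1 := ff_erase F htX
    have h2 : dg F X t = 0 := sum_eq_zero fun j _ => ad_eq_zero (ht j)
    have h3 : (X.erase t).card = X.card - 1 := card_erase_of_mem htX
    by_cases h4 : 3 ≤ (X.erase t).card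
    · have := h _ h4 (notMem_erase t X); omega
    · have := ff_two F (X := X.erase t) (by omega); omega
  · exact h X hX htX

theorem ee_nonneg (F : SimpleGraph V) (X : Finset V) : 0 ≤ ee F X :=
  sum_nonneg fun i _ => dg_nonneg F X i

theorem ee_mono {F F' : SimpleGraph V} (h : F ≤ F') (X : Finset V) : ee F X ≤ ee F' X := by
  have := ff_gmono h X
  unfold ff at this; linarith

theorem eq_of_ee {F F' : SimpleGraph V} (h : F ≤ F') (he : ee F univ = ee F' univ) : F = F' := by
  have h1 : ∀ i ∈ (univ : Finset V), dg F univ i = dg F' univ i :=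
    (sum_eq_sum_iff_of_le fun i _ => dg_gmono h univ i).1 he
  ext i j
  refine ⟨fun hh => h hh, fun hh => ?_⟩
  have h2 := h1 i (mem_univ i)
  unfold dg at h2
  rw [sum_eq_sum_iff_of_le] at h2
  · have := h2 j (mem_univ j)
    rw [ad_eq_one hh] at this
    by_contra hc
    rw [ad_eq_zero hc] at this
    exact absurd this (by norm_num)
  · intro j _
    by_cases hj : F.Adj i j
    · rw [ad_eq_one hj, ad_eq_one (h hj)]
    · rw [ad_eq_zero hj]; exact ad_nonneg _ _ _

theorem ee_lt {F F' : SimpleGraph V} (h : F < F') : ee F univ < ee F' univ :=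
  lt_of_le_of_ne (ee_mono h.le _) fun he => h.ne (eq_of_ee h.le he)

/-- transfer of injectivity to generic points -/
theorem transfer {σ K E : Type*} [Fintype K] [Fintype E]
    (P : K → E → MvPolynomial σ ℚ) (x x0 : σ → ℝ) (h0 : AlgebraicIndependent ℚ x0)
    (hx : ∀ c : E → ℝ, (∀ k, ∑ e, MvPolynomial.aeval x (P k e) * c e = 0) → ∀ e, c e = 0)
    (c : E → ℝ) (hc : ∀ k, ∑ e, MvPolynomial.aeval x0 (P k e) * c e = 0) : ∀ e, c e = 0 := by
  classical
  let M : Matrix K E (MvPolynomial σ ℚ) := Matrix.of P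
  let D := (M.transpose * M).det
  have hD : ∀ y : σ → ℝ, MvPolynomial.aeval y D =
      ((M.map (MvPolynomial.aeval y)).transpose * (M.map (MvPolynomial.aeval y))).det := by
    intro y
    have := (MvPolynomial.aeval (R := ℚ) y).toRingHom.map_det (M.transpose * M)
    simp only [AlgHom.toRingHom_eq_coe, RingHom.coe_coe] at this
    rw [show D = (M.transpose * M).det from rfl, this]
    congr 1
    rw [RingHom.mapMatrix_apply, Matrix.map_mul]
    rfl
  have hne : D ≠ 0 := by
    intro h
    have h1 := hD x
    rw [h, map_zero] at h1
    obtain ⟨v, hv, hv0⟩ := Matrix.exists_mulVec_eq_zero_iff.2 h1.symm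
    apply hv
    ext e
    apply hx v
    have h2 : (M.map (MvPolynomial.aeval x)).mulVec v = 0 := by
      have h3 : (M.map (MvPolynomial.aeval x)).mulVec v ⬝ᵥ
          (M.map (MvPolynomial.aeval x)).mulVec v = 0 := by
        rw [Matrix.dotProduct_mulVec, Matrix.vecMul_mulVec, ← Matrix.dotProduct_mulVec, hv0, dotProduct_zero]
      exact dotProduct_self_eq_zero.1 h3
    intro k
    exact congrFun h2 k
  have hne' : MvPolynomial.aeval x0 D ≠ 0 := fun h => hne ((injective_iff_map_eq_zero _).1 h0 D h)
  by_contra hcon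
  push Not at hcon
  obtain ⟨e, he⟩ := hcon
  apply hne'
  rw [hD]
  refine Matrix.exists_mulVec_eq_zero_iff.1 ⟨c, fun h => he (congrFun h e), ?_⟩
  rw [← Matrix.mulVec_mulVec]
  have : (M.map (MvPolynomial.aeval x0)).mulVec c = 0 := by
    ext k; exact hc k
  rw [this, Matrix.mulVec_zero]

def Gen (p : V → Fin 3 → ℝ) : Prop := AlgebraicIndependent ℚ (fun x : V × Fin 3 => p x.1 x.2)

structure IsStress (p : V → Fin 3 → ℝ) (F : SimpleGraph V) (ω : V → V → ℝ) : Prop where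
  symm : ∀ i j, ω i j = ω j i
  supp : ∀ i j, ¬ F.Adj i j → ω i j = 0
  eq : ∀ i k, ∑ j, ω i j * (p i k - p j k) = 0

def Ind (p : V → Fin 3 → ℝ) (F : SimpleGraph V) : Prop :=
  ∀ ω, IsStress p F ω → ∀ i j, ω i j = 0

theorem stress_transfer (Q : Prop) (p p0 : V → Fin 3 → ℝ) (h0 : Gen p0) (F : SimpleGraph V)
    (h : ∀ ω, IsStress p F ω → (Q → ∀ i, ∑ j, ω i j = 0) → ∀ i j, ω i j = 0)
    (ω : V → V → ℝ) (hω : IsStress p0 F ω) (hQ : Q → ∀ i, ∑ j, ω i j = 0) : ∀ i j, ω i j = 0 := by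
  classical
  let P : (V × V) ⊕ (V × V) ⊕ (V × Fin 3) ⊕ V → V × V → MvPolynomial (V × Fin 3) ℚ
    | Sum.inl a, e => (if e = a then 1 else 0) - (if e = (a.2, a.1) then 1 else 0)
    | Sum.inr (Sum.inl a), e => if F.Adj a.1 a.2 then 0 else (if e = a then 1 else 0)
    | Sum.inr (Sum.inr (Sum.inl a)), e =>
        if e.1 = a.1 then MvPolynomial.X (a.1, a.2) - MvPolynomial.X (e.2, a.2) else 0
    | Sum.inr (Sum.inr (Sum.inr a)), e => if Q then (if e.1 = a then 1 else 0) else 0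
  have key : ∀ (y : V → Fin 3 → ℝ) (c : V × V → ℝ),
      (∀ k, ∑ e, MvPolynomial.aeval (fun x : V × Fin 3 => y x.1 x.2) (P k e) * c e = 0) ↔
      (IsStress y F (fun i j => c (i, j)) ∧ (Q → ∀ i, ∑ j, c (i, j) = 0)) := by
    intro y c
    have e1 : ∀ a : V × V, ∑ e, MvPolynomial.aeval (fun x : V × Fin 3 => y x.1 x.2)
        (P (Sum.inl a) e) * c e = c a - c (a.2, a.1) := by
      intro a
      simp only [P, map_sub, sub_mul, sum_sub_distrib, apply_ite (MvPolynomial.aeval (R := ℚ) (fun x : V × Fin 3 => y x.1 x.2)), map_one, map_zero, ite_mul,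
        one_mul, zero_mul, Finset.sum_ite_eq', mem_univ, if_true]
    have e2 : ∀ a : V × V, ∑ e, MvPolynomial.aeval (fun x : V × Fin 3 => y x.1 x.2)
        (P (Sum.inr (Sum.inl a)) e) * c e = if F.Adj a.1 a.2 then 0 else c a := by
      intro a
      simp only [P]
      split_ifs
      · simp
      · simp only [apply_ite (MvPolynomial.aeval (R := ℚ) (fun x : V × Fin 3 => y x.1 x.2)), map_one, map_zero, ite_mul,
          one_mul, zero_mul, Finset.sum_ite_eq', mem_univ, if_true]
    have e3 : ∀ a : V × Fin 3, ∑ e, MvPolynomial.aeval (fun x : V × Fin 3 => y x.1 x.2)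
        (P (Sum.inr (Sum.inr (Sum.inl a))) e) * c e =
        ∑ j, c (a.1, j) * (y a.1 a.2 - y j a.2) := by
      intro a
      rw [Fintype.sum_prod_type]
      rw [Finset.sum_eq_single a.1]
      · refine sum_congr rfl fun j _ => ?_
        simp [P]; ring
      · intro i _ hi
        refine sum_eq_zero fun j _ => ?_
        simp [P, hi]
      · simp
    have e4 : ∀ a : V, ∑ e, MvPolynomial.aeval (fun x : V × Fin 3 => y x.1 x.2)
        (P (Sum.inr (Sum.inr (Sum.inr a))) e) * c e = if Q then ∑ j, c (a, j) else 0 := by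
      intro a
      rw [Fintype.sum_prod_type]
      rw [Finset.sum_eq_single a]
      · simp only [P]; split_ifs <;> simp
      · intro i _ hi
        refine sum_eq_zero fun j _ => ?_
        simp [P, hi]
      · simp
    constructor
    · intro H
      refine ⟨⟨fun i j => ?_, fun i j hij => ?_, fun i k => ?_⟩, fun hq i => ?_⟩
      · have := H (Sum.inl (i, j)); rw [e1] at this; exact sub_eq_zero.1 this
      · have := H (Sum.inr (Sum.inl (i, j))); rw [e2] at this; simpa [hij] using this
      · have := H (Sum.inr (Sum.inr (Sum.inl (i, k)))); rw [e3] at this; exact this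
      · have := H (Sum.inr (Sum.inr (Sum.inr i))); rw [e4] at this; simpa [hq] using this
    · rintro ⟨H, H'⟩ (a | a | a | a)
      · rw [e1, sub_eq_zero]; exact H.symm a.1 a.2
      · rw [e2]; split_ifs with hh
        · rfl
        · exact H.supp a.1 a.2 hh
      · rw [e3]; exact H.eq a.1 a.2
      · rw [e4]; split_ifs with hh
        · exact H' hh a
        · rfl
  intro i j
  exact transfer P (fun x => p x.1 x.2) (fun x => p0 x.1 x.2) h0
    (fun c hc e => h _ ((key p c).1 hc).1 ((key p c).1 hc).2 e.1 e.2) (fun e => ω e.1 e.2)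
    ((key p0 _).2 ⟨hω, hQ⟩) (i, j)

theorem ind_transfer {p p0 : V → Fin 3 → ℝ} (h0 : Gen p0) {F : SimpleGraph V} (h : Ind p F) :
    Ind p0 F := fun ω hω => stress_transfer False p p0 h0 F (fun ω hω _ => h ω hω) ω hω (by simp)

/-- affine independence of the points of a set -/
def AffI (p : V → Fin 3 → ℝ) (S : Finset V) : Prop :=
  ∀ μ : V → ℝ, (∀ i, i ∉ S → μ i = 0) → ∑ i, μ i = 0 → (∀ k, ∑ i, μ i * p i k = 0) → ∀ i, μ i = 0

theorem affI_transfer (pos : V → Fin 3 → MvPolynomial (V × Fin 3) ℚ) {p0 : V → Fin 3 → ℝ}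
    (h0 : Gen p0) (S : Finset V) (x : V → Fin 3 → ℝ)
    (h : AffI (fun i k => MvPolynomial.aeval (fun y : V × Fin 3 => x y.1 y.2) (pos i k)) S) :
    AffI (fun i k => MvPolynomial.aeval (fun y : V × Fin 3 => p0 y.1 y.2) (pos i k)) S := by
  classical
  let P : V ⊕ Unit ⊕ Fin 3 → V → MvPolynomial (V × Fin 3) ℚ
    | Sum.inl a, e => if a ∈ S then 0 else (if e = a then 1 else 0)
    | Sum.inr (Sum.inl _), e => 1
    | Sum.inr (Sum.inr k), e => pos e k
  have key : ∀ (y : V → Fin 3 → ℝ) (c : V → ℝ),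
      (∀ k, ∑ e, MvPolynomial.aeval (fun x : V × Fin 3 => y x.1 x.2) (P k e) * c e = 0) ↔
      ((∀ i, i ∉ S → c i = 0) ∧ ∑ i, c i = 0 ∧ (∀ k, ∑ i, c i *
        MvPolynomial.aeval (fun x : V × Fin 3 => y x.1 x.2) (pos i k) = 0)) := by
    intro y c
    have e1 : ∀ a, ∑ e, MvPolynomial.aeval (fun x : V × Fin 3 => y x.1 x.2)
        (P (Sum.inl a) e) * c e = if a ∈ S then 0 else c a := by
      intro a
      simp only [P]
      split_ifs
      · simp
      · simp only [apply_ite (MvPolynomial.aeval (R := ℚ) (fun x : V × Fin 3 => y x.1 x.2)), map_one, map_zero, ite_mul,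
          one_mul, zero_mul, Finset.sum_ite_eq', mem_univ, if_true]
    constructor
    · intro H
      refine ⟨fun i hi => ?_, ?_, fun k => ?_⟩
      · have := H (Sum.inl i); rw [e1] at this; simpa [hi] using this
      · simpa [P] using H (Sum.inr (Sum.inl ()))
      · simpa [P, mul_comm] using H (Sum.inr (Sum.inr k))
    · rintro ⟨H1, H2, H3⟩ (a | a | a)
      · rw [e1]; split_ifs with hh
        · rfl
        · exact H1 a hh
      · simpa [P] using H2
      · simpa [P, mul_comm] using H3 a
  intro μ h1 h2 h3
  exact transfer P (fun x' => x x'.1 x'.2) (fun x => p0 x.1 x.2) h0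
    (fun c hc e => h c ((key x c).1 hc).1 ((key x c).1 hc).2.1 ((key x c).1 hc).2.2 e) μ
    ((key p0 _).2 ⟨h1, h2, h3⟩)

theorem affI_simplex (S : Finset V) (s0 s1 s2 s3 : V) (hS : ∀ i ∈ S, i = s0 ∨ i = s1 ∨ i = s2 ∨ i = s3)
    (x : V → Fin 3 → ℝ) (h0 : ∀ k, x s0 k = 0)
    (h1 : ∀ k, x s1 k = if k = 0 then 1 else 0)
    (h2 : ∀ k, x s2 k = if k = 1 then 1 else 0)
    (h3 : ∀ k, x s3 k = if k = 2 then 1 else 0) : AffI x S := by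
  intro μ hμ hs hk
  have d01 : s0 ≠ s1 := by rintro rfl; simpa [h0] using h1 0
  have d02 : s0 ≠ s2 := by rintro rfl; simpa [h0] using h2 1
  have d03 : s0 ≠ s3 := by rintro rfl; simpa [h0] using h3 2
  have d12 : s1 ≠ s2 := by rintro rfl; simpa [h1] using h2 1
  have d13 : s1 ≠ s3 := by rintro rfl; simpa [h1] using h3 2
  have d23 : s2 ≠ s3 := by rintro rfl; simpa [h2] using h3 2
  have red : ∀ g : V → ℝ, ∑ i, μ i * g i = μ s0 * g s0 + (μ s1 * g s1 + (μ s2 * g s2 + μ s3 * g s3)) := by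
    intro g
    rw [← Finset.sum_subset (subset_univ ({s0, s1, s2, s3} : Finset V))]
    · rw [sum_insert (by simp [d01, d02, d03]), sum_insert (by simp [d12, d13]),
        sum_insert (by simp [d23]), sum_singleton]
    · intro i _ hi
      rw [hμ i, zero_mul]
      intro hiS
      have := hS i hiS
      simp at hi; tauto
  have r0 := hk 0
  have r1 := hk 1
  have r2 := hk 2
  rw [red] at r0 r1 r2
  have rs := red fun _ => 1
  simp only [mul_one] at rs
  rw [hs] at rs
  simp [h0, h1, h2, h3] at r0 r1 r2
  rw [r0, r1, r2] at rs
  intro i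
  by_cases hi : i ∈ S
  · rcases hS i hi with rfl | rfl | rfl | rfl
    · linarith
    all_goals assumption
  · exact hμ i hi

theorem exists_superset_four (S : Finset V) (h : S.card ≤ 4) (hV : 4 ≤ Fintype.card V) :
    ∃ a b c d : V, a ≠ b ∧ a ≠ c ∧ a ≠ d ∧ b ≠ c ∧ b ≠ d ∧ c ≠ d ∧ S ⊆ {a, b, c, d} := by
  obtain ⟨T, hT, hc⟩ := Finset.exists_superset_card_eq h hV
  obtain ⟨a, b, c, d, h1, h2, h3, h4, h5, h6, rfl⟩ := Finset.card_eq_four.1 hc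
  exact ⟨a, b, c, d, h1, h2, h3, h4, h5, h6, hT⟩

theorem affI_gen {p0 : V → Fin 3 → ℝ} (h0 : Gen p0) (hV : 4 ≤ Fintype.card V) (S : Finset V)
    (h : S.card ≤ 4) : AffI p0 S := by
  obtain ⟨a, b, c, d, h1, h2, h3, h4, h5, h6, hT⟩ := exists_superset_four S h hV
  have := affI_transfer (fun i k => MvPolynomial.X (i, k)) h0 S
    (fun i k => if i = b then (if k = 0 then 1 else 0) else if i = c then (if k = 1 then 1 else 0)
      else if i = d then (if k = 2 then 1 else 0) else 0) (by
      simp only [MvPolynomial.aeval_X]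
      apply affI_simplex S a b c d (fun i hi => by simpa using hT hi) <;> intro k <;>
        simp [h1, h2, h3, h4, h5, h6, h1.symm, h2.symm, h3.symm, h4.symm, h5.symm, h6.symm])
  simpa only [MvPolynomial.aeval_X] using this

structure Gn (p : V → Fin 3 → ℝ) : Prop where
  gen : Gen p
  card : 4 ≤ Fintype.card V

structure IsCirc (p : V → Fin 3 → ℝ) (C : SimpleGraph V) : Prop where
  dep : ¬ Ind p C
  min : ∀ F, F < C → Ind p F

theorem exists_circ {p : V → Fin 3 → ℝ} {F : SimpleGraph V} (h : ¬ Ind p F) :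
    ∃ C ≤ F, IsCirc p C := by
  obtain ⟨C, hC, hm⟩ := exists_minimal_le_of_wellFoundedLT (fun C => ¬ Ind p C) F h
  exact ⟨C, hC, hm.prop, fun F' hF' => by_contra fun h' => hF'.not_ge (hm.le_of_le h' hF'.le)⟩

theorem IsStress.mono {p : V → Fin 3 → ℝ} {F F' : SimpleGraph V} {ω : V → V → ℝ} (h : F ≤ F')
    (hω : IsStress p F ω) : IsStress p F' ω :=
  ⟨hω.symm, fun i j hij => hω.supp i j fun h' => hij (h h'), hω.eq⟩

theorem IsStress.lin {p : V → Fin 3 → ℝ} {F : SimpleGraph V} {ω ω' : V → V → ℝ}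
    (hω : IsStress p F ω) (hω' : IsStress p F ω') (s t : ℝ) :
    IsStress p F (fun i j => s * ω i j + t * ω' i j) := by
  refine ⟨fun i j => ?_, fun i j hij => ?_, fun i k => ?_⟩
  · rw [hω.symm i j, hω'.symm i j]
  · rw [hω.supp i j hij, hω'.supp i j hij]; ring
  · have h1 := hω.eq i k
    have h2 := hω'.eq i k
    calc _ = s * ∑ j, ω i j * (p i k - p j k) + t * ∑ j, ω' i j * (p i k - p j k) := by
          rw [mul_sum, mul_sum, ← sum_add_distrib]
          exact sum_congr rfl fun j _ => by ring
      _ = 0 := by rw [h1, h2]; ring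

theorem gcut_lt {C : SimpleGraph V} {i j : V} (h : C.Adj i j) : gcut C i j < C := by
  refine lt_of_le_of_ne (gcut_le C i j) fun he => ?_
  rw [← he] at h
  exact h.2 (Or.inl ⟨rfl, rfl⟩)

theorem IsStress.gcut {p : V → Fin 3 → ℝ} {F : SimpleGraph V} {ω : V → V → ℝ}
    (hω : IsStress p F ω) {a b : V} (h : ω a b = 0) : IsStress p (gcut F a b) ω := by
  refine ⟨hω.symm, fun i j hij => ?_, hω.eq⟩
  by_cases h1 : F.Adj i j
  · have : (i = a ∧ j = b) ∨ (i = b ∧ j = a) := by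
      by_contra h2; exact hij ⟨h1, h2⟩
    rcases this with ⟨rfl, rfl⟩ | ⟨rfl, rfl⟩
    · exact h
    · rw [hω.symm]; exact h
  · exact hω.supp i j h1

theorem circ_unique {p : V → Fin 3 → ℝ} {C : SimpleGraph V} (hC : IsCirc p C) {ω : V → V → ℝ}
    (hω : IsStress p C ω) {a b : V} (hab : C.Adj a b) (h : ω a b = 0) : ∀ i j, ω i j = 0 :=
  hC.min _ (gcut_lt hab) ω (hω.gcut h)

theorem circ_stress {p : V → Fin 3 → ℝ} {C : SimpleGraph V} (hC : IsCirc p C) :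
    ∃ ω, IsStress p C ω ∧ ∀ i j, C.Adj i j → ω i j ≠ 0 := by
  have := hC.dep
  unfold Ind at this
  push Not at this
  obtain ⟨ω, hω, a, b, hab⟩ := this
  exact ⟨ω, hω, fun i j hij h0 => hab (circ_unique hC hω hij h0 a b)⟩

theorem circ_adj {p : V → Fin 3 → ℝ} {C : SimpleGraph V} (hC : IsCirc p C) : ∃ a b, C.Adj a b := by
  by_contra h
  push Not at h
  exact hC.dep fun ω hω i j => hω.supp i j (h i j)

theorem sstar_zero {p : V → Fin 3 → ℝ} (hg : Gn p) {t : V} {T : Finset V} (ht : t ∉ T)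
    (hT : T.card ≤ 3) (c : V → ℝ) (hc : ∀ j, j ∉ T → c j = 0)
    (he : ∀ k, ∑ j, c j * (p t k - p j k) = 0) : ∀ j, c j = 0 := by
  have hA := affI_gen hg.gen hg.card (insert t T) (by rw [card_insert_of_notMem ht]; omega)
  have ht0 := hc t ht
  have key := hA (fun j => c j - (if j = t then ∑ i, c i else 0)) (fun i hi => by
      simp at hi; simp [hi.1, hc i hi.2]) (by
      rw [sum_sub_distrib]; simp) (fun k => by
      have := he k
      simp only [mul_sub, sub_mul, sum_sub_distrib, ← sum_mul] at this ⊢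
      simp only [ite_mul, zero_mul, Finset.sum_ite_eq', mem_univ, if_true]
      linarith)
  intro j
  by_cases hj : j = t
  · rw [hj, ht0]
  · simpa [hj] using key j

theorem lem2 {p : V → Fin 3 → ℝ} (hg : Gn p) {F : SimpleGraph V} {t : V}
    (hd : dg F univ t ≤ 3) (hI : Ind p (gdel F t)) : Ind p F := by
  intro ω hω
  rw [dg_univ] at hd
  have h0 : ∀ j, ω t j = 0 := sstar_zero hg (T := nb F t) (by simp [mem_nb]) (by exact_mod_cast hd)
    (fun j => ω t j) (fun j hj => hω.supp t j (by simpa [mem_nb] using hj)) (fun k => hω.eq t k)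
  refine hI ω ⟨hω.symm, fun i j hij => ?_, hω.eq⟩
  by_cases h1 : i = t
  · rw [h1]; exact h0 j
  by_cases h2 : j = t
  · rw [h2, hω.symm]; exact h0 i
  exact hω.supp i j fun h => hij ⟨h, h1, h2⟩

theorem circ_deg {p : V → Fin 3 → ℝ} (hg : Gn p) {C : SimpleGraph V} (hC : IsCirc p C) {t : V}
    (ht : t ∈ su C) : 4 ≤ dg C univ t := by
  by_contra h
  refine hC.dep (lem2 hg (t := t) (by omega) (hC.min _ (lt_of_le_of_ne (gdel_le C t) fun he => ?_)))
  obtain ⟨j, hj⟩ := mem_su.1 ht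
  rw [← he] at hj
  exact hj.2.1 rfl

theorem lem3 {p : V → Fin 3 → ℝ} (hg : Gn p) {F : SimpleGraph V} {t a b c d : V}
    (hab : a ≠ b) (hac : a ≠ c) (had : a ≠ d) (hbc : b ≠ c) (hbd : b ≠ d) (hcd : c ≠ d)
    (hN : nb F t = {a, b, c, d}) (hn : ¬ F.Adj a b)
    (hI : Ind p (gadd (gdel F t) a b)) : Ind p F := by
  have hadj : ∀ j, F.Adj t j ↔ (j = a ∨ j = b ∨ j = c ∨ j = d) := by
    intro j; rw [← mem_nb, hN]; simp
  have hta : t ≠ a := fun h => F.loopless.irrefl t ((hadj t).2 (Or.inl h))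
  have htb : t ≠ b := fun h => F.loopless.irrefl t ((hadj t).2 (Or.inr (Or.inl h)))
  have htc : t ≠ c := fun h => F.loopless.irrefl t ((hadj t).2 (by tauto))
  have htd : t ≠ d := fun h => F.loopless.irrefl t ((hadj t).2 (by tauto))
  let p' : V → Fin 3 → ℝ := fun i k => if i = t then (p a k + p b k) / 2 else p i k
  have hp'N : ∀ i, i ≠ t → ∀ k, p' i k = p i k := fun i hi k => by simp [p', hi]
  apply ind_transfer (p := p') hg.gen
  intro ω hω
  have hA := affI_gen hg.gen hg.card {a, b, c, d} (Finset.card_le_four)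
  have hsum : ∀ g : V → ℝ, ∑ j, ω t j * g j = ω t a * g a + (ω t b * g b + (ω t c * g c + ω t d * g d)) := by
    intro g
    rw [← Finset.sum_subset (subset_univ ({a, b, c, d} : Finset V))]
    · rw [sum_insert (by simp [hab, hac, had]), sum_insert (by simp [hbc, hbd]),
        sum_insert (by simp [hcd]), sum_singleton]
    · intro i _ hi
      rw [hω.supp t i, zero_mul]
      rw [hadj]; simpa using hi
  have key := hA (fun j => (if j = a then (- ω t a + ω t b + ω t c + ω t d) / 2 else 0)
    + (if j = b then (ω t a - ω t b + ω t c + ω t d) / 2 else 0)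
    + (if j = c then - ω t c else 0) + (if j = d then - ω t d else 0))
    (fun i hi => by simp at hi; simp [hi]) (by
      simp only [sum_add_distrib, Finset.sum_ite_eq', mem_univ, if_true]; ring) (fun k => by
      have := hω.eq t k
      rw [hsum] at this
      rw [hp'N a hta.symm, hp'N b htb.symm, hp'N c htc.symm, hp'N d htd.symm] at this
      simp only [add_mul, sum_add_distrib, ite_mul, zero_mul, Finset.sum_ite_eq', mem_univ, if_true]
      simp only [p', if_true] at this
      linarith)
  have kc := key c
  have kd := key d
  have ka := key a
  simp [hab, hac, had, hbc, hbd, hcd, hab.symm, hac.symm, had.symm, hbc.symm, hbd.symm, hcd.symm]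
    at ka kc kd
  rw [kc, kd] at ka
  have ks : ω t b = ω t a := by linarith
  set s := ω t a with hs
  have h0 : ∀ j, ω t j = (if j = a then s else 0) + (if j = b then s else 0) := by
    intro j
    by_cases h1 : j = a
    · subst h1; simp [hab, ← hs]
    by_cases h2 : j = b
    · subst h2; simp [h1, ks]
    by_cases h3 : j = c
    · subst h3; simp [h1, h2, kc]
    by_cases h4 : j = d
    · subst h4; simp [h1, h2, kd]
    · rw [hω.supp t j (by rw [hadj]; tauto)]; simp [h1, h2]
  let ω' : V → V → ℝ := fun i j => (if i = t then 0 else if j = t then 0 else ω i j) +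
    ((if i = a then (if j = b then s / 2 else 0) else 0) +
      (if i = b then (if j = a then s / 2 else 0) else 0))
  have hω' : IsStress p (gadd (gdel F t) a b) ω' := by
    refine ⟨fun i j => ?_, fun i j hij => ?_, fun i k => ?_⟩
    · simp only [ω']
      congr 1
      · by_cases h1 : i = t <;> by_cases h2 : j = t <;> simp [h1, h2, hω.symm i j]
      · by_cases h1 : i = a <;> by_cases h2 : i = b <;> by_cases h3 : j = a <;> by_cases h4 : j = b <;>
          simp [h1, h2, h3, h4, hab, hab.symm]
    · have h1 : ¬ ((i = a ∧ j = b) ∨ (i = b ∧ j = a)) := fun h => hij (Or.inr ⟨hab, h⟩)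
      have h2 : ¬ (F.Adj i j ∧ i ≠ t ∧ j ≠ t) := fun h => hij (Or.inl h)
      have h3 : (if i = t then 0 else if j = t then 0 else ω i j) = 0 := by
        split_ifs with h4 h5
        · rfl
        · rfl
        · exact hω.supp i j fun h => h2 ⟨h, h4, h5⟩
      simp only [ω']
      rw [h3]
      by_cases h4 : i = a
      · have : j ≠ b := fun h => h1 (Or.inl ⟨h4, h⟩)
        by_cases h5 : i = b
        · exact absurd (h4.symm.trans h5) hab
        · simp [h5, this]
      · by_cases h5 : i = b
        · have : j ≠ a := fun h => h1 (Or.inr ⟨h5, h⟩)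
          simp [this, h4]
        · simp [h4, h5]
    · simp only [ω', add_mul, sum_add_distrib]
      by_cases hi : i = t
      · subst hi; simp [hta, htb]
      · have e1 := hω.eq i k
        rw [← Finset.add_sum_erase _ _ (mem_univ t), hp'N i hi, hω.symm i t, h0 i] at e1
        have e2 : ∑ j, (if i = t then 0 else if j = t then 0 else ω i j) * (p i k - p j k)
            = ∑ j ∈ univ.erase t, ω i j * (p i k - p' j k) := by
          rw [← Finset.add_sum_erase _ _ (mem_univ t)]
          simp only [if_true, hi, if_false, zero_mul, zero_add]
          refine sum_congr rfl fun j hj => ?_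
          have : j ≠ t := by simpa using hj
          rw [hp'N j this, if_neg this]
        rw [e2]
        rw [show p' t k = (p a k + p b k) / 2 by simp [p']] at e1
        generalize (∑ j ∈ univ.erase t, ω i j * (p i k - p' j k)) = Z at e1 ⊢
        by_cases h4 : i = a
        · subst h4; simp [hab] at e1 ⊢; linarith
        · by_cases h5 : i = b
          · subst h5; simp [h4] at e1 ⊢; linarith
          · simp [h4, h5] at e1 ⊢; linarith
  have hz := hI ω' hω'
  have hsz : s = 0 := by
    have := hz a b
    simp [ω', hta.symm, htb.symm, hab, hω.supp a b hn] at this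
    exact this
  intro i j
  by_cases h1 : i = t
  · rw [h1, h0]; simp [hsz]
  by_cases h2 : j = t
  · rw [h2, hω.symm, h0]; simp [hsz]
  · have := hz i j
    simpa [ω', h1, h2, hsz] using this

theorem anti_sum (g : V → V → ℝ) (h : ∀ i j, g i j = - g j i) : ∑ i, ∑ j, g i j = 0 := by
  have h1 : ∑ i, ∑ j, g i j = - ∑ i, ∑ j, g i j := by
    conv_lhs => rw [sum_comm]
    rw [← sum_neg_distrib]
    refine sum_congr rfl fun i _ => ?_
    rw [← sum_neg_distrib]
    exact sum_congr rfl fun j _ => h j i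
  linarith

theorem force_zero (p : V → Fin 3 → ℝ) (ω : V → V → ℝ) (h : ∀ i j, ω i j = ω j i) (k : Fin 3) :
    ∑ i, ∑ j, ω i j * (p i k - p j k) = 0 :=
  anti_sum _ fun i j => by rw [h i j]; ring

theorem torque_zero (p : V → Fin 3 → ℝ) (ω : V → V → ℝ) (h : ∀ i j, ω i j = ω j i) (k l : Fin 3) :
    ∑ i, (p i k * ∑ j, ω i j * (p i l - p j l) - p i l * ∑ j, ω i j * (p i k - p j k)) = 0 := by
  rw [← anti_sum (fun i j => p i k * (ω i j * (p i l - p j l)) - p i l * (ω i j * (p i k - p j k)))]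
  · exact sum_congr rfl fun i _ => by rw [sum_sub_distrib, mul_sum, mul_sum]
  · intro i j; rw [h i j]; ring

theorem gn_ne {p : V → Fin 3 → ℝ} (hg : Gn p) {u v : V} (h : u ≠ v) : ∃ k, p u k ≠ p v k := by
  by_contra hc
  push Not at hc
  have := sstar_zero hg (t := u) (T := {v}) (by simpa using h) (by simp)
    (fun j => if j = v then 1 else 0) (fun j hj => by simp at hj; simp [hj]) (fun k => by simp [hc]) v
  simp at this

theorem two_load {p : V → Fin 3 → ℝ} (hg : Gn p) (ω : V → V → ℝ) (h : ∀ i j, ω i j = ω j i)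
    {u v : V} (huv : u ≠ v) (h0 : ∀ i, i ≠ u → i ≠ v → ∀ k, ∑ j, ω i j * (p i k - p j k) = 0) :
    ∃ τ : ℝ, (∀ k, ∑ j, ω u j * (p u k - p j k) = τ * (p u k - p v k)) ∧
      (∀ k, ∑ j, ω v j * (p v k - p j k) = τ * (p v k - p u k)) := by
  set L : V → Fin 3 → ℝ := fun i k => ∑ j, ω i j * (p i k - p j k) with hL
  have red : ∀ g : V → ℝ, (∀ i, i ≠ u → i ≠ v → g i = 0) → ∑ i, g i = g u + g v := by
    intro g hgz
    rw [← Finset.sum_subset (subset_univ ({u, v} : Finset V)), sum_pair huv]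
    intro i _ hi
    simp at hi
    exact hgz i hi.1 hi.2
  have hF : ∀ k, L u k + L v k = 0 := fun k => by
    rw [← red (fun i => L i k) fun i h1 h2 => h0 i h1 h2 k]
    exact force_zero p ω h k
  have hT : ∀ k l, (p u k - p v k) * L u l = (p u l - p v l) * L u k := by
    intro k l
    have := torque_zero p ω h k l
    rw [red _ (fun i h1 h2 => by rw [h0 i h1 h2 k, h0 i h1 h2 l]; ring)] at this
    change p u k * L u l - p u l * L u k + (p v k * L v l - p v l * L v k) = 0 at this
    have e1 := hF k
    have e2 := hF l
    have e3 : L v k = - L u k := by linarith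
    have e4 : L v l = - L u l := by linarith
    rw [e3, e4] at this
    linarith
  obtain ⟨k0, hk0⟩ := gn_ne hg huv
  have hne : p u k0 - p v k0 ≠ 0 := sub_ne_zero.2 hk0
  have hu : ∀ k, L u k = L u k0 / (p u k0 - p v k0) * (p u k - p v k) := by
    intro k
    field_simp
    have := hT k0 k
    linarith
  refine ⟨L u k0 / (p u k0 - p v k0), hu, fun k => ?_⟩
  have := hF k
  have h2 := hu k
  change L v k = _
  linarith

theorem lem4 {p : V → Fin 3 → ℝ} (hg : Gn p) {C : SimpleGraph V} (hC : IsCirc p C) {u v : V}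
    (huv : u ≠ v) {S : Finset V} (huS : u ∉ S) (hvS : v ∉ S) {s z : V} (hs : s ∈ S) (hsU : s ∈ su C)
    (hcl : ∀ i ∈ S, ∀ j, C.Adj i j → j ∈ S ∨ j = u ∨ j = v)
    (hz : z ∈ su C) (hzS : z ∉ S) (hzu : z ≠ u) (hzv : z ≠ v) (hd : dg C univ u ≤ 5) : False := by
  obtain ⟨ω, hω, hnz⟩ := circ_stress hC
  obtain ⟨s', hs'⟩ := mem_su.1 hsU
  obtain ⟨z', hz'⟩ := mem_su.1 hz
  have hz'S : z' ∉ S := fun h => by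
    rcases hcl z' h z hz'.symm with h | h | h
    exacts [hzS h, hzu h, hzv h]
  let ω1 : V → V → ℝ := fun i j => if i ∈ S ∨ j ∈ S then ω i j else 0
  have h1s : ∀ i j, ω1 i j = ω1 j i := fun i j => by
    simp only [ω1, hω.symm i j, or_comm]
  have h1u : ∀ i, i ≠ u → i ≠ v → ∀ k, ∑ j, ω1 i j * (p i k - p j k) = 0 := by
    intro i hiu hiv k
    by_cases hi : i ∈ S
    · rw [← hω.eq i k]
      exact sum_congr rfl fun j _ => by simp [ω1, hi]
    · refine sum_eq_zero fun j _ => ?_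
      by_cases hj : j ∈ S
      · have : ¬ C.Adj i j := fun h => by
          rcases hcl j hj i h.symm with h | h | h
          exacts [hi h, hiu h, hiv h]
        simp [ω1, hω.supp i j this]
      · simp [ω1, hi, hj]
  obtain ⟨τ, hτu, hτv⟩ := two_load hg ω1 h1s huv h1u
  -- the combined stress
  let ω2 : V → V → ℝ := fun i j => ω1 i j - ((if i = u then (if j = v then τ else 0) else 0)
    + (if i = v then (if j = u then τ else 0) else 0))
  have h2 : ∀ F : SimpleGraph V, (∀ i j, C.Adj i j → (i ∈ S ∨ j ∈ S) → F.Adj i j) →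
      (τ ≠ 0 → F.Adj u v) → IsStress p F ω2 := by
    intro F hF1 hF2
    refine ⟨fun i j => ?_, fun i j hij => ?_, fun i k => ?_⟩
    · simp only [ω2]
      rw [h1s i j]
      congr 1
      by_cases h1 : i = u <;> by_cases h2 : i = v <;> by_cases h3 : j = u <;> by_cases h4 : j = v <;>
          simp [h1, h2, h3, h4, huv, huv.symm]
    · have e1 : ω1 i j = 0 := by
        simp only [ω1]
        split_ifs with h
        · exact hω.supp i j fun h' => hij (hF1 i j h' h)
        · rfl
      simp only [ω2, e1]
      by_cases hτ : τ = 0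
      · simp [hτ]
      have hF2' := hF2 hτ
      by_cases h4 : i = u
      · have : j ≠ v := fun h => hij (by rw [h4, h]; exact hF2')
        by_cases h5 : i = v
        · exact absurd (h4.symm.trans h5) huv
        · simp [h5, this]
      · by_cases h5 : i = v
        · have : j ≠ u := fun h => hij (by rw [h5, h]; exact hF2'.symm)
          simp [this, h4]
        · simp [h4, h5]
    · simp only [ω2, sub_mul, add_mul, sum_add_distrib, sum_sub_distrib]
      by_cases h4 : i = u
      · subst h4; simp [huv]; rw [hτu]; ring
      · by_cases h5 : i = v
        · subst h5; simp [h4]; rw [hτv]; ring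
        · simp [h4, h5, h1u i h4 h5 k]
  have hfin : ∀ F : SimpleGraph V, F < C → (∀ i j, C.Adj i j → (i ∈ S ∨ j ∈ S) → F.Adj i j) →
      (τ ≠ 0 → F.Adj u v) → False := by
    intro F hF h3 h4
    have := hC.min F hF ω2 (h2 F h3 h4) s s'
    have hsu : s ≠ u := fun h => huS (h ▸ hs)
    have hsv : s ≠ v := fun h => hvS (h ▸ hs)
    simp [ω2, ω1, hs, hsu, hsv] at this
    exact hnz s s' hs' this
  have hcut : ∀ i j, C.Adj i j → (i ∈ S ∨ j ∈ S) → (gcut C z z').Adj i j := by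
    intro i j hij h
    refine ⟨hij, ?_⟩
    rintro (⟨rfl, rfl⟩ | ⟨rfl, rfl⟩)
    · tauto
    · tauto
  by_cases hτ : τ = 0
  · exact hfin _ (gcut_lt hz') hcut fun h => absurd hτ h
  by_cases hadj : C.Adj u v
  · refine hfin _ (gcut_lt hz') hcut fun _ => ⟨hadj, ?_⟩
    rintro (⟨rfl, rfl⟩ | ⟨rfl, rfl⟩)
    · exact hzu rfl
    · exact hzv rfl
  -- count degrees at u
  have hc : ∀ (T : Finset V) (c : V → ℝ) (τ' : ℝ), τ' ≠ 0 → u ∉ T → v ∉ T → (∀ j, j ∉ T → c j = 0) →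
      (∀ k, ∑ j, c j * (p u k - p j k) = τ' * (p u k - p v k)) → 3 ≤ T.card := by
    intro T c τ' hτ' huT hvT hcT he
    by_contra hlt
    have := sstar_zero hg (t := u) (T := insert v T) (by simp [huv, huT])
      (by rw [card_insert_of_notMem hvT]; omega) (fun j => c j - (if j = v then τ' else 0))
      (fun j hj => by simp at hj; simp [hj.1, hcT j hj.2]) (fun k => by
        simp only [sub_mul, sum_sub_distrib, ite_mul, zero_mul, Finset.sum_ite_eq', mem_univ, if_true]
        rw [he]; ring) v
    simp [hcT v hvT] at this
    exact hτ' this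
  have huN : u ∉ nb C u := by simp [mem_nb]
  have hvN : v ∉ nb C u := by simp [mem_nb, hadj]
  have c1 := hc (nb C u ∩ S) (fun j => ω1 u j) τ hτ (by simp [huS]) (by simp [hvS]) (fun j hj => by
    simp only [ω1]
    split_ifs with h
    · refine hω.supp u j fun h' => hj ?_
      simp [mem_nb, h']; tauto
    · rfl) hτu
  have c2 := hc (nb C u \ S) (fun j => ω u j - ω1 u j) (-τ) (neg_ne_zero.2 hτ) (by simp [mem_nb])
    (by simp [mem_nb, hadj]) (fun j hj => by
      simp only [ω1]
      split_ifs with h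
      · simp
      · rw [hω.supp u j, sub_zero]
        intro h'; apply hj; simp [mem_nb, h']; tauto) (fun k => by
      simp only [sub_mul, sum_sub_distrib]
      rw [hω.eq, hτu]; ring)
  have c3 := card_inter_add_card_sdiff (nb C u) S
  rw [dg_univ] at hd
  omega

theorem lem4' {p : V → Fin 3 → ℝ} (hg : Gn p) {C : SimpleGraph V} (hC : IsCirc p C)
    (hd : ∀ i, dg C univ i ≤ 5) {v : V}
    {S : Finset V} (hvS : v ∉ S) {s s' z : V} (hs : s ∈ S) (hs' : s' ∈ S) (hss : s ≠ s')
    (hsU : s ∈ su C)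
    (hcl : ∀ i ∈ S, ∀ j, C.Adj i j → j ∈ S ∨ j = v)
    (hz : z ∈ su C) (hzS : z ∉ S) (hzv : z ≠ v) : False := by
  refine lem4 hg hC (u := s') (v := v) (S := S.erase s') (s := s) (z := z) (fun h => hvS (h ▸ hs'))
    (notMem_erase _ _) (fun h => hvS (mem_of_mem_erase h)) (mem_erase.2 ⟨hss, hs⟩) hsU ?_ hz
    (fun h => hzS (mem_of_mem_erase h)) (fun h => hzS (h ▸ hs')) hzv (hd s')
  intro i hi j hij
  rcases hcl i (mem_of_mem_erase hi) j hij with h | h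
  · by_cases h' : j = s'
    · exact Or.inr (Or.inl h')
    · exact Or.inl (mem_erase.2 ⟨h', h⟩)
  · exact Or.inr (Or.inr h)

theorem exists_gen (V : Type*) [Fintype V] : ∃ p : V → Fin 3 → ℝ, Gen p := by
  obtain ⟨s, hs⟩ := exists_isTranscendenceBasis ℚ ℝ
  have hinf : Infinite s := by
    by_contra hfin
    rw [not_infinite_iff_finite] at hfin
    have h1 := hs.isAlgebraic
    have h2 := Algebra.IsAlgebraic.cardinalMk_le_max (Algebra.adjoin ℚ (Set.range ((↑) : s → ℝ))) ℝ
    have h3 : Cardinal.mk (Algebra.adjoin ℚ (Set.range ((↑) : s → ℝ))) ≤ Cardinal.aleph0 := by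
      have e := Cardinal.mk_congr hs.1.aevalEquiv.toEquiv
      rw [← e]
      refine MvPolynomial.cardinalMk_le_max.trans ?_
      simp
    have h4 : Cardinal.mk ℝ ≤ Cardinal.aleph0 := h2.trans (max_le h3 le_rfl)
    exact absurd h4 (not_le.2 (by simp))
  let g : V × Fin 3 → s := fun x => Infinite.natEmbedding s (Fintype.equivFin (V × Fin 3) x)
  refine ⟨fun v k => (g (v, k) : ℝ), ?_⟩
  exact hs.1.comp g (fun x y h => by simpa [g, Fin.val_inj] using h)

open Classical in
noncomputable def wc {F : SimpleGraph V} (c : F.edgeSet → ℝ) (i j : V) : ℝ :=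
  if h : F.Adj i j then c ⟨s(i, j), h⟩ else 0

theorem wc_symm {F : SimpleGraph V} (c : F.edgeSet → ℝ) (i j : V) : wc c i j = wc c j i := by
  unfold wc
  by_cases h : F.Adj i j
  · rw [dif_pos h, dif_pos h.symm]
    congr 2
    exact Sym2.eq_swap
  · rw [dif_neg h, dif_neg fun h' => h h'.symm]

theorem wc_conv {F : SimpleGraph V} [Fintype F.edgeSet] (c : F.edgeSet → ℝ) (i : V) (h : V → ℝ) :
    ∑ e : F.edgeSet, c e * (if hi : i ∈ e.1 then h (Sym2.Mem.other hi) else 0)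
      = ∑ j, wc c i j * h j := by
  have h1 : ∀ e : Sym2 V, (if hi : i ∈ e then h (Sym2.Mem.other hi) else 0)
      = ∑ j, if e = s(i, j) then h j else 0 := by
    intro e
    split_ifs with hi
    · have h2 := Sym2.other_spec hi
      have h3 : ∀ j, (e = s(i, j)) ↔ (j = Sym2.Mem.other hi) := by
        intro j
        constructor
        · intro h'; exact (Sym2.congr_right.1 (h2.trans h')).symm
        · rintro rfl; exact h2.symm
      simp [h3]
    · symm
      refine sum_eq_zero fun j _ => if_neg ?_
      rintro rfl
      exact hi (Sym2.mem_mk_left i j)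
  simp only [h1, mul_sum]
  rw [sum_comm]
  refine sum_congr rfl fun j _ => ?_
  unfold wc
  split_ifs with hij
  · rw [Finset.sum_eq_single ⟨s(i, j), hij⟩]
    · simp
    · intro e _ he
      rw [if_neg, mul_zero]
      intro h'; exact he (Subtype.ext h')
    · simp
  · rw [zero_mul]
    refine sum_eq_zero fun e _ => ?_
    rw [if_neg, mul_zero]
    intro h'
    apply hij
    have := e.2
    rw [h'] at this
    exact this

theorem wc_zero {F : SimpleGraph V} {c : F.edgeSet → ℝ} (h : ∀ i j, wc c i j = 0) : c = 0 := by
  ext ⟨e, he⟩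
  induction e using Sym2.ind with
  | _ i j =>
    have := h i j
    unfold wc at this
    rw [dif_pos (show F.Adj i j from he)] at this
    exact this

theorem row_sum {F : SimpleGraph V} [Fintype F.edgeSet] (p : V → Fin 3 → ℝ) (c : F.edgeSet → ℝ)
    (i : V) (k : Fin 3) :
    (∑ e : F.edgeSet, c e • rigidityRow p e.1) i k = ∑ j, wc c i j * (p i k - p j k) := by
  rw [← wc_conv c i (fun j => p i k - p j k)]
  simp [Finset.sum_apply, rigidityRow]

theorem li_of_ind {p : V → Fin 3 → ℝ} {F : SimpleGraph V} [Fintype F.edgeSet] (h : Ind p F) :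
    LinearIndependent ℝ (fun e : F.edgeSet => rigidityRow p e.1) := by
  rw [Fintype.linearIndependent_iff]
  intro c hc
  have : c = 0 := wc_zero (h (wc c) ⟨wc_symm c, fun i j hij => by simp [wc, hij], fun i k => by
    rw [← row_sum, hc]; rfl⟩)
  intro i; rw [this]; rfl

theorem ind_of_li {p : V → Fin 3 → ℝ} {F : SimpleGraph V} [Fintype F.edgeSet]
    (h : LinearIndependent ℝ (fun e : F.edgeSet => rigidityRow p e.1)) : Ind p F := by
  intro ω hω
  rw [Fintype.linearIndependent_iff] at h
  let c : F.edgeSet → ℝ := fun e => Sym2.lift ⟨ω, hω.symm⟩ e.1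
  have hw : ∀ i j, wc c i j = ω i j := by
    intro i j
    unfold wc
    split_ifs with hij
    · simp [c]
    · exact (hω.supp i j hij).symm
  have := h c (by
    ext i k
    rw [row_sum]
    simp only [hw, hω.eq]; rfl)
  intro i j
  rw [← hw]
  unfold wc
  split_ifs
  · exact this _
  · rfl

theorem gen_ne {p0 : V → Fin 3 → ℝ} (h0 : Gen p0) (D : MvPolynomial (V × Fin 3) ℚ)
    (x : V → Fin 3 → ℝ) (hx : MvPolynomial.aeval (fun y : V × Fin 3 => x y.1 y.2) D ≠ 0) :
    MvPolynomial.aeval (fun y : V × Fin 3 => p0 y.1 y.2) D ≠ 0 := fun h => by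
  rw [(injective_iff_map_eq_zero _).1 h0 D h, map_zero] at hx
  exact hx rfl

theorem lem5 {p : V → Fin 3 → ℝ} (hg : Gn p) {F : SimpleGraph V} (hI : Ind p F) : Sp F := by
  classical
  intro X hX
  by_contra hlt
  obtain ⟨x1, hx1, x2, hx2, x3, hx3, h12, h13, h23⟩ := Finset.two_lt_card.1 (show 2 < X.card by omega)
  let H : SimpleGraph V :=
    { Adj := fun i j => F.Adj i j ∧ i ∈ X ∧ j ∈ X
      symm := ⟨fun i j h => ⟨h.1.symm, h.2.2, h.2.1⟩⟩
      loopless := ⟨fun i h => F.loopless.irrefl i h.1⟩ }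
  have hH : H ≤ F := fun i j h => h.1
  have hIH : Ind p H := fun ω hω => hI ω (hω.mono hH)
  have hcard : (2 * Fintype.card H.edgeSet : ℤ) = ee F X := by
    have h1 := H.sum_degrees_eq_twice_card_edges
    rw [SimpleGraph.edgeFinset_card] at h1
    rw [← Nat.cast_ofNat, ← Nat.cast_mul, ← h1]
    push_cast
    have h2 : ∀ i, ((H.degree i : ℕ) : ℤ) = if i ∈ X then dg F X i else 0 := by
      intro i
      have h3 : H.degree i = (nb H i).card := by
        rw [← SimpleGraph.card_neighborFinset_eq_degree]
        congr 1
        ext j; simp [mem_nb]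
      rw [h3]
      split_ifs with hi
      · rw [dg_eq_card]
        congr 2
        ext j; simp [mem_nb, H, hi]; tauto
      · rw [Nat.cast_eq_zero, card_eq_zero, eq_empty_iff_forall_notMem]
        intro j hj
        exact hi (mem_nb.1 hj).2.1
    simp only [h2]
    rw [← Finset.sum_filter]
    unfold ee
    exact sum_congr (by ext; simp) fun _ _ => rfl
  let Y : Finset V := X \ {x1, x2, x3}
  have hY : Y.card + 3 = X.card := by
    have h3 : ({x1, x2, x3} : Finset V).card = 3 := card_eq_three.2 ⟨x1, x2, x3, h12, h13, h23, rfl⟩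
    rw [← h3]
    apply card_sdiff_add_card_eq_card
    intro i hi; simp at hi; rcases hi with rfl | rfl | rfl <;> assumption
  let A : H.edgeSet → V → Fin 3 → ℝ := fun e => rigidityRow p e.1
  let B : Matrix ((Y × Fin 3) ⊕ Fin 3) H.edgeSet ℝ := Matrix.of fun r e => match r with
    | Sum.inl a => A e a.1 a.2
    | Sum.inr k => if k = 0 then A e x1 0 else if k = 1 then A e x1 1 else A e x2 0
  have hker : LinearMap.ker B.mulVecLin ≠ ⊥ := by
    apply LinearMap.ker_ne_bot_of_finrank_lt
    simp only [Module.finrank_fintype_fun_eq_card, Fintype.card_sum, Fintype.card_prod,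
      Fintype.card_fin, Fintype.card_coe]
    unfold ff at hlt
    omega
  obtain ⟨c, hc, hc0⟩ := Submodule.exists_mem_ne_zero_of_ne_bot hker
  apply hc0
  apply wc_zero
  have hB : ∀ r, ∑ e, B r e * c e = 0 := fun r => congrFun (LinearMap.mem_ker.1 hc) r
  let L : V → Fin 3 → ℝ := fun i k => ∑ j, wc c i j * (p i k - p j k)
  have hL : ∀ i k, L i k = ∑ e, A e i k * c e := by
    intro i k
    simp only [L]
    rw [← row_sum]
    simp [Finset.sum_apply, A, mul_comm]
  have hLY : ∀ i, i ≠ x1 → i ≠ x2 → i ≠ x3 → ∀ k, L i k = 0 := by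
    intro i h1 h2 h3 k
    by_cases hi : i ∈ X
    · have hiY : i ∈ Y := by simp [Y, hi, h1, h2, h3]
      rw [hL]; exact hB (Sum.inl (⟨i, hiY⟩, k))
    · refine sum_eq_zero fun j _ => ?_
      have : ¬ H.Adj i j := fun h => hi h.2.1
      simp [wc, this]
  have l10 : L x1 0 = 0 := by rw [hL]; simpa [B] using hB (Sum.inr 0)
  have l11 : L x1 1 = 0 := by rw [hL]; simpa [B] using hB (Sum.inr 1)
  have l20 : L x2 0 = 0 := by rw [hL]; simpa [B] using hB (Sum.inr 2)
  have red : ∀ g : V → ℝ, (∀ i, i ≠ x1 → i ≠ x2 → i ≠ x3 → g i = 0) →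
      ∑ i, g i = g x1 + (g x2 + g x3) := by
    intro g hgz
    rw [← Finset.sum_subset (subset_univ ({x1, x2, x3} : Finset V)),
      sum_insert (by simp [h12, h13]), sum_pair h23]
    intro i _ hi
    simp at hi
    exact hgz i hi.1 hi.2.1 hi.2.2
  have hF : ∀ k, L x1 k + (L x2 k + L x3 k) = 0 := fun k => by
    rw [← red (fun i => L i k) fun i h1 h2 h3 => hLY i h1 h2 h3 k]
    exact force_zero p (wc c) (wc_symm c) k
  have hT : ∀ k l, p x1 k * L x1 l - p x1 l * L x1 k + ((p x2 k * L x2 l - p x2 l * L x2 k) +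
      (p x3 k * L x3 l - p x3 l * L x3 k)) = 0 := by
    intro k l
    rw [← red (fun i => p i k * L i l - p i l * L i k) fun i h1 h2 h3 => by
      rw [hLY i h1 h2 h3, hLY i h1 h2 h3]; ring]
    exact torque_zero p (wc c) (wc_symm c) k l
  have hne := gen_ne hg.gen ((MvPolynomial.X (x2, 0) - MvPolynomial.X (x3, 0)) *
    ((MvPolynomial.X (x1, 1) - MvPolynomial.X (x3, 1)) * (MvPolynomial.X (x2, 0) - MvPolynomial.X (x3, 0))
    - (MvPolynomial.X (x1, 0) - MvPolynomial.X (x3, 0)) * (MvPolynomial.X (x2, 1) - MvPolynomial.X (x3, 1))))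
    (fun i k => if i = x1 ∧ k = 1 then 1 else if i = x2 ∧ k = 0 then 1 else 0)
    (by simp [h12, h13, h23, h12.symm, h13.symm, h23.symm])
  simp only [map_mul, map_sub, MvPolynomial.aeval_X] at hne
  obtain ⟨hne1, hne2⟩ := mul_ne_zero_iff.1 hne
  have f0 := hF 0
  have f1 := hF 1
  have f2 := hF 2
  have e30 : L x3 0 = 0 := by linarith
  have e31 : L x3 1 = - L x2 1 := by linarith
  have e32 : L x3 2 = - L x1 2 - L x2 2 := by linarith
  have t01 := hT 0 1
  have t02 := hT 0 2
  have t12 := hT 1 2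
  rw [l10, l11, l20, e30, e31] at t01
  rw [l10, l20, e30, e32] at t02
  have z21 : L x2 1 = 0 := by
    have : (p x2 0 - p x3 0) * L x2 1 = 0 := by linarith
    exact (mul_eq_zero.1 this).resolve_left hne1
  rw [l11, z21, e31, z21, e32] at t12
  have q1 : (p x1 0 - p x3 0) * L x1 2 + (p x2 0 - p x3 0) * L x2 2 = 0 := by linarith
  have q2 : (p x1 1 - p x3 1) * L x1 2 + (p x2 1 - p x3 1) * L x2 2 = 0 := by linarith
  have z12 : L x1 2 = 0 := by
    have : ((p x1 1 - p x3 1) * (p x2 0 - p x3 0) - (p x1 0 - p x3 0) * (p x2 1 - p x3 1)) * L x1 2 = 0 := by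
      linear_combination (p x2 0 - p x3 0) * q2 - (p x2 1 - p x3 1) * q1
    exact (mul_eq_zero.1 this).resolve_left hne2
  have z22 : L x2 2 = 0 := by
    rw [z12] at q1
    have : (p x2 0 - p x3 0) * L x2 2 = 0 := by linarith
    exact (mul_eq_zero.1 this).resolve_left hne1
  refine hIH (wc c) ⟨wc_symm c, fun i j hij => by simp [wc, hij], fun i k => ?_⟩
  change L i k = 0
  by_cases h1 : i = x1
  · subst h1; fin_cases k
    exacts [l10, l11, z12]
  by_cases h2 : i = x2
  · subst h2; fin_cases k
    exacts [l20, z21, z22]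
  by_cases h3 : i = x3
  · subst h3; fin_cases k
    · exact e30
    · rw [z21, neg_zero] at e31; exact e31
    · rw [z12, z22] at e32; simpa using e32
  exact hLY i h1 h2 h3 k

theorem deg_ge (F : SimpleGraph V) {X T : Finset V} {z : V} (hT : ∀ y ∈ T, F.Adj z y)
    (hd : ∀ y ∈ T, y ∉ X) : dg F X z + T.card ≤ dg F univ z := by
  rw [dg_eq_card, dg_univ]
  have h1 : Disjoint (X ∩ nb F z) T := by
    rw [disjoint_right]; intro y hy h; exact hd y hy (mem_inter.1 h).1
  have h2 : (X ∩ nb F z) ∪ T ⊆ nb F z := by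
    intro y hy
    rcases mem_union.1 hy with h | h
    · exact (mem_inter.1 h).2
    · exact mem_nb.2 (hT y h)
  have h3 := card_le_card h2
  rw [card_union_of_disjoint h1] at h3
  exact_mod_cast h3

theorem nb_full {C' F : SimpleGraph V} (hle : C' ≤ F) {i : V} {n : ℤ} (h1 : dg F univ i ≤ n)
    (h2 : dg C' univ i = n) {j : V} (hj : F.Adj i j) : C'.Adj i j := by
  rw [dg_univ] at h1 h2
  have h3 : nb C' i ⊆ nb F i := fun y hy => mem_nb.2 (hle (mem_nb.1 hy))
  have h4 := eq_of_subset_of_card_le h3 (by omega)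
  rw [← mem_nb, h4, mem_nb]; exact hj

theorem ff_clique {F : SimpleGraph V} {N : Finset V} (h : ∀ a ∈ N, ∀ b ∈ N, a ≠ b → F.Adj a b) :
    ff F N = 6 * N.card - N.card * (N.card - 1) := by
  unfold ff ee
  have : ∑ i ∈ N, dg F N i = ∑ i ∈ N, ((N.card : ℤ) - 1) := by
    refine sum_congr rfl fun i hi => ?_
    rw [dg_eq_card]
    have h1 : N ∩ nb F i = N.erase i := by
      ext j
      simp only [mem_inter, mem_nb, mem_erase]
      constructor
      · rintro ⟨h1, h2⟩; exact ⟨h2.ne', h1⟩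
      · rintro ⟨h1, h2⟩; exact ⟨h2, h i hi j h2 h1.symm⟩
    rw [h1, card_erase_of_mem hi, Nat.cast_sub (card_pos.2 ⟨i, hi⟩)]
    simp
  rw [this]; simp
  ring

theorem jj {C : SimpleGraph V} (hs : Sp C) {w t : V} (hd : ∀ i, i ≠ w → dg C univ i ≤ 5)
    (ht : dg C univ t = 4) : ∃ a b, C.Adj t a ∧ C.Adj t b ∧ a ≠ b ∧ ¬ C.Adj a b ∧
      ∀ X : Finset V, t ∉ X → 4 ≤ X.card → a ∈ X → b ∈ X → ff C X ≠ 12 := by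
  classical
  by_contra hcon
  push Not at hcon
  set N := nb C t with hN
  have hNc : N.card = 4 := by rw [dg_univ] at ht; exact_mod_cast ht
  let Tt : Finset V → Prop := fun X => ff C X = 12 ∧ 4 ≤ X.card ∧ t ∉ X
  have hcon' : ∀ a ∈ N, ∀ b ∈ N, a ≠ b → ¬ C.Adj a b → ∃ X, Tt X ∧ a ∈ X ∧ b ∈ X := by
    intro a ha b hb hab hn
    obtain ⟨X, h1, h2, h3, h4, h5⟩ := hcon a b (mem_nb.1 ha) (mem_nb.1 hb) hab hn
    exact ⟨X, ⟨h5, h2, h1⟩, h3, h4⟩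
  have hi : ∀ X, Tt X → ¬ N ⊆ X := by
    rintro X ⟨h1, h2, h3⟩ h4
    have h5 := ff_insert C h3
    have h6 : dg C X t = 4 := by
      rw [dg_eq_card, inter_eq_right.2 h4]; exact_mod_cast hNc
    have h7 := hs (insert t X) (by rw [card_insert_of_notMem h3]; omega)
    omega
  have htN : t ∉ N := by simp [hN, mem_nb]
  have hun : ∀ X Y z, Tt X → Tt Y → z ∈ N → z ∈ X → z ∈ Y → z ≠ w → Tt (X ∪ Y) := by
    rintro X Y z ⟨h1, h2, h3⟩ ⟨k1, k2, k3⟩ hz hzX hzY hzw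
    have e1 := tight_dg hs h2 h1 hzX
    have e2 := tight_dg hs k2 k1 hzY
    have e3 := dg_union_inter C X Y z
    have e4 := deg_ge C (X := X ∪ Y) (T := {t}) (z := z)
      (by simp; exact (mem_nb.1 hz).symm) (by simp [h3, k3])
    have e5 := hd z hzw
    have e6 : dg C (X ∩ Y) z ≤ ((X ∩ Y).erase z).card := by
      rw [dg_eq_card]
      have : X ∩ Y ∩ nb C z ⊆ (X ∩ Y).erase z := by
        intro y hy
        rw [mem_inter, mem_nb] at hy
        exact mem_erase.2 ⟨hy.2.ne', hy.1⟩
      exact_mod_cast card_le_card this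
    rw [card_erase_of_mem (mem_inter.2 ⟨hzX, hzY⟩)] at e6
    simp at e4
    refine ⟨(tight_union hs h1 k1 (by omega)).1, h2.trans (card_le_card subset_union_left), ?_⟩
    simp [h3, k3]
  -- a maximal tight set
  obtain ⟨X0, hX0, hX02⟩ : ∃ X, Tt X ∧ 2 ≤ (X ∩ N).card := by
    by_contra h
    push Not at h
    have hcl : ∀ a ∈ N, ∀ b ∈ N, a ≠ b → C.Adj a b := by
      intro a ha b hb hab
      by_contra hn
      obtain ⟨X, hX, haX, hbX⟩ := hcon' a ha b hb hab hn
      have h1 := h X hX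
      have h2 : ({a, b} : Finset V) ⊆ X ∩ N := by
        intro y hy; simp only [mem_insert, mem_singleton] at hy
        rcases hy with rfl | rfl
        exacts [mem_inter.2 ⟨haX, ha⟩, mem_inter.2 ⟨hbX, hb⟩]
      have h3 := card_le_card h2
      rw [card_pair hab] at h3
      omega
    have h1 := ff_clique hcl
    rw [hNc] at h1
    exact hi N ⟨by rw [h1]; norm_num, by omega, htN⟩ subset_rfl
  obtain ⟨X, hX, hmax⟩ := Finset.exists_max_image (univ.filter Tt) (fun X => (X ∩ N).card)
    ⟨X0, by simp [hX0]⟩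
  have hX : Tt X := by simpa using hX
  have hmax : ∀ Y, Tt Y → (Y ∩ N).card ≤ (X ∩ N).card := fun Y hY => hmax Y (by simp [hY])
  have hm2 : 2 ≤ (X ∩ N).card := hX02.trans (hmax X0 hX0)
  have hm4 : (X ∩ N).card + (N \ X).card = 4 := by
    rw [← hNc, inter_comm]; exact card_inter_add_card_sdiff N X
  have hsup : ∀ Y, Tt Y → X ⊆ Y → ∀ y ∈ N, y ∉ X → y ∈ Y → False := by
    intro Y hY hXY y hy hyX hyY
    have h1 := hmax Y hY
    have h2 : insert y (X ∩ N) ⊆ Y ∩ N := by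
      intro q hq
      rcases mem_insert.1 hq with rfl | hq
      · simp [hyY, hy]
      · exact mem_inter.2 ⟨hXY (mem_inter.1 hq).1, (mem_inter.1 hq).2⟩
    have h3 := card_le_card h2
    rw [card_insert_of_notMem (by simp [hyX])] at h3
    omega
  have hiv : ∀ z ∈ X, z ∈ N → z ≠ w → ∀ y ∈ N, y ∉ X → C.Adj z y := by
    intro z hzX hzN hzw y hyN hyX
    by_contra hn
    obtain ⟨Y, hY, hzY, hyY⟩ := hcon' z hzN y hyN (fun h => hyX (h ▸ hzX)) hn
    exact hsup (X ∪ Y) (hun X Y z hX hY hzN hzX hzY hzw) subset_union_left y hyN hyX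
      (mem_union_right _ hyY)
  obtain ⟨z, hz, hzw⟩ := Finset.exists_mem_ne (show 1 < (X ∩ N).card by omega) w
  rw [mem_inter] at hz
  have hm3 : (N \ X).card ≤ 1 := by
    have e1 := tight_dg hs hX.2.1 hX.1 hz.1
    have e2 := deg_ge C (X := X) (T := insert t (N \ X)) (z := z) (by
      intro y hy
      rcases mem_insert.1 hy with rfl | hy
      · exact (mem_nb.1 hz.2).symm
      · rw [mem_sdiff] at hy; exact hiv z hz.1 hz.2 hzw y hy.1 hy.2) (by
      intro y hy
      rcases mem_insert.1 hy with rfl | hy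
      · exact hX.2.2
      · exact (mem_sdiff.1 hy).2)
    rw [card_insert_of_notMem (by simp [htN])] at e2
    have := hd z hzw
    push_cast at e2
    omega
  have hm3' : (N \ X).card = 1 := by
    have : (N \ X).card ≠ 0 := by
      intro h
      rw [card_eq_zero, sdiff_eq_empty_iff_subset] at h
      exact hi X hX h
    omega
  obtain ⟨y, hy⟩ := card_eq_one.1 hm3'
  have hyNX : y ∈ N ∧ y ∉ X := by rw [← mem_sdiff, hy]; simp
  have hyt : y ≠ t := fun h => htN (h ▸ hyNX.1)
  have hzz : ∃ z ∈ X ∩ N, ¬ C.Adj z y := by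
    by_contra h
    push Not at h
    have h1 := ff_insert C hyNX.2
    have h2 : ((X ∩ N).card : ℤ) ≤ dg C X y := by
      rw [dg_eq_card]
      have : X ∩ N ⊆ X ∩ nb C y := by
        intro q hq
        exact mem_inter.2 ⟨(mem_inter.1 hq).1, mem_nb.2 (h q hq).symm⟩
      exact_mod_cast card_le_card this
    have h3 := hs (insert y X) (by rw [card_insert_of_notMem hyNX.2]; have := hX.2.1; omega)
    have h4 := hX.1
    refine hsup (insert y X) ⟨by omega, ?_, ?_⟩ (subset_insert _ _) y hyNX.1 hyNX.2 (mem_insert_self _ _)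
    · rw [card_insert_of_notMem hyNX.2]; have := hX.2.1; omega
    · simp [hyt.symm, hX.2.2]
  obtain ⟨z', hz', hz'y⟩ := hzz
  rw [mem_inter] at hz'
  have hz'w : z' = w := by
    by_contra h; exact hz'y (hiv z' hz'.1 hz'.2 h y hyNX.1 hyNX.2)
  subst hz'w
  obtain ⟨Y, hY, hwY, hyY⟩ := hcon' z' hz'.2 y hyNX.1 (fun h => hyNX.2 (h ▸ hz'.1)) hz'y
  have e1 := tight_dg hs hY.2.1 hY.1 hyY
  have hA : ∀ b ∈ (X ∩ N).erase z', b ∉ Y := by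
    intro b hb hbY
    rw [mem_erase, mem_inter] at hb
    exact hsup (X ∪ Y) (hun X Y b hX hY hb.2.2 hb.2.1 hbY hb.1) subset_union_left y hyNX.1 hyNX.2
      (mem_union_right _ hyY)
  have e2 := deg_ge C (X := Y) (T := insert t ((X ∩ N).erase z')) (z := y) (by
      intro b hb
      rcases mem_insert.1 hb with rfl | hb
      · exact (mem_nb.1 hyNX.1).symm
      · rw [mem_erase, mem_inter] at hb
        exact (hiv b hb.2.1 hb.2.2 hb.1 y hyNX.1 hyNX.2).symm) (by
      intro b hb
      rcases mem_insert.1 hb with rfl | hb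
      · exact hY.2.2
      · exact hA b hb)
  rw [card_insert_of_notMem (by simp [htN]), card_erase_of_mem (mem_inter.2 hz')] at e2
  have := hd y (fun h => hyNX.2 (h ▸ hz'.1))
  omega

theorem lem6_aux {p : V → Fin 3 → ℝ} (hg : Gn p) (w : V) (n : ℕ) : ∀ C : SimpleGraph V,
    ee C univ ≤ n → IsCirc p C → Sp C → (∀ i, i ≠ w → dg C univ i ≤ 5) →
    ∀ t ∈ su C, t ≠ w → dg C univ t = 5 := by
  induction n using Nat.strong_induction_on with
  | _ n ih =>
  intro C hn hC hs hd t ht htw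
  by_contra hne
  have ht4 : dg C univ t = 4 := by
    have h1 := circ_deg hg hC ht
    have h2 := hd t htw
    omega
  obtain ⟨a, b, hta, htb, hab, hnab, hX⟩ := jj hs hd ht4
  have hNc : (nb C t).card = 4 := by rw [dg_univ] at ht4; exact_mod_cast ht4
  obtain ⟨c, d, hcd, hN⟩ : ∃ c d, c ≠ d ∧ ((nb C t).erase a).erase b = {c, d} := by
    apply card_eq_two.1
    rw [card_erase_of_mem (mem_erase.2 ⟨hab.symm, mem_nb.2 htb⟩), card_erase_of_mem (mem_nb.2 hta), hNc]
  have hc : c ∈ ((nb C t).erase a).erase b := by rw [hN]; simp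
  have hdd : d ∈ ((nb C t).erase a).erase b := by rw [hN]; simp
  simp only [mem_erase, mem_nb] at hc hdd
  have hN' : nb C t = {a, b, c, d} := by
    rw [← insert_erase (mem_nb.2 hta), ← insert_erase (mem_erase.2 ⟨hab.symm, mem_nb.2 htb⟩), hN]
  set F := gadd (gdel C t) a b with hF
  have hn' : ¬ (gdel C t).Adj a b := fun h => hnab h.1
  have hFt : ∀ j, ¬ F.Adj t j := by
    rintro j (h | ⟨_, ⟨h, _⟩ | ⟨h, _⟩⟩)
    · exact h.2.1 rfl
    · exact hta.ne h
    · exact htb.ne h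
  have hFS : Sp F := by
    refine sp_of_isolated hFt fun X hX3 htX => ?_
    by_cases h4 : 4 ≤ X.card
    · by_cases h : a ∈ X ∧ b ∈ X
      · rw [hF, ff_gadd _ hab hn' h.1 h.2, ff_gdel _ htX]
        have h1 := hX X htX h4 h.1 h.2
        have h2 := hs X hX3
        obtain ⟨k, hk⟩ := ff_even C X
        omega
      · rw [hF, ff_gadd_of_not _ h, ff_gdel _ htX]; exact hs X hX3
    · have := ff_ge_of_card_le F X
      have h3 : X.card = 3 := by omega
      rw [h3] at this; norm_num at this; exact this
  have hdep : ¬ Ind p F := fun h => hC.dep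
    (lem3 hg hab hc.2.1.symm hdd.2.1.symm hc.1.symm hdd.1.symm hcd hN' hnab h)
  obtain ⟨C', hC'F, hC'⟩ := exists_circ hdep
  have hdF : ∀ i, i ≠ t → dg F univ i = dg C univ i - ad C i t + (if i = a then 1 else 0) +
      (if i = b then 1 else 0) := by
    intro i hi
    rw [hF, dg_gadd_le _ hab hn', dg_gdel _ hi]
  have hdF5 : ∀ i, i ≠ w → dg F univ i ≤ 5 := by
    intro i hiw
    by_cases hit : i = t
    · subst hit
      rw [show dg F univ i = 0 from sum_eq_zero fun j _ => ad_eq_zero (hFt j)]; norm_num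
    · rw [hdF i hit]
      have h1 := hd i hiw
      have h2 := ad_nonneg C i t
      by_cases h3 : i = a
      · subst h3; rw [ad_eq_one hta.symm]; simp [hab]; omega
      · by_cases h4 : i = b
        · subst h4; rw [ad_eq_one htb.symm]; simp [h3]; omega
        · simp [h3, h4]; omega
  have hee : ee F univ = ee C univ - 6 := by
    have h1 : ff F univ = ff (gdel C t) univ - 2 := ff_gadd _ hab hn' (mem_univ _) (mem_univ _)
    have h2 := ff_erase (gdel C t) (mem_univ t)
    rw [dg_gdel_self, ff_gdel _ (notMem_erase t univ)] at h2
    have h3 := ff_erase C (mem_univ t)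
    unfold ff at h1 h2 h3
    omega
  have hle := ee_mono hC'F univ
  have hnn := ee_nonneg C' univ
  have IH := ih (ee C' univ).toNat (by omega) C' (by omega) hC' (hFS.mono hC'F)
    (fun i hi => (dg_gmono hC'F univ i).trans (hdF5 i hi))
  have hfull : ∀ i ∈ su C', i ≠ w → ∀ j, F.Adj i j → C'.Adj i j := fun i hi hiw j hj =>
    nb_full hC'F (hdF5 i hiw) (IH i hi hiw) hj
  have htC' : t ∉ su C' := fun h => by
    obtain ⟨j, hj⟩ := mem_su.1 h; exact hFt j (hC'F hj)
  obtain ⟨e, het, hew, hea, heb⟩ : ∃ e, C.Adj t e ∧ e ≠ w ∧ e ≠ a ∧ e ≠ b := by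
    by_cases h : c = w
    · exact ⟨d, hdd.2.2, fun h' => hcd (h.trans h'.symm), hdd.2.1, hdd.1⟩
    · exact ⟨c, hc.2.2, h, hc.2.1, hc.1⟩
  have heS : e ∉ su C' := by
    intro h
    have h1 := IH e h hew
    have h2 := dg_gmono hC'F univ e
    have h3 := hdF e het.ne'
    rw [ad_eq_one het.symm] at h3
    simp [hea, heb] at h3
    have := hd e hew
    omega
  obtain ⟨s, hsS, hsw⟩ : ∃ s ∈ su C', s ≠ w := by
    obtain ⟨x, y, hxy⟩ := circ_adj hC'
    by_cases h : x = w
    · exact ⟨y, mem_su.2 ⟨x, hxy.symm⟩, fun h' => hxy.ne (h.trans h'.symm)⟩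
    · exact ⟨x, mem_su.2 ⟨y, hxy⟩, h⟩
  have hsU : s ∈ su C := by
    obtain ⟨j, hj⟩ := mem_su.1 hsS
    rcases hC'F hj with h | ⟨_, ⟨h, _⟩ | ⟨h, _⟩⟩
    · exact mem_su.2 ⟨j, h.1⟩
    · rw [h]; exact mem_su.2 ⟨t, hta.symm⟩
    · rw [h]; exact mem_su.2 ⟨t, htb.symm⟩
  refine lem4 hg hC htw (S := (su C').erase w) (s := s) (z := e) (fun h => htC' (mem_of_mem_erase h))
    (notMem_erase _ _) (mem_erase.2 ⟨hsw, hsS⟩) hsU ?_ (mem_su.2 ⟨t, het.symm⟩)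
    (fun h => heS (mem_of_mem_erase h)) het.ne' hew (hd t htw)
  intro i hi j hij
  rw [mem_erase] at hi
  by_cases hjt : j = t
  · exact Or.inr (Or.inl hjt)
  by_cases hjw : j = w
  · exact Or.inr (Or.inr hjw)
  left
  have hit : i ≠ t := fun h => htC' (h ▸ hi.2)
  have := hfull i hi.2 hi.1 j (Or.inl ⟨hij, hit, hjt⟩)
  exact mem_erase.2 ⟨hjw, mem_su.2 ⟨i, this.symm⟩⟩

theorem lem6 {p : V → Fin 3 → ℝ} (hg : Gn p) (w : V) {C : SimpleGraph V} (hC : IsCirc p C)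
    (hs : Sp C) (hd : ∀ i, i ≠ w → dg C univ i ≤ 5) {t : V} (ht : t ∈ su C) (htw : t ≠ w) :
    dg C univ t = 5 :=
  lem6_aux hg w (ee C univ).toNat C (by have := ee_nonneg C univ; omega) hC hs hd t ht htw

theorem su_card {p : V → Fin 3 → ℝ} (hg : Gn p) {C : SimpleGraph V} (hC : IsCirc p C) :
    5 ≤ (su C).card := by
  obtain ⟨a, b, hab⟩ := circ_adj hC
  have h := circ_deg hg hC (mem_su.2 ⟨b, hab⟩)
  rw [dg_univ] at h
  have h2 : insert a (nb C a) ⊆ su C := by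
    intro y hy
    rcases mem_insert.1 hy with rfl | hy
    · exact mem_su.2 ⟨b, hab⟩
    · exact mem_su.2 ⟨a, (mem_nb.1 hy).symm⟩
  have h3 := card_le_card h2
  rw [card_insert_of_notMem (by simp [mem_nb])] at h3
  omega

theorem su_close {C' F : SimpleGraph V} (hle : C' ≤ F) {i j : V} (h1 : dg F univ i ≤ 5)
    (h2 : dg C' univ i = 5) (h : F.Adj i j) : j ∈ su C' :=
  mem_su.2 ⟨i, (nb_full hle h1 h2 h).symm⟩

theorem lem7 {p : V → Fin 3 → ℝ} (hg : Gn p) {C : SimpleGraph V} (hC : IsCirc p C)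
    (hs : Sp C) (hd : ∀ i, dg C univ i ≤ 5) {t : V} (ht : t ∈ su C) : dg C univ t = 5 := by
  obtain ⟨w, hw⟩ := mem_su.1 ht
  exact lem6 hg w hC hs (fun i _ => hd i) ht hw.ne

theorem ff_nonadj {C : SimpleGraph V} {X : Finset V} {a b : V} (h3 : 3 ≤ X.card) (h4 : X.card ≤ 4)
    (ha : a ∈ X) (hb : b ∈ X) (hab : a ≠ b) (hn : ¬ C.Adj a b) : 14 ≤ ff C X := by
  have h1 := ff_ge_of_card_le (gadd C a b) X
  rw [ff_gadd C hab hn ha hb] at h1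
  have : X.card = 3 ∨ X.card = 4 := by omega
  rcases this with h | h <;> rw [h] at h1 <;> norm_num at h1 <;> omega

theorem gadd_gcut {C : SimpleGraph V} {x y : V} (h : C.Adj x y) : gadd (gcut C x y) x y = C := by
  ext i j
  constructor
  · rintro (h1 | ⟨h1, ⟨rfl, rfl⟩ | ⟨rfl, rfl⟩⟩)
    · exact gcut_le _ _ _ h1
    · exact h
    · exact h.symm
  · intro h1
    by_cases h2 : (i = x ∧ j = y) ∨ (i = y ∧ j = x)
    · exact Or.inr ⟨h.ne, h2⟩
    · push Not at h2
      refine Or.inl ⟨h1, ?_⟩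
      tauto

theorem gcut_not {C : SimpleGraph V} {x y : V} : ¬ (gcut C x y).Adj x y := by
  intro h
  have := h.2
  tauto

def gres (C : SimpleGraph V) (T : Finset V) : SimpleGraph V where
  Adj i j := C.Adj i j ∧ i ∈ T ∧ j ∈ T
  symm := ⟨fun _ _ h => ⟨h.1.symm, h.2.2, h.2.1⟩⟩
  loopless := ⟨fun _ h => h.1.ne rfl⟩

theorem lem10 {p : V → Fin 3 → ℝ} (hg : Gn p) {C : SimpleGraph V} (hC : IsCirc p C)
    (hs : Sp C) (hd : ∀ i, dg C univ i ≤ 5) {T0 : Finset V} (hT0 : ff C T0 = 12) (hc0 : 5 ≤ T0.card) :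
    su C ⊆ T0 := by
  classical
  by_contra hsub
  obtain ⟨z0, hz0, hz0T⟩ := not_subset.1 hsub
  obtain ⟨x, hx0, w, hw0, hxw, hn⟩ : ∃ x ∈ T0, ∃ w ∈ T0, x ≠ w ∧ ¬ C.Adj x w := by
    by_contra h
    push Not at h
    have h1 := ff_clique h
    nlinarith [(Nat.cast_le (α := ℤ)).2 hc0]
  obtain ⟨T, hT, hmin⟩ := Finset.exists_min_image (T0.powerset.filter fun X => ff C X = 12 ∧ 4 ≤ X.card ∧
    x ∈ X ∧ w ∈ X) card ⟨T0, by simp [hT0, hx0, hw0]; omega⟩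
  simp only [mem_filter, mem_powerset] at hT hmin
  obtain ⟨hTT0, hT12, hT4, hxT, hwT⟩ := hT
  have hz0' : z0 ∉ T := fun h => hz0T (hTT0 h)
  obtain ⟨y, hy⟩ : ∃ y, y ∈ T ∩ nb C x := by
    have := tight_dg hs hT4 hT12 hxT
    rw [dg_eq_card] at this
    exact card_pos.1 (by omega)
  rw [mem_inter, mem_nb] at hy
  obtain ⟨hyT, hxy⟩ := hy
  have hyw : y ≠ w := fun h => hn (h ▸ hxy)
  have hn' : ¬ (gcut C x y).Adj x w := fun h => hn (gcut_le _ _ _ h)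
  set F := gadd (gcut C x y) x w with hF
  have hffc : ∀ X : Finset V, x ∈ X → y ∈ X → ff (gcut C x y) X = ff C X + 2 := by
    intro X h1 h2
    have := ff_gadd (gcut C x y) hxy.ne gcut_not h1 h2
    rw [gadd_gcut hxy] at this
    omega
  have hdF : ∀ i, dg F univ i = dg C univ i - (if i = y then 1 else 0) + (if i = w then 1 else 0) := by
    intro i
    have h1 := dg_gadd_le (gcut C x y) hxy.ne gcut_not i
    have h2 := dg_gadd_le (gcut C x y) hxw hn' i
    rw [gadd_gcut hxy] at h1
    rw [hF]; omega
  have hFs : Sp F := by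
    intro X hX3
    by_cases h : x ∈ X ∧ w ∈ X
    · rw [hF, ff_gadd _ hxw hn' h.1 h.2]
      by_cases hyX : y ∈ X
      · rw [hffc X h.1 hyX]
        have := hs X hX3; omega
      · have h1 := ff_gmono (gcut_le C x y) X
        suffices 14 ≤ ff C X by omega
        by_contra hlt
        have hX12 : ff C X = 12 := by
          have := hs X hX3
          obtain ⟨k, hk⟩ := ff_even C X
          omega
        have hX4 : 4 ≤ X.card := by
          by_contra h'
          exact hlt (ff_nonadj hX3 (by omega) h.1 h.2 hxw hn)
        have e1 := tight_dg hs hX4 hX12 h.1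
        have e2 := tight_dg hs hT4 hT12 hxT
        have e3 := dg_union_inter C X T x
        have e4 := (dg_le_univ C (X ∪ T) x).trans (hd x)
        have e5 : 0 < (X ∩ T ∩ nb C x).card := by
          have := dg_eq_card C (X ∩ T) x
          omega
        obtain ⟨q, hq⟩ := card_pos.1 e5
        rw [mem_inter, mem_nb] at hq
        have e6 : ({x, w, q} : Finset V) ⊆ X ∩ T := by
          intro r hr
          simp only [mem_insert, mem_singleton] at hr
          rcases hr with rfl | rfl | rfl
          exacts [mem_inter.2 ⟨h.1, hxT⟩, mem_inter.2 ⟨h.2, hwT⟩, hq.1]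
        have e7 : ({x, w, q} : Finset V).card = 3 :=
          card_eq_three.2 ⟨x, w, q, hxw, hq.2.ne, fun h' => hn (h' ▸ hq.2), rfl⟩
        have e8 := card_le_card e6
        have e9 := (tight_union hs hX12 hT12 (by omega)).2
        have hI4 : 4 ≤ (X ∩ T).card := by
          by_contra h'
          have := ff_nonadj (C := C) (X := X ∩ T) (by omega) (by omega) (mem_inter.2 ⟨h.1, hxT⟩) (mem_inter.2 ⟨h.2, hwT⟩) hxw hn
          omega
        have := hmin (X ∩ T) ⟨inter_subset_right.trans hTT0, e9, hI4, mem_inter.2 ⟨h.1, hxT⟩, mem_inter.2 ⟨h.2, hwT⟩⟩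
        have h10 : X ∩ T ⊂ T := by
          refine ⟨inter_subset_right, fun h' => hyX (mem_inter.1 (h' hyT)).1⟩
        have := card_lt_card h10
        omega
    · rw [hF, ff_gadd_of_not _ h]
      exact (hs X hX3).trans (ff_gmono (gcut_le C x y) X)
  have hdep : ¬ Ind p F := by
    intro hI
    have hK : ¬ Ind p (gadd (gres C T) x w) := by
      intro h
      have h1 := lem5 hg h T (by omega)
      rw [ff_gadd (gres C T) hxw (fun h => hn h.1) hxT hwT, ff_congr (F := gres C T) (F' := C)
        (fun i hi j hj => ⟨fun h => h.1, fun h => ⟨h, hi, hj⟩⟩)] at h1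
      omega
    unfold Ind at hK
    push Not at hK
    obtain ⟨ω', hω', i0, j0, hne⟩ := hK
    have hxw' : ω' x w ≠ 0 := by
      intro h
      have hst : IsStress p (gres C T) ω' := by
        refine ⟨hω'.symm, ?_, hω'.eq⟩
        intro i j hij
        by_cases h2 : (gadd (gres C T) x w).Adj i j
        · rcases h2 with h2 | ⟨_, ⟨rfl, rfl⟩ | ⟨rfl, rfl⟩⟩
          · exact absurd h2 hij
          · exact h
          · rw [hω'.symm]; exact h
        · exact hω'.supp _ _ h2
      have hlt : gres C T < C := by
        refine lt_of_le_of_ne (fun _ _ h => h.1) ?_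
        intro heq
        obtain ⟨j, hj⟩ := mem_su.1 hz0
        rw [← heq] at hj
        exact hz0' hj.2.1
      exact hne (hC.min _ hlt _ hst i0 j0)
    obtain ⟨ω, hω, hωn⟩ := circ_stress hC
    have h1 : IsStress p (gadd C x w) ω := hω.mono (le_gadd _ _ _)
    have h2 : IsStress p (gadd C x w) ω' := hω'.mono (by
      rintro i j (h | h)
      · exact Or.inl h.1
      · exact Or.inr h)
    have h3 := h1.lin h2 (ω' x y) (-ω x y)
    have h4 := h3.gcut (a := x) (b := y) (by ring)
    have h5 : gcut (gadd C x w) x y ≤ F := by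
      rintro i j ⟨h | h, h'⟩
      · exact Or.inl ⟨h, h'⟩
      · exact Or.inr h
    have h6 := hI _ (h4.mono h5) x w
    have h7 := hω.supp x w hn
    simp only [h7] at h6
    have h8 := hωn x y hxy
    have : ω x y * ω' x w = 0 := by linarith
    rcases mul_eq_zero.1 this with h | h
    · exact h8 h
    · exact hxw' h
  obtain ⟨C', hC'F, hC'⟩ := exists_circ hdep
  have hdF5 : ∀ i, i ≠ w → dg F univ i ≤ 5 := by
    intro i hi
    rw [hdF, if_neg hi]
    have := hd i
    split_ifs <;> omega
  have h6 : ∀ i ∈ su C', i ≠ w → dg C' univ i = 5 := fun i hi hiw =>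
    lem6 hg w hC' (hFs.mono hC'F) (fun i hi => (dg_gmono hC'F univ i).trans (hdF5 i hi)) hi hiw
  have hyS : y ∉ su C' := by
    intro h
    have h1 := h6 y h hyw
    have h2 := dg_gmono hC'F univ y
    have h3 := hdF y
    have := hd y
    simp [hyw] at h3
    omega
  obtain ⟨s, hsS⟩ : ∃ s, s ∈ ((su C').erase w).erase x := by
    apply card_pos.1
    have h1 := su_card hg hC'
    have h2 := pred_card_le_card_erase (s := su C') (a := w)
    have h3 := pred_card_le_card_erase (s := (su C').erase w) (a := x)
    omega
  have hst : ∀ i ∈ ((su C').erase w).erase x, ∀ j, j ≠ x → C.Adj i j → F.Adj i j := by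
    intro i hi j hjx h
    rw [mem_erase] at hi
    refine Or.inl ⟨h, ?_⟩
    have := hi.1
    tauto
  have hsS' := hsS
  rw [mem_erase, mem_erase] at hsS'
  refine lem4 hg hC hxw (S := ((su C').erase w).erase x) (s := s) (z := y) (notMem_erase _ _)
    (fun h => (notMem_erase w (su C')) (mem_of_mem_erase h)) hsS ?_ ?_ (mem_su.2 ⟨x, hxy.symm⟩)
    (fun h => hyS (mem_of_mem_erase (mem_of_mem_erase h))) hxy.ne' hyw (hd x)
  · have := h6 s hsS'.2.2 hsS'.2.1
    obtain ⟨j, hj⟩ := mem_su.1 hsS'.2.2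
    rcases hC'F hj with h | ⟨_, ⟨h, _⟩ | ⟨h, _⟩⟩
    · exact mem_su.2 ⟨j, h.1⟩
    · exact absurd h hsS'.1
    · exact absurd h hsS'.2.1
  · intro i hi j hij
    by_cases hjx : j = x
    · exact Or.inr (Or.inl hjx)
    by_cases hjw : j = w
    · exact Or.inr (Or.inr hjw)
    left
    have h1 := hst i hi j hjx hij
    rw [mem_erase, mem_erase] at hi
    exact mem_erase.2 ⟨hjx, mem_erase.2 ⟨hjw, su_close hC'F (hdF5 i hi.2.1) (h6 i hi.2.2 hi.2.1) h1⟩⟩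

/-- The data of a minimal counterexample. -/
structure Ctx (p : V → Fin 3 → ℝ) (C : SimpleGraph V) : Prop where
  hg : Gn p
  hC : IsCirc p C
  hs : Sp C
  hd : ∀ i, dg C univ i ≤ 5

theorem Ctx.h5 {p : V → Fin 3 → ℝ} {C : SimpleGraph V} (h : Ctx p C) {t : V} (ht : t ∈ su C) :
    dg C univ t = 5 := lem7 h.hg h.hC h.hs h.hd ht

theorem Ctx.nbc {p : V → Fin 3 → ℝ} {C : SimpleGraph V} (h : Ctx p C) {t : V} (ht : t ∈ su C) :
    (nb C t).card = 5 := by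
  have := h.h5 ht
  rw [dg_univ] at this; exact_mod_cast this

theorem Ctx.p5 {p : V → Fin 3 → ℝ} {C : SimpleGraph V} (h : Ctx p C) {T : Finset V}
    (hc : 5 ≤ T.card) (hT : ff C T = 12) : su C ⊆ T := lem10 h.hg h.hC h.hs h.hd hT hc

theorem Ctx.pair {p : V → Fin 3 → ℝ} {C : SimpleGraph V} (h : Ctx p C) {v : V} (hv : v ∈ su C)
    {X : Finset V} (hvX : v ∉ X) (h3 : 3 ≤ X.card) {a b : V} (ha : a ∈ X) (hb : b ∈ X) (hab : a ≠ b)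
    (hn : ¬ C.Adj a b) : 14 ≤ ff C X := by
  by_contra hlt
  have h12 : ff C X = 12 := by
    have := h.hs X h3
    obtain ⟨k, hk⟩ := ff_even C X
    omega
  by_cases h4 : X.card ≤ 4
  · exact hlt (ff_nonadj h3 h4 ha hb hab hn)
  · exact hvX (h.p5 (by omega) h12 hv)

/-- no set of value 14 avoiding `v` contains four neighbours of `v`. -/
theorem Ctx.four {p : V → Fin 3 → ℝ} {C : SimpleGraph V} (h : Ctx p C) {v : V} (hv : v ∈ su C)
    {X : Finset V} (hvX : v ∉ X) (h4 : 4 ≤ dg C X v) (hX : ff C X ≤ 14) : False := by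
  have h1 := ff_insert C hvX
  have h0 := dg_le_card C X v
  have hc : (insert v X).card = X.card + 1 := card_insert_of_notMem hvX
  have h2 := h.hs (insert v X) (by omega)
  have h3 := h.p5 (T := insert v X) (by omega) (by omega)
  have h5 := h.h5 hv
  have : univ ∩ nb C v ⊆ X ∩ nb C v := by
    intro y hy
    rw [mem_inter, mem_nb] at hy
    rcases mem_insert.1 (h3 (mem_su.2 ⟨v, hy.2.symm⟩)) with h' | h'
    · exact absurd h' hy.2.ne'
    · exact mem_inter.2 ⟨h', mem_nb.2 hy.2⟩
  have h6 := card_le_card this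
  rw [dg_eq_card] at h5 h1
  omega

theorem Ctx.l12a {p : V → Fin 3 → ℝ} {C : SimpleGraph V} (h : Ctx p C) {v : V} (hv : v ∈ su C)
    {a b c d : V} (ha : C.Adj v a) (hb : C.Adj v b) (hc : C.Adj v c) (hd : C.Adj v d)
    (hab : a ≠ b) (hac : a ≠ c) (had : a ≠ d) (hbc : b ≠ c) (hbd : b ≠ d) (hcd : c ≠ d)
    (nab : ¬ C.Adj a b) (ncd : ¬ C.Adj c d) : Ind p (gadd (gadd (gdel C v) a b) c d) := by
  by_contra hdep
  have n1 : ¬ (gdel C v).Adj a b := fun h => nab h.1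
  have n2 : ¬ (gadd (gdel C v) a b).Adj c d := by
    rintro (h | ⟨_, ⟨h, _⟩ | ⟨h, _⟩⟩)
    exacts [ncd h.1, hac h.symm, hbc h.symm]
  set F := gadd (gadd (gdel C v) a b) c d with hF
  have hFv : ∀ j, ¬ F.Adj v j := by
    rintro j ((h | ⟨_, ⟨h, _⟩ | ⟨h, _⟩⟩) | ⟨_, ⟨h, _⟩ | ⟨h, _⟩⟩)
    exacts [h.2.1 rfl, ha.ne h, hb.ne h, hc.ne h, hd.ne h]
  have hFs : Sp F := by
    refine sp_of_isolated hFv fun X h3 hvX => ?_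
    by_cases hA : a ∈ X ∧ b ∈ X
    · have e1 := h.pair hv hvX h3 hA.1 hA.2 hab nab
      by_cases hB : c ∈ X ∧ d ∈ X
      · rw [hF, ff_gadd _ hcd n2 hB.1 hB.2, ff_gadd _ hab n1 hA.1 hA.2, ff_gdel _ hvX]
        by_contra hlt
        refine h.four hv hvX ?_ (show ff C X ≤ 14 by obtain ⟨k, hk⟩ := ff_even C X; omega)
        rw [dg_eq_card]
        have h1 : ({a, b, c, d} : Finset V) ⊆ X ∩ nb C v := by
          intro q hq
          simp only [mem_insert, mem_singleton] at hq
          rw [mem_inter, mem_nb]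
          rcases hq with rfl | rfl | rfl | rfl
          exacts [⟨hA.1, ha⟩, ⟨hA.2, hb⟩, ⟨hB.1, hc⟩, ⟨hB.2, hd⟩]
        have h2 : ({a, b, c, d} : Finset V).card = 4 := by
          simp [hab, hac, had, hbc, hbd, hcd]
        have := card_le_card h1
        omega
      · rw [hF, ff_gadd_of_not _ hB, ff_gadd _ hab n1 hA.1 hA.2, ff_gdel _ hvX]; omega
    · by_cases hB : c ∈ X ∧ d ∈ X
      · have e1 := h.pair hv hvX h3 hB.1 hB.2 hcd ncd
        rw [hF, ff_gadd _ hcd n2 hB.1 hB.2, ff_gadd_of_not _ hA, ff_gdel _ hvX]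
        omega
      · rw [hF, ff_gadd_of_not _ hB, ff_gadd_of_not _ hA, ff_gdel _ hvX]
        exact h.hs X h3
  have hdF : ∀ i, i ≠ v → dg F univ i = dg C univ i - ad C i v + (if i = a then 1 else 0) +
      (if i = b then 1 else 0) + (if i = c then 1 else 0) + (if i = d then 1 else 0) := by
    intro i hi
    rw [hF, dg_gadd_le _ hcd n2, dg_gadd_le _ hab n1, dg_gdel _ hi]
  have hdF5 : ∀ i, dg F univ i ≤ 5 := by
    intro i
    by_cases hi : i = v
    · rw [hi, show dg F univ v = 0 from sum_eq_zero fun j _ => ad_eq_zero (hFv j)]; norm_num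
    rw [hdF i hi]
    have h1 := h.hd i
    have h2 := ad_nonneg C i v
    by_cases ia : i = a
    · subst ia; rw [ad_eq_one ha.symm]; simp [hab, hac, had]; omega
    by_cases ib : i = b
    · subst ib; rw [ad_eq_one hb.symm]; simp [ia, hbc, hbd]; omega
    by_cases ic : i = c
    · subst ic; rw [ad_eq_one hc.symm]; simp [ia, ib, hcd]; omega
    by_cases id : i = d
    · subst id; rw [ad_eq_one hd.symm]; simp [ia, ib, ic]; omega
    simp [ia, ib, ic, id]; omega
  obtain ⟨C', hC'F, hC'⟩ := exists_circ hdep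
  have h7 : ∀ i ∈ su C', dg C' univ i = 5 := fun i hi =>
    lem7 h.hg hC' (hFs.mono hC'F) (fun i => (dg_gmono hC'F univ i).trans (hdF5 i)) hi
  obtain ⟨g, hg⟩ : ∃ g, g ∈ (nb C v) \ {a, b, c, d} := by
    apply card_pos.1
    have h1 := le_card_sdiff ({a, b, c, d} : Finset V) (nb C v)
    have h2 := card_le_four (a := a) (b := b) (c := c) (d := d)
    rw [h.nbc hv] at h1
    omega
  simp only [mem_sdiff, mem_nb, mem_insert, mem_singleton, not_or] at hg
  obtain ⟨hvg, ga, gb, gc, gd⟩ := hg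
  have hgS : g ∉ su C' := by
    intro hh
    have h1 := h7 g hh
    have h2 := dg_gmono hC'F univ g
    have h3 := hdF g hvg.ne'
    rw [ad_eq_one hvg.symm] at h3
    simp [ga, gb, gc, gd] at h3
    have := h.hd g
    omega
  have hvS : v ∉ su C' := by
    intro hh
    obtain ⟨j, hj⟩ := mem_su.1 hh
    exact hFv j (hC'F hj)
  obtain ⟨s, s', hsS, hsS', hss⟩ := one_lt_card_iff.1 (show 1 < (su C').card by have := su_card h.hg hC'; omega)
  refine lem4' h.hg h.hC h.hd hvS hsS hsS' hss ?_ ?_ (mem_su.2 ⟨v, hvg.symm⟩) hgS hvg.ne'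
  · obtain ⟨j, hj⟩ := mem_su.1 hsS
    rcases hC'F hj with (h | ⟨_, ⟨h, _⟩ | ⟨h, _⟩⟩) | ⟨_, ⟨h, _⟩ | ⟨h, _⟩⟩
    · exact mem_su.2 ⟨j, h.1⟩
    all_goals subst h; apply mem_su.2
    exacts [⟨v, ha.symm⟩, ⟨v, hb.symm⟩, ⟨v, hc.symm⟩, ⟨v, hd.symm⟩]
  · intro i hi j hij
    by_cases hj : j = v
    · exact Or.inr hj
    left
    have hiv : i ≠ v := fun h' => hvS (h' ▸ hi)
    exact su_close hC'F (hdF5 i) (h7 i hi) (Or.inl (Or.inl ⟨hij, hiv, hj⟩))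

theorem Ctx.l12b {p : V → Fin 3 → ℝ} {C : SimpleGraph V} (h : Ctx p C) {v : V} (hv : v ∈ su C)
    {a d g : V} (ha : C.Adj v a) (hd : C.Adj v d) (hg : C.Adj v g)
    (had : a ≠ d) (hag : a ≠ g) (hdg : d ≠ g)
    (nad : ¬ C.Adj a d) (nag : ¬ C.Adj a g) (hX : ∀ X : Finset V, v ∉ X → a ∈ X → d ∈ X → g ∈ X →
      4 ≤ X.card → ff C X ≠ 14) : Ind p (gadd (gadd (gdel C v) a d) a g) := by
  by_contra hdep
  have n1 : ¬ (gdel C v).Adj a d := fun h => nad h.1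
  have n2 : ¬ (gadd (gdel C v) a d).Adj a g := by
    rintro (h | ⟨_, ⟨_, h⟩ | ⟨h, _⟩⟩)
    exacts [nag h.1, hdg h.symm, had h]
  set F := gadd (gadd (gdel C v) a d) a g with hF
  have hFv : ∀ j, ¬ F.Adj v j := by
    rintro j ((h | ⟨_, ⟨h, _⟩ | ⟨h, _⟩⟩) | ⟨_, ⟨h, _⟩ | ⟨h, _⟩⟩)
    exacts [h.2.1 rfl, ha.ne h, hd.ne h, ha.ne h, hg.ne h]
  have hFs : Sp F := by
    refine sp_of_isolated hFv fun X h3 hvX => ?_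
    by_cases hX3 : X.card = 3
    · have := ff_ge_of_card_le F X
      rw [hX3] at this; norm_num at this; exact this
    by_cases hA : a ∈ X ∧ d ∈ X
    · have e1 := h.pair hv hvX h3 hA.1 hA.2 had nad
      by_cases hB : a ∈ X ∧ g ∈ X
      · rw [hF, ff_gadd _ hag n2 hB.1 hB.2, ff_gadd _ had n1 hA.1 hA.2, ff_gdel _ hvX]
        have := hX X hvX hA.1 hA.2 hB.2 (by omega)
        obtain ⟨k, hk⟩ := ff_even C X
        omega
      · rw [hF, ff_gadd_of_not _ hB, ff_gadd _ had n1 hA.1 hA.2, ff_gdel _ hvX]; omega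
    · by_cases hB : a ∈ X ∧ g ∈ X
      · have e1 := h.pair hv hvX h3 hB.1 hB.2 hag nag
        rw [hF, ff_gadd _ hag n2 hB.1 hB.2, ff_gadd_of_not _ hA, ff_gdel _ hvX]
        omega
      · rw [hF, ff_gadd_of_not _ hB, ff_gadd_of_not _ hA, ff_gdel _ hvX]
        exact h.hs X h3
  have hdF : ∀ i, i ≠ v → dg F univ i = dg C univ i - ad C i v + (if i = a then 1 else 0) +
      (if i = d then 1 else 0) + (if i = a then 1 else 0) + (if i = g then 1 else 0) := by
    intro i hi
    rw [hF, dg_gadd_le _ hag n2, dg_gadd_le _ had n1, dg_gdel _ hi]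
  have hdF5 : ∀ i, i ≠ a → dg F univ i ≤ 5 := by
    intro i ia
    by_cases hi : i = v
    · rw [hi, show dg F univ v = 0 from sum_eq_zero fun j _ => ad_eq_zero (hFv j)]; norm_num
    rw [hdF i hi]
    have h1 := h.hd i
    have h2 := ad_nonneg C i v
    by_cases ib : i = d
    · subst ib; rw [ad_eq_one hd.symm]; simp [ia, hdg]; omega
    by_cases ic : i = g
    · subst ic; rw [ad_eq_one hg.symm]; simp [ia, ib]; omega
    simp [ia, ib, ic]; omega
  obtain ⟨C', hC'F, hC'⟩ := exists_circ hdep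
  have h6 : ∀ i ∈ su C', i ≠ a → dg C' univ i = 5 := fun i hi hia =>
    lem6 h.hg a hC' (hFs.mono hC'F) (fun i hi => (dg_gmono hC'F univ i).trans (hdF5 i hi)) hi hia
  obtain ⟨b, hb⟩ : ∃ b, b ∈ (nb C v) \ {a, d, g} := by
    apply card_pos.1
    have h1 := le_card_sdiff ({a, d, g} : Finset V) (nb C v)
    have h2 := card_le_three (a := a) (b := d) (c := g)
    rw [h.nbc hv] at h1
    omega
  simp only [mem_sdiff, mem_nb, mem_insert, mem_singleton, not_or] at hb
  obtain ⟨hvb, ba, bd, bg⟩ := hb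
  have hbS : b ∉ su C' := by
    intro hh
    have h1 := h6 b hh ba
    have h2 := dg_gmono hC'F univ b
    have h3 := hdF b hvb.ne'
    rw [ad_eq_one hvb.symm] at h3
    simp [ba, bd, bg] at h3
    have := h.hd b
    omega
  have hvS : v ∉ su C' := by
    intro hh
    obtain ⟨j, hj⟩ := mem_su.1 hh
    exact hFv j (hC'F hj)
  obtain ⟨s, hsS⟩ : ∃ s, s ∈ (su C').erase a := by
    apply card_pos.1
    have h1 := su_card h.hg hC'
    have h2 := pred_card_le_card_erase (s := su C') (a := a)
    omega
  refine lem4 h.hg h.hC ha.ne (S := (su C').erase a) (s := s) (z := b) (fun h => hvS (mem_of_mem_erase h))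
    (notMem_erase _ _) hsS ?_ ?_ (mem_su.2 ⟨v, hvb.symm⟩) (fun h => hbS (mem_of_mem_erase h)) hvb.ne' ba (h.hd v)
  · obtain ⟨j, hj⟩ := mem_su.1 (mem_of_mem_erase hsS)
    rcases hC'F hj with (h | ⟨_, ⟨h, _⟩ | ⟨h, _⟩⟩) | ⟨_, ⟨h, _⟩ | ⟨h, _⟩⟩
    · exact mem_su.2 ⟨j, h.1⟩
    all_goals rw [h]; apply mem_su.2
    exacts [⟨v, ha.symm⟩, ⟨v, hd.symm⟩, ⟨v, ha.symm⟩, ⟨v, hg.symm⟩]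
  · intro i hi j hij
    rw [mem_erase] at hi
    by_cases hj : j = v
    · exact Or.inr (Or.inl hj)
    by_cases hja : j = a
    · exact Or.inr (Or.inr hja)
    left
    have hiv : i ≠ v := fun h' => hvS (h' ▸ hi.2)
    exact mem_erase.2 ⟨hja, su_close hC'F (hdF5 i hi.1) (h6 i hi.2 hi.1) (Or.inl (Or.inl ⟨hij, hiv, hj⟩))⟩

noncomputable def AA (p : V → Fin 3 → ℝ) (i j : V) (q : V → Fin 3 → ℝ) : ℝ :=
  ∑ k, (p i k - p j k) * (q i k - q j k)

def MM (p : V → Fin 3 → ℝ) (F : SimpleGraph V) (q : V → Fin 3 → ℝ) : Prop :=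
  ∀ i j, F.Adj i j → AA p i j q = 0

theorem AA_symm (p : V → Fin 3 → ℝ) (i j : V) (q : V → Fin 3 → ℝ) : AA p i j q = AA p j i q :=
  sum_congr rfl fun k _ => by ring

theorem AA_self (p : V → Fin 3 → ℝ) (i : V) (q : V → Fin 3 → ℝ) : AA p i i q = 0 :=
  sum_eq_zero fun k _ => by ring

theorem pair_id (p q : V → Fin 3 → ℝ) (c : V → V → ℝ) (hc : ∀ i j, c i j = c j i) :
    ∑ i, ∑ j, c i j * AA p i j q = 2 * ∑ i, ∑ k, q i k * ∑ j, c i j * (p i k - p j k) := by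
  have h1 : ∑ i, ∑ j, c i j * AA p i j q = ∑ i, ∑ j, ∑ k, c i j * (p i k - p j k) * q i k
      + ∑ i, ∑ j, ∑ k, c i j * (p j k - p i k) * q j k := by
    rw [← sum_add_distrib]
    refine sum_congr rfl fun i _ => ?_
    rw [← sum_add_distrib]
    refine sum_congr rfl fun j _ => ?_
    rw [← sum_add_distrib, AA, mul_sum]
    exact sum_congr rfl fun k _ => by ring
  have h2 : ∑ i, ∑ j, ∑ k, c i j * (p j k - p i k) * q j k =
      ∑ i, ∑ j, ∑ k, c i j * (p i k - p j k) * q i k := by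
    rw [sum_comm]
    refine sum_congr rfl fun i _ => sum_congr rfl fun j _ => sum_congr rfl fun k _ => ?_
    rw [hc i j]
  have h3 : ∑ i, ∑ j, ∑ k, c i j * (p i k - p j k) * q i k =
      ∑ i, ∑ k, q i k * ∑ j, c i j * (p i k - p j k) := by
    refine sum_congr rfl fun i _ => ?_
    rw [sum_comm]
    refine sum_congr rfl fun k _ => ?_
    rw [mul_sum]
    exact sum_congr rfl fun j _ => by ring
  rw [h1, h2, h3]; ring

noncomputable def AAl (p : V → Fin 3 → ℝ) (i j : V) : (V → Fin 3 → ℝ) →ₗ[ℝ] ℝ where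
  toFun q := AA p i j q
  map_add' q r := by
    unfold AA; rw [← sum_add_distrib]; exact sum_congr rfl fun k _ => by simp; ring
  map_smul' s q := by
    unfold AA; simp only [RingHom.id_apply, smul_eq_mul]; rw [mul_sum]
    exact sum_congr rfl fun k _ => by simp; ring

theorem span_lem (p : V → Fin 3 → ℝ) (H : SimpleGraph V) (l : (V → Fin 3 → ℝ) →ₗ[ℝ] ℝ)
    (h : ∀ q, MM p H q → l q = 0) : ∃ c : V → V → ℝ, (∀ i j, c i j = c j i) ∧
      (∀ i j, ¬ H.Adj i j → c i j = 0) ∧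
      ∀ q, l q = ∑ i, ∑ k, q i k * ∑ j, c i j * (p i k - p j k) := by
  classical
  let L : V × V → ((V → Fin 3 → ℝ) →ₗ[ℝ] ℝ) := fun e => if H.Adj e.1 e.2 then AAl p e.1 e.2 else 0
  have h1 : l ∈ Submodule.span ℝ (Set.range L) := by
    apply mem_span_of_iInf_ker_le_ker
    intro q hq
    rw [Submodule.mem_iInf] at hq
    refine LinearMap.mem_ker.2 (h q fun i j hij => ?_)
    have := LinearMap.mem_ker.1 (hq (i, j))
    simp only [L, hij, if_true] at this
    exact this
  obtain ⟨c, hc⟩ := (Submodule.mem_span_range_iff_exists_fun ℝ).1 h1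
  let d : V → V → ℝ := fun i j => if H.Adj i j then c (i, j) + c (j, i) else 0
  have hd : ∀ i j, d i j = d j i := by
    intro i j; simp only [d, H.adj_comm i j]; split_ifs <;> ring
  refine ⟨d, hd, fun i j hij => by simp [d, hij], fun q => ?_⟩
  have h2 := pair_id p q d hd
  have h3 : l q = ∑ i, ∑ j, (if H.Adj i j then c (i, j) else 0) * AA p i j q := by
    rw [← hc, ← Fintype.sum_prod_type' (f := fun i j => (if H.Adj i j then c (i, j) else 0) * AA p i j q)]
    rw [LinearMap.sum_apply]
    refine sum_congr rfl fun e _ => ?_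
    simp only [L, LinearMap.smul_apply, smul_eq_mul]
    split_ifs
    · rfl
    · simp
  have h4 : l q = ∑ i, ∑ j, (if H.Adj i j then c (j, i) else 0) * AA p i j q := by
    rw [h3, sum_comm]
    refine sum_congr rfl fun i _ => sum_congr rfl fun j _ => ?_
    rw [AA_symm p i j, H.adj_comm i j]
  have h5 : ∑ i, ∑ j, d i j * AA p i j q = l q + l q := by
    nth_rewrite 1 [h3]
    rw [h4, ← sum_add_distrib]
    refine sum_congr rfl fun i _ => ?_
    rw [← sum_add_distrib]
    refine sum_congr rfl fun j _ => ?_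
    simp only [d]; split_ifs <;> ring
  linarith

theorem single_eval (i0 : V) (k0 : Fin 3) (f : V → Fin 3 → ℝ) :
    ∑ i, ∑ k, (if i = i0 ∧ k = k0 then (1 : ℝ) else 0) * f i k = f i0 k0 := by
  rw [sum_eq_single i0, sum_eq_single k0]
  · simp
  · intro k _ hk; simp [hk]
  · simp
  · intro i _ hi; exact sum_eq_zero fun k _ => by simp [hi]
  · simp

theorem dual_lem {p : V → Fin 3 → ℝ} {F : SimpleGraph V} (hI : Ind p F) {a b : V} (hab : F.Adj a b) :
    ∃ q, MM p (gcut F a b) q ∧ AA p a b q ≠ 0 := by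
  by_contra hcon
  push Not at hcon
  obtain ⟨c, hc, hcs, hl⟩ := span_lem p (gcut F a b) (AAl p a b) hcon
  let δ : V → V → ℝ := fun i j => (if i = a ∧ j = b then 1 else 0) + (if i = b ∧ j = a then 1 else 0)
  have hδ : ∀ i j, δ i j = δ j i := by
    intro i j
    simp only [δ, and_comm (a := j = a), and_comm (a := j = b)]; ring
  have hδA : ∀ q, AA p a b q = ∑ i, ∑ k, q i k * ∑ j, δ i j * (p i k - p j k) := by
    intro q
    have h1 := pair_id p q δ hδ
    have h2 : ∑ i, ∑ j, δ i j * AA p i j q = 2 * AA p a b q := by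
      simp only [δ, add_mul, sum_add_distrib, ite_and, ite_mul, one_mul, zero_mul]
      simp
      rw [AA_symm p b a]; ring
    linarith
  have hst : IsStress p F (fun i j => c i j - δ i j) := by
    refine ⟨fun i j => by rw [hc, hδ], fun i j hij => ?_, fun i k => ?_⟩
    · rw [hcs i j fun h => hij (gcut_le _ _ _ h)]
      have h1 : ¬ (i = a ∧ j = b) := by rintro ⟨rfl, rfl⟩; exact hij hab
      have h2 : ¬ (i = b ∧ j = a) := by rintro ⟨rfl, rfl⟩; exact hij hab.symm
      simp [δ, h1, h2]
    · have h1 := hl (fun i' k' => if i' = i ∧ k' = k then 1 else 0)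
      have h2 := hδA (fun i' k' => if i' = i ∧ k' = k then 1 else 0)
      rw [single_eval i k] at h1 h2
      have h3 : AAl p a b (fun i' k' => if i' = i ∧ k' = k then 1 else 0) =
        AA p a b (fun i' k' => if i' = i ∧ k' = k then 1 else 0) := rfl
      rw [h3, h2] at h1
      simp only [sub_mul, sum_sub_distrib]
      linarith
  have h1 := hI _ hst a b
  rw [hcs a b gcut_not] at h1
  simp [δ, hab.ne] at h1

/-- affine dependency of a finite set -/
structure Dep (p : V → Fin 3 → ℝ) (N : Finset V) (α : V → ℝ) : Prop where
  supp : ∀ i, i ∉ N → α i = 0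
  sum : ∑ i, α i = 0
  eq : ∀ k, ∑ i, α i * p i k = 0

theorem affI_dep {p : V → Fin 3 → ℝ} (hg : Gn p) {N : Finset V} (hN : N.card ≤ 4) {α : V → ℝ}
    (h : Dep p N α) : ∀ i, α i = 0 :=
  affI_gen hg.gen hg.card N hN α h.supp h.sum h.eq

theorem exists_dep {p : V → Fin 3 → ℝ} (hg : Gn p) {N : Finset V} (hN : N.card = 5) :
    ∃ α, Dep p N α ∧ ∀ i ∈ N, α i ≠ 0 := by
  let B : Matrix (Option (Fin 3)) N ℝ := fun r i => match r with
    | none => 1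
    | some k => p i k
  have hker : LinearMap.ker B.mulVecLin ≠ ⊥ := by
    apply LinearMap.ker_ne_bot_of_finrank_lt
    simp [Module.finrank_fintype_fun_eq_card, hN]
  obtain ⟨c, hc, hc0⟩ := Submodule.exists_mem_ne_zero_of_ne_bot hker
  have hB : ∀ r, ∑ e, B r e * c e = 0 := fun r => congrFun (LinearMap.mem_ker.1 hc) r
  let α : V → ℝ := fun i => if h : i ∈ N then c ⟨i, h⟩ else 0
  have hsum : ∀ g : V → ℝ, ∑ i, α i * g i = ∑ i : N, g i * c i := by
    intro g
    rw [← sum_subset (subset_univ N) (fun i _ hi => by simp [α, hi]), ← sum_coe_sort]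
    refine sum_congr rfl fun i _ => ?_
    simp [α]; ring
  have hα : Dep p N α := by
    refine ⟨fun i hi => by simp [α, hi], ?_, fun k => ?_⟩
    · have := hsum (fun _ => 1)
      have h2 := hB none
      simp only [B] at h2
      simp only [mul_one] at this
      rw [this, h2]
    · have := hsum (fun i => p i k)
      have h2 := hB (some k)
      simp only [B] at h2
      rw [this, h2]
  refine ⟨α, hα, fun i hi h0 => hc0 ?_⟩
  have h1 : Dep p (N.erase i) α := by
    refine ⟨fun j hj => ?_, hα.sum, hα.eq⟩
    by_cases hji : j = i
    · rw [hji, h0]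
    · exact hα.supp j fun h => hj (mem_erase.2 ⟨hji, h⟩)
  have h2 := affI_dep hg (by rw [card_erase_of_mem hi]; omega) h1
  funext e
  have h3 := h2 e.1
  simpa [α] using h3

theorem dep_unique {p : V → Fin 3 → ℝ} (hg : Gn p) {N : Finset V} (hN : N.card = 5) {α ν : V → ℝ}
    (hα : Dep p N α) (hne : ∀ i ∈ N, α i ≠ 0) (hν : Dep p N ν) : ∃ τ : ℝ, ∀ i, ν i = τ * α i := by
  obtain ⟨a, ha⟩ := card_pos.1 (show 0 < N.card by omega)
  refine ⟨ν a / α a, fun i => ?_⟩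
  have h1 : Dep p (N.erase a) (fun i => ν i - ν a / α a * α i) := by
    refine ⟨fun j hj => ?_, ?_, fun k => ?_⟩
    · by_cases hja : j = a
      · rw [hja]; field_simp [hne a ha]; ring
      · have : j ∉ N := fun h => hj (mem_erase.2 ⟨hja, h⟩)
        rw [hα.supp j this, hν.supp j this]; ring
    · rw [sum_sub_distrib, ← mul_sum, hα.sum, hν.sum]; ring
    · have : ∑ i, (ν i - ν a / α a * α i) * p i k = ∑ i, ν i * p i k - ν a / α a * ∑ i, α i * p i k := by
        rw [mul_sum, ← sum_sub_distrib]; exact sum_congr rfl fun i _ => by ring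
      rw [this, hα.eq, hν.eq]; ring
  have := affI_dep hg (by rw [card_erase_of_mem ha]; omega) h1 i
  linarith

theorem gdel_lt {C : SimpleGraph V} {v : V} (hv : v ∈ su C) : gdel C v < C := by
  refine lt_of_le_of_ne (gdel_le C v) fun h => ?_
  obtain ⟨j, hj⟩ := mem_su.1 hv
  rw [← h] at hj
  exact hj.2.1 rfl

theorem Ctx.star {p : V → Fin 3 → ℝ} {C : SimpleGraph V} (h : Ctx p C) {v : V} (hv : v ∈ su C)
    (x : Fin 3 → ℝ) : ∃ μ : V → ℝ, (∀ j, j ∉ nb C v → μ j = 0) ∧ (∃ j, μ j ≠ 0) ∧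
      (∀ k, ∑ j, μ j * (p j k - x k) = 0) ∧
      ∀ q, MM p (gdel C v) q → ∑ i, μ i * ∑ k, (p i k - x k) * q i k = 0 := by
  have hdep : ¬ Ind (Function.update p v x) C := fun h' => h.hC.dep (ind_transfer h.hg.gen h')
  unfold Ind at hdep
  push Not at hdep
  obtain ⟨ω, hω, i0, j0, hne⟩ := hdep
  have hvv : ω v v = 0 := hω.supp v v (fun h => h.ne rfl)
  let ω' : V → V → ℝ := fun i j => if i = v ∨ j = v then 0 else ω i j
  have hω's : ∀ i j, ω' i j = ω' j i := by
    intro i j; simp only [ω', or_comm (a := j = v), hω.symm i j]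
  have hsupp : ∀ i j, ¬ (gdel C v).Adj i j → ω' i j = 0 := by
    intro i j hij
    simp only [ω']
    split_ifs with h1
    · rfl
    · push Not at h1
      exact hω.supp i j fun h' => hij ⟨h', h1.1, h1.2⟩
  have hkey : ∀ i k, ∑ j, ω' i j * (p i k - p j k) = - (ω v i * (p i k - x k)) := by
    intro i k
    by_cases hi : i = v
    · subst hi; simp [ω', hvv]
    · have h1 := hω.eq i k
      rw [← add_sum_erase _ _ (mem_univ v)] at h1 ⊢
      have h2 : ∑ j ∈ univ.erase v, ω' i j * (p i k - p j k) = ∑ j ∈ univ.erase v,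
          ω i j * (Function.update p v x i k - Function.update p v x j k) := by
        refine sum_congr rfl fun j hj => ?_
        have hj := (mem_erase.1 hj).1
        simp [ω', hi, hj]
      rw [h2]
      simp only [Function.update_self, Function.update_of_ne hi] at h1
      simp only [ω', or_true, if_true, Function.update_of_ne hi]
      rw [hω.symm v i]
      linarith
  refine ⟨fun j => ω v j, fun j hj => hω.supp v j fun h' => hj (mem_nb.2 h'), ?_, fun k => ?_, fun q hq => ?_⟩
  · by_contra hz
    push Not at hz
    have h1 : IsStress p (gdel C v) ω' := ⟨hω's, hsupp, fun i k => by rw [hkey, hz]; ring⟩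
    have h2 := h.hC.min _ (gdel_lt hv) ω' h1 i0 j0
    simp only [ω'] at h2
    split_ifs at h2 with h3
    · rcases h3 with rfl | rfl
      · exact hne (hz j0)
      · exact hne (by rw [hω.symm]; exact hz i0)
    · exact hne h2
  · have h1 := hω.eq v k
    rw [← neg_eq_zero, ← sum_neg_distrib, ← h1]
    refine sum_congr rfl fun j _ => ?_
    by_cases hj : j = v
    · subst hj; simp [hvv]
    · simp [Function.update_of_ne hj]; ring
  · have h1 := pair_id p q ω' hω's
    have h2 : ∑ i, ∑ j, ω' i j * AA p i j q = 0 := by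
      refine sum_eq_zero fun i _ => sum_eq_zero fun j _ => ?_
      by_cases hij : (gdel C v).Adj i j
      · rw [hq i j hij]; ring
      · rw [hsupp i j hij]; ring
    simp only [hkey] at h1
    rw [h2] at h1
    have h3 : ∑ i, ω v i * ∑ k, (p i k - x k) * q i k =
        - ∑ i, ∑ k, q i k * - (ω v i * (p i k - x k)) := by
      rw [← sum_neg_distrib]
      refine sum_congr rfl fun i _ => ?_
      rw [mul_sum, ← sum_neg_distrib]
      exact sum_congr rfl fun k _ => by ring
    rw [h3]; linarith

/-- the functionals `φ_a` -/
noncomputable def phi (p : V → Fin 3 → ℝ) (α : V → ℝ) (a : V) (q : V → Fin 3 → ℝ) : ℝ :=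
  ∑ i, α i * ∑ k, (p i k - p a k) * q i k

theorem phi_avg (p : V → Fin 3 → ℝ) (α β : V → ℝ) (q : V → Fin 3 → ℝ) (x : Fin 3 → ℝ)
    (hx : ∀ k, ∑ a, β a * (p a k - x k) = 0) :
    ∑ a, β a * phi p α a q = (∑ a, β a) * ∑ i, α i * ∑ k, (p i k - x k) * q i k := by
  unfold phi
  have h1 : ∑ a, β a * ∑ i, α i * ∑ k, (p i k - p a k) * q i k
      = ∑ i, ∑ k, α i * q i k * ∑ a, β a * (p i k - p a k) := by
    simp only [mul_sum]
    rw [sum_comm]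
    refine sum_congr rfl fun i _ => ?_
    rw [sum_comm]
    exact sum_congr rfl fun k _ => sum_congr rfl fun a _ => by ring
  rw [h1, mul_sum]
  refine sum_congr rfl fun i _ => ?_
  rw [mul_sum, mul_sum]
  refine sum_congr rfl fun k _ => ?_
  have h2 : ∑ a, β a * (p i k - p a k) = (∑ a, β a) * (p i k - x k) - ∑ a, β a * (p a k - x k) := by
    rw [sum_mul, ← sum_sub_distrib]
    exact sum_congr rfl fun a _ => by ring
  rw [h2, hx]; ring

theorem phi_dep {p : V → Fin 3 → ℝ} {N : Finset V} {α : V → ℝ} (hα : Dep p N α) (q : V → Fin 3 → ℝ) :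
    ∑ a, α a * phi p α a q = 0 := by
  rw [phi_avg p α α q 0 (fun k => by simpa using hα.eq k), hα.sum]; ring

theorem quad_avg (p : V → Fin 3 → ℝ) (β : V → ℝ) (q : V → Fin 3 → ℝ) (x : Fin 3 → ℝ)
    (hx : ∀ k, ∑ a, β a * (p a k - x k) = 0) :
    ∑ i, ∑ j, β i * β j * AA p i j q = 2 * ((∑ a, β a) * ∑ i, β i * ∑ k, (p i k - x k) * q i k) := by
  rw [pair_id p q (fun i j => β i * β j) (fun i j => mul_comm _ _), ← phi_avg p β β q x hx]
  congr 1
  unfold phi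
  simp only [mul_sum]
  conv_rhs => rw [sum_comm]
  refine sum_congr rfl fun i _ => ?_
  conv_rhs => rw [sum_comm]
  exact sum_congr rfl fun k _ => sum_congr rfl fun a _ => by ring

theorem Ctx.key {p : V → Fin 3 → ℝ} {C : SimpleGraph V} (h : Ctx p C) {v : V} (hv : v ∈ su C)
    {α : V → ℝ} (hα : Dep p (nb C v) α) (hne : ∀ i ∈ nb C v, α i ≠ 0) (β : V → ℝ)
    (hβ : ∀ i, i ∉ nb C v → β i = 0) (hσ : ∑ i, β i ≠ 0) {q1 q2 : V → Fin 3 → ℝ}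
    (h1 : MM p (gdel C v) q1) (h2 : MM p (gdel C v) q2) :
    (∑ i, ∑ j, β i * β j * AA p i j q1) * ∑ a, β a * phi p α a q2 =
    (∑ i, ∑ j, β i * β j * AA p i j q2) * ∑ a, β a * phi p α a q1 := by
  set σ := ∑ i, β i with hσd
  let x : Fin 3 → ℝ := fun k => (∑ a, β a * p a k) / σ
  have hx : ∀ k, ∑ a, β a * (p a k - x k) = 0 := by
    intro k
    simp only [mul_sub, sum_sub_distrib, ← sum_mul]
    rw [← hσd]; simp only [x]; field_simp; ring
  obtain ⟨μ, hμs, hμn, hμe, hμq⟩ := h.star hv x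
  set M := (∑ j, μ j) / σ with hM
  have hν : Dep p (nb C v) (fun i => μ i - M * β i) := by
    refine ⟨fun i hi => by rw [hμs i hi, hβ i hi]; ring, ?_, fun k => ?_⟩
    · rw [sum_sub_distrib, ← mul_sum, ← hσd, hM]; field_simp; ring
    · have e1 := hμe k
      have e2 := hx k
      simp only [mul_sub, sum_sub_distrib, ← sum_mul] at e1 e2
      rw [← hσd] at e2
      have e3 : ∑ i, (μ i - M * β i) * p i k = ∑ i, μ i * p i k - M * ∑ i, β i * p i k := by
        rw [mul_sum, ← sum_sub_distrib]; exact sum_congr rfl fun i _ => by ring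
      have e4 : M * σ = ∑ j, μ j := by rw [hM]; field_simp
      rw [e3]
      linear_combination e1 - M * e2 - x k * e4
  obtain ⟨τ, hτ⟩ := dep_unique h.hg (h.nbc hv) hα hne hν
  have hMτ : M ≠ 0 ∨ τ ≠ 0 := by
    by_contra hz
    push Not at hz
    obtain ⟨j, hj⟩ := hμn
    have := hτ j
    rw [hz.1, hz.2] at this
    exact hj (by linarith)
  have hrel : ∀ q, MM p (gdel C v) q → M * (∑ i, β i * ∑ k, (p i k - x k) * q i k) +
      τ * ∑ i, α i * ∑ k, (p i k - x k) * q i k = 0 := by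
    intro q hq
    rw [← hμq q hq, mul_sum, mul_sum, ← sum_add_distrib]
    refine sum_congr rfl fun i _ => ?_
    linear_combination (-∑ k, (p i k - x k) * q i k) * hτ i
  have r1 := hrel q1 h1
  have r2 := hrel q2 h2
  rw [quad_avg p β q1 x hx, quad_avg p β q2 x hx, phi_avg p α β q1 x hx, phi_avg p α β q2 x hx]
  generalize (∑ i, β i * ∑ k, (p i k - x k) * q1 i k) = P1 at *
  generalize (∑ i, β i * ∑ k, (p i k - x k) * q2 i k) = P2 at *
  generalize (∑ i, α i * ∑ k, (p i k - x k) * q1 i k) = R1 at *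
  generalize (∑ i, α i * ∑ k, (p i k - x k) * q2 i k) = R2 at *
  have e : P1 * R2 = P2 * R1 := by
    rcases hMτ with hz | hz
    · apply mul_left_cancel₀ hz; linear_combination R2 * r1 - R1 * r2
    · apply mul_left_cancel₀ hz; linear_combination P1 * r2 - P2 * r1
  linear_combination 2 * (∑ i, β i) * (∑ i, β i) * e

theorem three_sum (a b c : V) (s t u : ℝ) (f : V → ℝ) :
    ∑ i, ((if i = a then s else 0) + (if i = b then t else 0) + (if i = c then u else 0)) * f i
      = s * f a + t * f b + u * f c := by
  simp [add_mul, sum_add_distrib, ite_mul]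

theorem Ctx.key3 {p : V → Fin 3 → ℝ} {C : SimpleGraph V} (h : Ctx p C) {v : V} (hv : v ∈ su C)
    {α : V → ℝ} (hα : Dep p (nb C v) α) (hne : ∀ i ∈ nb C v, α i ≠ 0) {a b c : V}
    (ha : a ∈ nb C v) (hb : b ∈ nb C v) (hc : c ∈ nb C v) (s t u : ℝ)
    (hσ : s + t + u ≠ 0) {q1 q2 : V → Fin 3 → ℝ}
    (h1 : MM p (gdel C v) q1) (h2 : MM p (gdel C v) q2) :
    (s * t * AA p a b q1 + s * u * AA p a c q1 + t * u * AA p b c q1) *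
      (s * phi p α a q2 + t * phi p α b q2 + u * phi p α c q2) =
    (s * t * AA p a b q2 + s * u * AA p a c q2 + t * u * AA p b c q2) *
      (s * phi p α a q1 + t * phi p α b q1 + u * phi p α c q1) := by
  set β : V → ℝ := fun i => (if i = a then s else 0) + (if i = b then t else 0) +
    (if i = c then u else 0) with hβ
  have hs : ∀ f : V → ℝ, ∑ i, β i * f i = s * f a + t * f b + u * f c := three_sum a b c s t u
  have hk := h.key hv hα hne β (by
    intro i hi
    have h1 : i ≠ a := fun h => hi (h ▸ ha)
    have h2 : i ≠ b := fun h => hi (h ▸ hb)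
    have h3 : i ≠ c := fun h => hi (h ▸ hc)
    simp [hβ, h1, h2, h3]) (by
    have := hs (fun _ => 1)
    simp only [mul_one] at this
    rw [this]; exact hσ) h1 h2
  have hQ : ∀ q, ∑ i, ∑ j, β i * β j * AA p i j q =
      2 * (s * t * AA p a b q + s * u * AA p a c q + t * u * AA p b c q) := by
    intro q
    simp only [mul_assoc, ← mul_sum]
    rw [hs]
    simp only [hs]
    rw [AA_self, AA_self, AA_self, AA_symm p b a, AA_symm p c a, AA_symm p c b]
    ring
  rw [hs, hs, hQ, hQ] at hk
  linarith

theorem Ctx.k1 {p : V → Fin 3 → ℝ} {C : SimpleGraph V} (h : Ctx p C) {v : V} (hv : v ∈ su C)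
    {α : V → ℝ} (hα : Dep p (nb C v) α) (hne : ∀ i ∈ nb C v, α i ≠ 0) {a b : V}
    (ha : a ∈ nb C v) (hb : b ∈ nb C v) {q1 q2 : V → Fin 3 → ℝ}
    (h1 : MM p (gdel C v) q1) (h2 : MM p (gdel C v) q2) :
    phi p α a q1 * AA p a b q2 = phi p α a q2 * AA p a b q1 := by
  have e1 := h.key3 hv hα hne ha hb ha 1 1 0 (by norm_num) h1 h2
  have e2 := h.key3 hv hα hne ha hb ha 1 2 0 (by norm_num) h1 h2
  linarith

theorem Ctx.k2 {p : V → Fin 3 → ℝ} {C : SimpleGraph V} (h : Ctx p C) {v : V} (hv : v ∈ su C)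
    {α : V → ℝ} (hα : Dep p (nb C v) α) (hne : ∀ i ∈ nb C v, α i ≠ 0) {a b c : V}
    (ha : a ∈ nb C v) (hb : b ∈ nb C v) (hc : c ∈ nb C v) {q1 q2 : V → Fin 3 → ℝ}
    (h1 : MM p (gdel C v) q1) (h2 : MM p (gdel C v) q2) :
    phi p α a q1 * AA p b c q2 + phi p α b q1 * AA p a c q2 + phi p α c q1 * AA p a b q2 =
    phi p α a q2 * AA p b c q1 + phi p α b q2 * AA p a c q1 + phi p α c q2 * AA p a b q1 := by
  have e1 := h.key3 hv hα hne ha hb hc 1 1 1 (by norm_num) h1 h2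
  have a1 := h.k1 hv hα hne ha hb h1 h2
  have a2 := h.k1 hv hα hne ha hc h1 h2
  have a3 := h.k1 hv hα hne hb ha h1 h2
  have a4 := h.k1 hv hα hne hb hc h1 h2
  have a5 := h.k1 hv hα hne hc ha h1 h2
  have a6 := h.k1 hv hα hne hc hb h1 h2
  simp only [AA_symm p b a] at a3
  simp only [AA_symm p c a] at a5
  simp only [AA_symm p c b] at a6
  linarith

theorem Ctx.l12c {p : V → Fin 3 → ℝ} {C : SimpleGraph V} (h : Ctx p C) {v : V} (hv : v ∈ su C)
    {a b : V} (ha : C.Adj v a) (hb : C.Adj v b) (hab : a ≠ b)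
    (nab : ¬ C.Adj a b) : Ind p (gadd (gdel C v) a b) := by
  by_contra hdep
  have n1 : ¬ (gdel C v).Adj a b := fun h => nab h.1
  set F := gadd (gdel C v) a b with hF
  have hFv : ∀ j, ¬ F.Adj v j := by
    rintro j (h | ⟨_, ⟨h, _⟩ | ⟨h, _⟩⟩)
    exacts [h.2.1 rfl, ha.ne h, hb.ne h]
  have hFs : Sp F := by
    refine sp_of_isolated hFv fun X h3 hvX => ?_
    by_cases hA : a ∈ X ∧ b ∈ X
    · have e1 := h.pair hv hvX h3 hA.1 hA.2 hab nab
      rw [hF, ff_gadd _ hab n1 hA.1 hA.2, ff_gdel _ hvX]; omega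
    · rw [hF, ff_gadd_of_not _ hA, ff_gdel _ hvX]
      exact h.hs X h3
  have hdF : ∀ i, i ≠ v → dg F univ i = dg C univ i - ad C i v + (if i = a then 1 else 0) +
      (if i = b then 1 else 0) := by
    intro i hi
    rw [hF, dg_gadd_le _ hab n1, dg_gdel _ hi]
  have hdF5 : ∀ i, dg F univ i ≤ 5 := by
    intro i
    by_cases hi : i = v
    · rw [hi, show dg F univ v = 0 from sum_eq_zero fun j _ => ad_eq_zero (hFv j)]; norm_num
    rw [hdF i hi]
    have h1 := h.hd i
    have h2 := ad_nonneg C i v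
    by_cases ia : i = a
    · subst ia; rw [ad_eq_one ha.symm]; simp [hab]; omega
    by_cases ib : i = b
    · subst ib; rw [ad_eq_one hb.symm]; simp [ia]; omega
    simp [ia, ib]; omega
  obtain ⟨C', hC'F, hC'⟩ := exists_circ hdep
  have h7 : ∀ i ∈ su C', dg C' univ i = 5 := fun i hi =>
    lem7 h.hg hC' (hFs.mono hC'F) (fun i => (dg_gmono hC'F univ i).trans (hdF5 i)) hi
  obtain ⟨g, hg⟩ : ∃ g, g ∈ (nb C v) \ {a, b} := by
    apply card_pos.1
    have h1 := le_card_sdiff ({a, b} : Finset V) (nb C v)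
    have h2 := card_le_two (a := a) (b := b)
    rw [h.nbc hv] at h1
    omega
  simp only [mem_sdiff, mem_nb, mem_insert, mem_singleton, not_or] at hg
  obtain ⟨hvg, ga, gb⟩ := hg
  have hgS : g ∉ su C' := by
    intro hh
    have h1 := h7 g hh
    have h2 := dg_gmono hC'F univ g
    have h3 := hdF g hvg.ne'
    rw [ad_eq_one hvg.symm] at h3
    simp [ga, gb] at h3
    have := h.hd g
    omega
  have hvS : v ∉ su C' := by
    intro hh
    obtain ⟨j, hj⟩ := mem_su.1 hh
    exact hFv j (hC'F hj)
  obtain ⟨s, s', hsS, hsS', hss⟩ := one_lt_card_iff.1 (show 1 < (su C').card by have := su_card h.hg hC'; omega)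
  refine lem4' h.hg h.hC h.hd hvS hsS hsS' hss ?_ ?_ (mem_su.2 ⟨v, hvg.symm⟩) hgS hvg.ne'
  · obtain ⟨j, hj⟩ := mem_su.1 hsS
    rcases hC'F hj with h | ⟨_, ⟨h, _⟩ | ⟨h, _⟩⟩
    · exact mem_su.2 ⟨j, h.1⟩
    all_goals subst h; apply mem_su.2
    exacts [⟨v, ha.symm⟩, ⟨v, hb.symm⟩]
  · intro i hi j hij
    by_cases hj : j = v
    · exact Or.inr hj
    left
    have hiv : i ≠ v := fun h' => hvS (h' ▸ hi)
    exact su_close hC'F (hdF5 i) (h7 i hi) (Or.inl ⟨hij, hiv, hj⟩)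


def Par {M : Type*} (f g : M → ℝ) : Prop := ∀ q1 q2, f q1 * g q2 = f q2 * g q1

theorem Par.symm {M : Type*} {f g : M → ℝ} (h : Par f g) : Par g f := fun q1 q2 => by
  linarith [h q1 q2]

theorem Par.eq {M : Type*} {f g : M → ℝ} (h : Par f g) {q0 : M} (h0 : g q0 ≠ 0) :
    ∃ κ : ℝ, ∀ q, f q = κ * g q :=
  ⟨f q0 / g q0, fun q => by have := h q q0; field_simp; linarith⟩

theorem Par.trans {M : Type*} {f g k : M → ℝ} (h : Par f g) (h' : Par g k) {q0 : M} (h0 : g q0 ≠ 0) :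
    Par f k := by
  obtain ⟨s, hs⟩ := h.eq h0
  obtain ⟨t, ht⟩ := h'.symm.eq h0
  intro q1 q2
  rw [hs, hs, ht, ht]; ring

theorem Par.zero {M : Type*} {f g k : M → ℝ} (h : Par f g) (h' : Par f k) (hn : ¬ Par g k) (q : M) :
    f q = 0 := by
  by_contra hq
  exact hn (h.symm.trans h' hq)

section elim
variable {M : Type*} {N : Finset V} {φ : V → M → ℝ} {A : V → V → M → ℝ}

theorem elim1 (hs : ∀ i j q, A i j q = A j i q)
    (h1 : ∀ a ∈ N, ∀ b ∈ N, Par (φ a) (A a b))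
    (h2 : ∀ a ∈ N, ∀ b ∈ N, ∀ c ∈ N, ∀ q1 q2, φ a q1 * A b c q2 + φ b q1 * A a c q2 + φ c q1 * A a b q2 =
      φ a q2 * A b c q1 + φ b q2 * A a c q1 + φ c q2 * A a b q1)
    {a : V} (ha : a ∈ N) (hp : ∀ b ∈ N, Par (φ b) (φ a)) {b c : V} (hb : b ∈ N) (hc : c ∈ N) :
    Par (A b c) (φ a) := by
  by_cases zb : ∃ q, φ b q ≠ 0
  · obtain ⟨q, hq⟩ := zb
    exact (h1 b hb c hc).symm.trans (hp b hb) hq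
  by_cases zc : ∃ q, φ c q ≠ 0
  · obtain ⟨q, hq⟩ := zc
    have := (h1 c hc b hb).symm.trans (hp c hc) hq
    intro q1 q2
    rw [hs b c, hs b c]; exact this q1 q2
  push Not at zb zc
  intro q1 q2
  have := h2 a ha b hb c hc q1 q2
  simp only [zb, zc] at this
  linarith

theorem elim2 (h1 : ∀ a ∈ N, ∀ b ∈ N, Par (φ a) (A a b))
    (h2 : ∀ a ∈ N, ∀ b ∈ N, ∀ c ∈ N, ∀ q1 q2, φ a q1 * A b c q2 + φ b q1 * A a c q2 + φ c q1 * A a b q2 =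
      φ a q2 * A b c q1 + φ b q2 * A a c q1 + φ c q2 * A a b q1)
    (hs : ∀ i j q, A i j q = A j i q)
    {a b : V} (ha : a ∈ N) (hb : b ∈ N) (hn : ¬ Par (φ a) (φ b)) :
    (∀ c ∈ N, ∀ d ∈ N, (∀ q, φ c q = 0) → (∀ q, φ d q = 0) → ∀ q, A c d q = 0) ∧
    (∀ c ∈ N, ∀ d ∈ N, (∃ q, φ c q ≠ 0) → (∃ q, φ d q ≠ 0) → ∀ q, A c d q = 0) ∧
    (∀ c ∈ N, ∃ κ : ℝ, ∀ q, A a c q = κ * φ a q ∧ A b c q = κ * φ b q) := by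
  have hs' : ∀ i j, A i j = A j i := fun i j => funext (hs i j)
  have hz : ∀ c ∈ N, ∀ d ∈ N, ¬ Par (φ c) (φ d) → ∀ q, A c d q = 0 := by
    intro c hc d hd hcd
    exact Par.zero (h1 c hc d hd).symm (by rw [hs' c d]; exact (h1 d hd c hc).symm) hcd
  have hab := hz a ha b hb hn
  refine ⟨?_, ?_, ?_⟩
  · intro c hc d hd zc zd
    have hg : ∀ e ∈ N, Par (A c d) (φ e) := by
      intro e he q1 q2
      have := h2 e he c hc d hd q1 q2
      simp only [zc, zd] at this
      linarith
    exact Par.zero (hg a ha) (hg b hb) hn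
  · rintro c hc d hd ⟨qc, hqc⟩ ⟨qd, hqd⟩
    by_cases hcd : Par (φ c) (φ d)
    · obtain ⟨e, he, hce⟩ : ∃ e ∈ N, ¬ Par (φ c) (φ e) := by
        by_contra h
        push Not at h
        exact hn ((h a ha).symm.trans (h b hb) hqc)
      have hde : ¬ Par (φ d) (φ e) := fun h => hce (hcd.trans h hqd)
      have e1 := hz c hc e he hce
      have e2 := hz d hd e he hde
      refine Par.zero (h1 c hc d hd).symm (k := φ e) ?_ hce
      intro q1 q2
      have := h2 e he c hc d hd q1 q2
      simp only [hs e d, hs e c, e1, e2] at this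
      linarith
    · exact hz c hc d hd hcd
  · intro c hc
    unfold Par at hn
    push Not at hn
    obtain ⟨q1, q2, hq⟩ := hn
    have hqa : ∃ q, φ a q ≠ 0 := by
      by_contra h; push Not at h; simp [h] at hq
    have hqb : ∃ q, φ b q ≠ 0 := by
      by_contra h; push Not at h; simp [h] at hq
    obtain ⟨qa, hqa⟩ := hqa
    obtain ⟨qb, hqb⟩ := hqb
    obtain ⟨κ, hκ⟩ := (h1 a ha c hc).symm.eq hqa
    obtain ⟨κ', hκ'⟩ := (h1 b hb c hc).symm.eq hqb
    have := h2 a ha b hb c hc q1 q2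
    rw [hκ, hκ, hκ', hκ', hab, hab] at this
    have h3 : (κ' - κ) * (φ a q1 * φ b q2 - φ a q2 * φ b q1) = 0 := by linarith
    have h4 : κ' = κ := by
      rcases mul_eq_zero.1 h3 with h | h
      · linarith
      · exact absurd (by linarith) hq
    exact ⟨κ, fun q => ⟨hκ q, by rw [hκ', h4]⟩⟩
end elim

theorem np_one {p : V → Fin 3 → ℝ} {H : SimpleGraph V} {a b : V} (hI : Ind p (gadd H a b))
    (hab : a ≠ b) (hn : ¬ H.Adj a b) : ∃ q, MM p H q ∧ AA p a b q ≠ 0 := by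
  obtain ⟨q, hq, hq'⟩ := dual_lem hI (a := a) (b := b) (Or.inr ⟨hab, Or.inl ⟨rfl, rfl⟩⟩)
  refine ⟨q, fun i j hij => hq i j ⟨Or.inl hij, ?_⟩, hq'⟩
  rintro (⟨rfl, rfl⟩ | ⟨rfl, rfl⟩)
  · exact hn hij
  · exact hn hij.symm

theorem np_two {p : V → Fin 3 → ℝ} {H : SimpleGraph V} {a b c d : V}
    (hI : Ind p (gadd (gadd H a b) c d)) (hab : a ≠ b) (hcd : c ≠ d) (hn : ¬ H.Adj a b)
    (hn' : ¬ H.Adj c d) (hne : ¬ ((c = a ∧ d = b) ∨ (c = b ∧ d = a))) :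
    ∃ q1 q2, MM p H q1 ∧ MM p H q2 ∧ AA p a b q1 * AA p c d q2 ≠ AA p a b q2 * AA p c d q1 := by
  obtain ⟨q1, hq1, hq1'⟩ := dual_lem hI (a := a) (b := b) (Or.inl (Or.inr ⟨hab, Or.inl ⟨rfl, rfl⟩⟩))
  obtain ⟨q2, hq2, hq2'⟩ := dual_lem hI (a := c) (b := d) (Or.inr ⟨hcd, Or.inl ⟨rfl, rfl⟩⟩)
  refine ⟨q1, q2, fun i j hij => hq1 i j ⟨Or.inl (Or.inl hij), ?_⟩,
    fun i j hij => hq2 i j ⟨Or.inl (Or.inl hij), ?_⟩, ?_⟩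
  · rintro (⟨rfl, rfl⟩ | ⟨rfl, rfl⟩)
    · exact hn hij
    · exact hn hij.symm
  · rintro (⟨rfl, rfl⟩ | ⟨rfl, rfl⟩)
    · exact hn' hij
    · exact hn' hij.symm
  · have h1 : AA p c d q1 = 0 := hq1 c d ⟨Or.inr ⟨hcd, Or.inl ⟨rfl, rfl⟩⟩, hne⟩
    rw [h1, mul_zero]
    exact mul_ne_zero hq1' hq2'

theorem Ctx.no4 {p : V → Fin 3 → ℝ} {C : SimpleGraph V} (h : Ctx p C) {v : V} (hv : v ∈ su C)
    {S : Finset V} (hS : S ⊆ nb C v) (hcl : ∀ a ∈ S, ∀ b ∈ S, a ≠ b → C.Adj a b) : S.card ≤ 3 := by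
  by_contra hlt
  obtain ⟨T, hT, hTc⟩ := exists_subset_card_eq (show 4 ≤ S.card by omega)
  have h1 := ff_clique (F := C) (N := T) fun a ha b hb => hcl a (hT ha) b (hT hb)
  rw [hTc] at h1
  have hvT : v ∉ T := fun h' => by have := hS (hT h'); simp [mem_nb] at this
  refine h.four hv hvT ?_ (by rw [h1]; norm_num)
  rw [dg_eq_card, inter_eq_left.2 (hT.trans hS), hTc]; norm_num

theorem Ctx.hfour {p : V → Fin 3 → ℝ} {C : SimpleGraph V} (h : Ctx p C) {v : V} (hv : v ∈ su C)
    {x y z w : V} (hx : C.Adj v x) (hy : C.Adj v y) (hz : C.Adj v z) (hw : C.Adj v w) (hzw : z ≠ w)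
    (h1 : C.Adj x y) (h2 : C.Adj x z) (h3 : C.Adj x w) (h4 : C.Adj y z) (h5 : C.Adj y w) : False := by
  have hc : ({x, y, z, w} : Finset V).card = 4 := by
    simp [h1.ne, h2.ne, h3.ne, h4.ne, h5.ne, hzw]
  have hcl := ff_clique (F := gadd C z w) (N := {x, y, z, w}) (by
    intro a ha b hb hab
    simp only [mem_insert, mem_singleton] at ha hb
    have hadd : (gadd C z w).Adj z w := Or.inr ⟨hzw, Or.inl ⟨rfl, rfl⟩⟩
    rcases ha with rfl | rfl | rfl | rfl <;> rcases hb with rfl | rfl | rfl | rfl <;>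
      first
      | exact absurd rfl hab
      | exact hadd
      | exact hadd.symm
      | (apply le_gadd; assumption)
      | (apply le_gadd; apply SimpleGraph.Adj.symm; assumption))
  rw [hc] at hcl
  have h6 := ff_gadd_ge C (a := z) (b := w) {x, y, z, w}
  refine h.four hv (X := {x, y, z, w}) (by simp [hx.ne, hy.ne, hz.ne, hw.ne]) ?_ (by rw [hcl] at h6; norm_num at h6; omega)
  rw [dg_eq_card, inter_eq_left.2 ?_, hc]
  · norm_num
  · intro q hq
    simp only [mem_insert, mem_singleton] at hq
    rcases hq with rfl | rfl | rfl | rfl <;> exact mem_nb.2 (by assumption)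

theorem Ctx.disj {p : V → Fin 3 → ℝ} {C : SimpleGraph V} (h : Ctx p C) {v : V} (hv : v ∈ su C) :
    ∃ a b c d, C.Adj v a ∧ C.Adj v b ∧ C.Adj v c ∧ C.Adj v d ∧ a ≠ b ∧ a ≠ c ∧ a ≠ d ∧ b ≠ c ∧ b ≠ d ∧
      c ≠ d ∧ ¬ C.Adj a b ∧ ¬ C.Adj c d := by
  by_contra hcon
  push Not at hcon
  obtain ⟨a, b, ha, hb, hab, nab⟩ : ∃ a b, C.Adj v a ∧ C.Adj v b ∧ a ≠ b ∧ ¬ C.Adj a b := by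
    by_contra h'
    push Not at h'
    have := h.no4 hv (S := nb C v) subset_rfl fun a ha b hb hab => h' a b (mem_nb.1 ha) (mem_nb.1 hb) hab
    rw [h.nbc hv] at this
    omega
  obtain ⟨c, d, e, hcd, hce, hde, hN⟩ : ∃ c d e, c ≠ d ∧ c ≠ e ∧ d ≠ e ∧
      ((nb C v).erase a).erase b = {c, d, e} := by
    apply card_eq_three.1
    rw [card_erase_of_mem (mem_erase.2 ⟨hab.symm, mem_nb.2 hb⟩), card_erase_of_mem (mem_nb.2 ha), h.nbc hv]
  have hc : c ∈ ((nb C v).erase a).erase b := by rw [hN]; simp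
  have hd : d ∈ ((nb C v).erase a).erase b := by rw [hN]; simp
  have he : e ∈ ((nb C v).erase a).erase b := by rw [hN]; simp
  simp only [mem_erase, mem_nb] at hc hd he
  obtain ⟨hcb, hca, hc⟩ := hc
  obtain ⟨hdb, hda, hd⟩ := hd
  obtain ⟨heb, hea, he⟩ := he
  have acd := hcon a b c d ha hb hc hd hab hca.symm hda.symm hcb.symm hdb.symm hcd nab
  have ace := hcon a b c e ha hb hc he hab hca.symm hea.symm hcb.symm heb.symm hce nab
  have ade := hcon a b d e ha hb hd he hab hda.symm hea.symm hdb.symm heb.symm hde nab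
  have k1 : ∀ x, C.Adj v x → C.Adj c x → C.Adj d x → x ≠ e → False := fun x hx h1 h2 h3 =>
    h.hfour hv hc hd he hx h3.symm acd ace h1 ade h2
  have k2 : ∀ x, C.Adj v x → C.Adj c x → C.Adj e x → x ≠ d → False := fun x hx h1 h2 h3 =>
    h.hfour hv hc he hd hx h3.symm ace acd h1 ade.symm h2
  have k3 : ∀ x, C.Adj v x → C.Adj d x → C.Adj e x → x ≠ c → False := fun x hx h1 h2 h3 =>
    h.hfour hv hd he hc hx h3.symm ade acd.symm h1 ace.symm h2
  have x1 := fun hn => hcon a c b d ha hc hb hd hca.symm hab hda.symm hcb hcd hdb.symm hn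
  have x2 := fun hn => hcon a c b e ha hc hb he hca.symm hab hea.symm hcb hce heb.symm hn
  have x3 := fun hn => hcon a d b c ha hd hb hc hda.symm hab hca.symm hdb hcd.symm hcb.symm hn
  have x4 := fun hn => hcon a d b e ha hd hb he hda.symm hab hea.symm hdb hde heb.symm hn
  have x5 := fun hn => hcon a e b c ha he hb hc hea.symm hab hca.symm heb hce.symm hcb.symm hn
  have x6 := fun hn => hcon a e b d ha he hb hd hea.symm hab hda.symm heb hde.symm hdb.symm hn
  have a1 := fun h1 h2 => k1 a ha h1 h2 hea.symm
  have a2 := fun h1 h2 => k2 a ha h1 h2 hda.symm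
  have a3 := fun h1 h2 => k3 a ha h1 h2 hca.symm
  have b1 := fun h1 h2 => k1 b hb h1 h2 heb.symm
  have b2 := fun h1 h2 => k2 b hb h1 h2 hdb.symm
  have b3 := fun h1 h2 => k3 b hb h1 h2 hcb.symm
  rw [C.adj_comm a c] at x1 x2
  rw [C.adj_comm a d] at x3 x4
  rw [C.adj_comm a e] at x5 x6
  rw [C.adj_comm b d] at x1 x6
  rw [C.adj_comm b e] at x2 x4
  rw [C.adj_comm b c] at x3 x5
  by_cases q : C.Adj c a
  · exact b2 (x3 fun q' => a1 q q') (x4 fun q' => a1 q q')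
  · exact b3 (x1 q) (x2 q)

theorem dg_le_erase (C : SimpleGraph V) {X : Finset V} {z : V} (hz : z ∈ X) : dg C X z + 1 ≤ X.card := by
  have h1 : dg C X z ≤ (X.erase z).card := by
    rw [dg_eq_card]
    have : X ∩ nb C z ⊆ X.erase z := by
      intro y hy
      rw [mem_inter, mem_nb] at hy
      exact mem_erase.2 ⟨hy.2.ne', hy.1⟩
    exact_mod_cast card_le_card this
  rw [card_erase_of_mem hz] at h1
  have := card_pos.2 ⟨z, hz⟩
  omega

theorem four_le {C : SimpleGraph V} {v a b c d : V} {X : Finset V} (ha : C.Adj v a) (hb : C.Adj v b) (hc : C.Adj v c)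
    (hd : C.Adj v d) (hab : a ≠ b) (hac : a ≠ c) (had : a ≠ d) (hbc : b ≠ c) (hbd : b ≠ d) (hcd : c ≠ d)
    (xa : a ∈ X) (xb : b ∈ X) (xc : c ∈ X) (xd : d ∈ X) : 4 ≤ dg C X v := by
  rw [dg_eq_card]
  have h1 : ({a, b, c, d} : Finset V) ⊆ X ∩ nb C v := by
    intro q hq
    simp only [mem_insert, mem_singleton] at hq
    rw [mem_inter, mem_nb]
    rcases hq with rfl | rfl | rfl | rfl
    exacts [⟨xa, ha⟩, ⟨xb, hb⟩, ⟨xc, hc⟩, ⟨xd, hd⟩]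
  have h2 : ({a, b, c, d} : Finset V).card = 4 := by
    simp [hab, hac, had, hbc, hbd, hcd]
  have := card_le_card h1
  omega

theorem Ctx.tri {p : V → Fin 3 → ℝ} {C : SimpleGraph V} (h : Ctx p C) {v : V} (hv : v ∈ su C)
    {a b c d g : V} (ha : C.Adj v a) (hb : C.Adj v b) (hc : C.Adj v c) (hd : C.Adj v d) (hg : C.Adj v g)
    (hab : C.Adj a b) (hac : C.Adj a c) (hbc : b ≠ c) (had : a ≠ d) (hag : a ≠ g) (hdg : d ≠ g)
    (hbd : b ≠ d) (hbg : b ≠ g) (hcd : c ≠ d) (hcg : c ≠ g)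
    (nad : ¬ C.Adj a d) (nag : ¬ C.Adj a g)
    {X : Finset V} (hvX : v ∉ X) (haX : a ∈ X) (hdX : d ∈ X) (hgX : g ∈ X) (h4 : 4 ≤ X.card)
    (hX : ff C X = 14) : ∃ Y : Finset V, ff C Y = 12 ∧ Y.card = 4 ∧ v ∉ Y ∧ d ∈ Y ∧ g ∈ Y ∧ dg C Y a = 2 ∧
      a ∉ Y ∧ b ∉ Y := by
  have hbX : b ∉ X := fun h' => h.four hv hvX
    (four_le ha hb hd hg hab.ne had hag hbd hbg hdg haX h' hdX hgX) hX.le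
  have hcX : c ∉ X := fun h' => h.four hv hvX
    (four_le ha hc hd hg hac.ne had hag hcd hcg hdg haX h' hdX hgX) hX.le
  have e1 := deg_ge C (X := X) (T := {v, b, c}) (z := a) (by
    intro y hy
    simp only [mem_insert, mem_singleton] at hy
    rcases hy with rfl | rfl | rfl
    exacts [ha.symm, hab, hac]) (by
    intro y hy
    simp only [mem_insert, mem_singleton] at hy
    rcases hy with rfl | rfl | rfl
    exacts [hvX, hbX, hcX])
  have e2 : ({v, b, c} : Finset V).card = 3 := by simp [hb.ne, hc.ne, hbc]
  rw [e2] at e1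
  have e3 := h.hd a
  have e4 := ff_erase C haX
  have hYc : (X.erase a).card = X.card - 1 := card_erase_of_mem haX
  have e5 := h.hs (X.erase a) (by omega)
  have e6 : dg C X a = 2 := by push_cast at e1; omega
  have e7 : dg C (X.erase a) a = 2 := by
    have := dg_insert C (notMem_erase a X) a
    rw [insert_erase haX, ad_self] at this
    omega
  have hvY : v ∉ X.erase a := fun h' => hvX (mem_of_mem_erase h')
  have hY4 : 4 ≤ (X.erase a).card := by
    have h1 : {d, g} ∪ (X.erase a ∩ nb C a) ⊆ X.erase a := by
      intro y hy
      simp only [mem_union, mem_insert, mem_singleton] at hy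
      rcases hy with (rfl | rfl) | hy
      · exact mem_erase.2 ⟨had.symm, hdX⟩
      · exact mem_erase.2 ⟨hag.symm, hgX⟩
      · exact (mem_inter.1 hy).1
    have h2 := card_le_card h1
    rw [card_union_of_disjoint, card_pair hdg] at h2
    · rw [dg_eq_card] at e7; omega
    · rw [disjoint_left]
      intro y hy
      simp only [mem_insert, mem_singleton] at hy
      rw [mem_inter, mem_nb]
      rcases hy with rfl | rfl
      · exact fun h => nad h.2
      · exact fun h => nag h.2
  have hY12 : ff C (X.erase a) = 12 := by omega
  refine ⟨X.erase a, hY12, ?_, hvY, mem_erase.2 ⟨had.symm, hdX⟩, mem_erase.2 ⟨hag.symm, hgX⟩, e7, notMem_erase _ _,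
    fun h' => hbX (mem_of_mem_erase h')⟩
  by_contra hne
  exact hvY (h.p5 (by omega) hY12 hv)

theorem Ctx.tri2 {p : V → Fin 3 → ℝ} {C : SimpleGraph V} (h : Ctx p C) {v : V} (hv : v ∈ su C)
    {a b d g : V} (ha : C.Adj v a) (hb : C.Adj v b) (hd : C.Adj v d) (hg : C.Adj v g)
    (hab : C.Adj a b) (had : a ≠ d) (hag : a ≠ g) (hdg : d ≠ g)
    (hbd : b ≠ d) (hbg : b ≠ g) {Y Y' : Finset V}
    (y1 : ff C Y = 12) (y2 : Y.card = 4) (y3 : v ∉ Y) (y4 : d ∈ Y) (y5 : g ∈ Y) (y6 : dg C Y a = 2)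
    (y7 : a ∉ Y) (y8 : b ∉ Y)
    (z1 : ff C Y' = 12) (z2 : Y'.card = 4) (z3 : v ∉ Y') (z4 : d ∈ Y') (z6 : dg C Y' b = 2) : False := by
  have e1 := tight_dg h.hs y2.ge y1 y4
  have e2 := tight_dg h.hs z2.ge z1 z4
  have e3 := dg_union_inter C Y Y' d
  have hvU : v ∉ Y ∪ Y' := by simp [y3, z3]
  have e4 := deg_ge C (X := Y ∪ Y') (T := {v}) (z := d) (by simp; exact hd.symm) (by simp [y3, z3])
  have e5 := h.hd d
  have e6 := dg_le_erase C (mem_inter.2 ⟨y4, z4⟩)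
  simp at e4
  have e7 := (tight_union h.hs y1 z1 (by omega)).1
  have e8 : (Y ∪ Y').card ≤ 4 := by
    by_contra hlt
    exact hvU (h.p5 (by omega) e7 hv)
  have e9 : Y = Y ∪ Y' := eq_of_subset_of_card_le subset_union_left (by omega)
  have e10 : Y' = Y ∪ Y' := eq_of_subset_of_card_le subset_union_right (by omega)
  have e11 : Y = Y' := e9.trans e10.symm
  subst e11
  have f1 := ff_insert C y7
  have hbY : b ∉ insert a Y := by simp [hab.ne', y8]
  have f2 := ff_insert C hbY
  have f3 := dg_insert C y7 b
  rw [ad_eq_one hab.symm] at f3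
  refine h.four hv (X := insert b (insert a Y)) (by simp [hb.ne, ha.ne, y3]) ?_ (by omega)
  exact four_le ha hb hd hg hab.ne had hag hbd hbg hdg (by simp) (by simp) (by simp [y4]) (by simp [y5])

theorem Ctx.phi_zero {p : V → Fin 3 → ℝ} {C : SimpleGraph V} (h : Ctx p C) {v : V} (hv : v ∈ su C)
    {α : V → ℝ} (hα : Dep p (nb C v) α) (hne : ∀ i ∈ nb C v, α i ≠ 0) {a : V} (ha : a ∈ nb C v)
    {q : V → Fin 3 → ℝ} (hq : MM p (gdel C v) q) : phi p α a q = 0 := by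
  classical
  by_contra hq0
  set N := nb C v with hN
  let M := {q : V → Fin 3 → ℝ // MM p (gdel C v) q}
  let φ : V → M → ℝ := fun a q => phi p α a q.1
  let A : V → V → M → ℝ := fun a b q => AA p a b q.1
  have hs : ∀ i j q, A i j q = A j i q := fun i j q => AA_symm p i j q.1
  have h1 : ∀ a ∈ N, ∀ b ∈ N, Par (φ a) (A a b) := fun a ha b hb q1 q2 =>
    h.k1 hv hα hne ha hb q1.2 q2.2
  have h2 : ∀ a ∈ N, ∀ b ∈ N, ∀ c ∈ N, ∀ q1 q2, φ a q1 * A b c q2 + φ b q1 * A a c q2 + φ c q1 * A a b q2 =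
      φ a q2 * A b c q1 + φ b q2 * A a c q1 + φ c q2 * A a b q1 :=
    fun a ha b hb c hc q1 q2 => h.k2 hv hα hne ha hb hc q1.2 q2.2
  have hn0 : ∀ x y, ¬ C.Adj x y → ¬ (gdel C v).Adj x y := fun x y h h' => h h'.1
  by_cases hp : ∀ b ∈ N, Par (φ b) (φ a)
  · obtain ⟨x, y, z, w, hx, hy, hz, hw, hxy, hxz, hxw, hyz, hyw, hzw, nxy, nzw⟩ := h.disj hv
    obtain ⟨q1, q2, m1, m2, hqq⟩ := np_two (h.l12a hv hx hy hz hw hxy hxz hxw hyz hyw hzw nxy nzw) hxy hzw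
      (hn0 _ _ nxy) (hn0 _ _ nzw) (by
        rintro (⟨h, _⟩ | ⟨h, _⟩)
        exacts [hxz h.symm, hyz h.symm])
    have p1 := elim1 hs h1 h2 ha hp (mem_nb.2 hx) (mem_nb.2 hy)
    have p2 := elim1 hs h1 h2 ha hp (mem_nb.2 hz) (mem_nb.2 hw)
    exact hqq (p1.trans p2.symm (q0 := ⟨q, hq⟩) hq0 ⟨q1, m1⟩ ⟨q2, m2⟩)
  push Not at hp
  obtain ⟨b, hb, hpab⟩ := hp
  have hpab : ¬ Par (φ a) (φ b) := fun h => hpab h.symm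
  obtain ⟨g1, g2, g3⟩ := elim2 h1 h2 hs ha hb hpab
  have hadj : ∀ x ∈ N, ∀ y ∈ N, x ≠ y → (∀ q, A x y q = 0) → C.Adj x y := by
    intro x hx y hy hxy hz
    by_contra hn
    obtain ⟨q', m, hq'⟩ := np_one (h.l12c hv (mem_nb.1 hx) (mem_nb.1 hy) hxy hn) hxy (hn0 _ _ hn)
    exact hq' (hz ⟨q', m⟩)
  have hadj' : ∀ x ∈ N, ∀ y ∈ N, C.Adj x y → ∀ q, A x y q = 0 := by
    intro x hx y hy hxy q'
    exact q'.2 x y ⟨hxy, (mem_nb.1 hx).ne', (mem_nb.1 hy).ne'⟩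
  have hφb : ∃ q, φ b q ≠ 0 := by
    by_contra hz
    push Not at hz
    exact hpab fun q1 q2 => by rw [hz, hz]; ring
  have hφa : ∃ q, φ a q ≠ 0 := ⟨⟨q, hq⟩, hq0⟩
  have hab : a ≠ b := by
    rintro rfl
    exact hpab fun q1 q2 => by ring
  set B := N.filter fun x => ∃ q, φ x q ≠ 0 with hB
  have hB3 : B.card ≤ 3 := by
    refine h.no4 hv (filter_subset _ _) fun x hx y hy hxy => ?_
    rw [hB, mem_filter] at hx hy
    exact hadj x hx.1 y hy.1 hxy (g2 x hx.1 y hy.1 hx.2 hy.2)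
  have hNB : ∀ x, x ∈ N \ B → x ∈ N ∧ ∀ q, φ x q = 0 := by
    intro x hx
    rw [mem_sdiff, hB, mem_filter] at hx
    refine ⟨hx.1, ?_⟩
    by_contra h'
    push Not at h'
    exact hx.2 ⟨hx.1, h'⟩
  have hNB3 : (N \ B).card ≤ 3 := by
    refine h.no4 hv sdiff_subset fun x hx y hy hxy => ?_
    have hx := hNB x hx
    have hy := hNB y hy
    exact hadj x hx.1 y hy.1 hxy (g1 x hx.1 y hy.1 hx.2 hy.2)
  have hcard : (N \ B).card + B.card = 5 := by
    rw [← h.nbc hv]; exact card_sdiff_add_card_eq_card (filter_subset _ _)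
  have haB : a ∈ B := mem_filter.2 ⟨ha, hφa⟩
  have hbB : b ∈ B := mem_filter.2 ⟨hb, hφb⟩
  have habB : ({a, b} : Finset V) ⊆ B := by
    intro y hy; simp only [mem_insert, mem_singleton] at hy
    rcases hy with rfl | rfl
    exacts [haB, hbB]
  obtain ⟨c, hcB, hcab⟩ : ∃ c ∈ B, c ∉ ({a, b} : Finset V) := by
    by_contra hz
    push Not at hz
    have hsum : ∀ q : M, α a * φ a q + α b * φ b q = 0 := by
      intro q'
      rw [← phi_dep hα q'.1, ← sum_pair hab (f := fun x => α x * φ x q')]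
      refine sum_subset (subset_univ _) fun x _ hx => ?_
      by_cases hxN : x ∈ N
      · have : x ∈ N \ B := mem_sdiff.2 ⟨hxN, fun h => hx (hz x h)⟩
        rw [show φ x q' = 0 from (hNB x this).2 q']; ring
      · rw [hα.supp x hxN]; ring
    refine hpab fun q1 q2 => ?_
    apply mul_left_cancel₀ (hne a ha)
    linear_combination (φ b q2) * hsum q1 - (φ b q1) * hsum q2
  simp only [mem_insert, mem_singleton, not_or] at hcab
  have hB3' : 3 ≤ B.card := by
    have : ({a, b, c} : Finset V) ⊆ B := by
      intro y hy; simp only [mem_insert, mem_singleton] at hy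
      rcases hy with rfl | rfl | rfl
      exacts [haB, hbB, hcB]
    have h3 : ({a, b, c} : Finset V).card = 3 := by simp [hab, hcab.1, hcab.2, Ne.symm hcab.1, Ne.symm hcab.2]
    rw [← h3]; exact card_le_card this
  have hc : c ∈ N := (mem_filter.1 hcB).1
  have hφc := (mem_filter.1 hcB).2
  obtain ⟨d, g, hdg, hdgN⟩ := card_eq_two.1 (show (N \ B).card = 2 by omega)
  have hdN : d ∈ N \ B := by rw [hdgN]; simp
  have hgN : g ∈ N \ B := by rw [hdgN]; simp
  have adjab := hadj a ha b hb hab (g2 a ha b hb hφa hφb)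
  have adjac := hadj a ha c hc (Ne.symm hcab.1) (g2 a ha c hc hφa hφc)
  have adjbc := hadj b hb c hc (Ne.symm hcab.2) (g2 b hb c hc hφb hφc)
  have hneB : ∀ x ∈ N \ B, ∀ y ∈ B, y ≠ x := by
    intro x hx y hy hxy
    exact (mem_sdiff.1 hx).2 (hxy ▸ hy)
  have cross : ∀ x ∈ N \ B, ¬ C.Adj a x ∧ ¬ C.Adj b x := by
    intro x hx
    have hxN := (mem_sdiff.1 hx).1
    obtain ⟨κ, hκ⟩ := g3 x hxN
    suffices hh : C.Adj a x ∨ C.Adj b x → False by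
      exact ⟨fun h => hh (Or.inl h), fun h => hh (Or.inr h)⟩
    intro hor
    have hκ0 : κ = 0 := by
      rcases hor with hh | hh
      · obtain ⟨q', hq'⟩ := hφa
        have := hadj' a ha x hxN hh q'
        rw [(hκ q').1] at this
        exact (mul_eq_zero.1 this).resolve_right hq'
      · obtain ⟨q', hq'⟩ := hφb
        have := hadj' b hb x hxN hh q'
        rw [(hκ q').2] at this
        exact (mul_eq_zero.1 this).resolve_right hq'
    have ax := hadj a ha x hxN (hneB x hx a haB) fun q' => by rw [(hκ q').1, hκ0]; ring
    have bx := hadj b hb x hxN (hneB x hx b hbB) fun q' => by rw [(hκ q').2, hκ0]; ring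
    exact h.hfour hv (mem_nb.1 ha) (mem_nb.1 hb) (mem_nb.1 hc) (mem_nb.1 hxN) (hneB x hx c hcB) adjab adjac ax adjbc bx
  have hd' := (mem_sdiff.1 hdN).1
  have hg' := (mem_sdiff.1 hgN).1
  have exX : ∀ a', a' ∈ N → a' ∈ B → ¬ C.Adj a' d → ¬ C.Adj a' g →
      (∀ c ∈ N, ∃ κ : ℝ, ∀ q, A a' c q = κ * φ a' q) →
      ∃ X : Finset V, v ∉ X ∧ a' ∈ X ∧ d ∈ X ∧ g ∈ X ∧ 4 ≤ X.card ∧ ff C X = 14 := by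
    intro a' ha' haB' nd ng hk
    by_contra hz
    push Not at hz
    have hI := h.l12b hv (mem_nb.1 ha') (mem_nb.1 hd') (mem_nb.1 hg') (hneB d hdN a' haB') (hneB g hgN a' haB') hdg nd ng hz
    obtain ⟨q1, q2, m1, m2, hqq⟩ := np_two hI (hneB d hdN a' haB') (hneB g hgN a' haB') (hn0 _ _ nd) (hn0 _ _ ng) (by
      rintro (⟨_, h⟩ | ⟨h, _⟩)
      exacts [hdg h.symm, hneB d hdN a' haB' h])
    obtain ⟨κ, hκ⟩ := hk d hd'
    obtain ⟨κ', hκ'⟩ := hk g hg'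
    apply hqq
    have e1 : AA p a' d q1 = κ * φ a' ⟨q1, m1⟩ := hκ ⟨q1, m1⟩
    have e2 : AA p a' d q2 = κ * φ a' ⟨q2, m2⟩ := hκ ⟨q2, m2⟩
    have e3 : AA p a' g q1 = κ' * φ a' ⟨q1, m1⟩ := hκ' ⟨q1, m1⟩
    have e4 : AA p a' g q2 = κ' * φ a' ⟨q2, m2⟩ := hκ' ⟨q2, m2⟩
    rw [e1, e2, e3, e4]; ring
  obtain ⟨X, x1, x2, x3, x4, x5, x6⟩ := exX a ha haB (cross d hdN).1 (cross g hgN).1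
    (fun c hc => (g3 c hc).imp fun κ hκ q => (hκ q).1)
  obtain ⟨X', x1', x2', x3', x4', x5', x6'⟩ := exX b hb hbB (cross d hdN).2 (cross g hgN).2
    (fun c hc => (g3 c hc).imp fun κ hκ q => (hκ q).2)
  have va := mem_nb.1 ha
  have vb := mem_nb.1 hb
  have vc := mem_nb.1 hc
  have vd := mem_nb.1 hd'
  have vg := mem_nb.1 hg'
  obtain ⟨Y, y1, y2, y3, y4, y5, y6, y7, y8⟩ := h.tri hv va vb vc vd vg adjab adjac adjbc.ne (hneB d hdN a haB)
    (hneB g hgN a haB) hdg (hneB d hdN b hbB) (hneB g hgN b hbB) (hneB d hdN c hcB) (hneB g hgN c hcB)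
    (cross d hdN).1 (cross g hgN).1 x1 x2 x3 x4 x5 x6
  obtain ⟨Y', z1, z2, z3, z4, z5, z6, z7, z8⟩ := h.tri hv vb va vc vd vg adjab.symm adjbc adjac.ne (hneB d hdN b hbB)
    (hneB g hgN b hbB) hdg (hneB d hdN a haB) (hneB g hgN a haB) (hneB d hdN c hcB) (hneB g hgN c hcB)
    (cross d hdN).2 (cross g hgN).2 x1' x2' x3' x4' x5' x6'
  exact h.tri2 hv va vb vd vg adjab (hneB d hdN a haB) (hneB g hgN a haB) hdg (hneB d hdN b hbB) (hneB g hgN b hbB)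
    y1 y2 y3 y4 y5 y6 y7 y8 z1 z2 z3 z4 z6

noncomputable def Ll (p : V → Fin 3 → ℝ) (α : V → ℝ) (x : Fin 3 → ℝ) : (V → Fin 3 → ℝ) →ₗ[ℝ] ℝ where
  toFun q := ∑ i, ∑ k, q i k * (α i * (p i k - x k))
  map_add' q r := by
    rw [← sum_add_distrib]
    refine sum_congr rfl fun i _ => ?_
    rw [← sum_add_distrib]
    exact sum_congr rfl fun k _ => by simp; ring
  map_smul' s q := by
    simp only [RingHom.id_apply, smul_eq_mul]
    rw [mul_sum]
    refine sum_congr rfl fun i _ => ?_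
    rw [mul_sum]
    exact sum_congr rfl fun k _ => by simp; ring

theorem Ctx.lem14 {p : V → Fin 3 → ℝ} {C : SimpleGraph V} (h : Ctx p C) {ω : V → V → ℝ}
    (hω : IsStress p C ω) (v : V) : ∑ j, ω v j = 0 := by
  by_cases hv : v ∈ su C
  swap
  · refine sum_eq_zero fun j _ => hω.supp v j fun h' => hv (mem_su.2 ⟨j, h'⟩)
  by_contra hσ
  obtain ⟨α, hα, hne⟩ := exists_dep h.hg (h.nbc hv)
  have hvN : v ∉ nb C v := by simp [mem_nb]
  have hx : ∀ k, ∑ a, ω v a * (p a k - p v k) = 0 := by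
    intro k
    rw [← neg_eq_zero, ← sum_neg_distrib, ← hω.eq v k]
    exact sum_congr rfl fun j _ => by ring
  have hl : ∀ q, MM p (gdel C v) q → Ll p α (p v) q = 0 := by
    intro q hq
    have h1 := phi_avg p α (ω v) q (p v) hx
    have h2 : ∑ a, ω v a * phi p α a q = 0 := by
      refine sum_eq_zero fun a _ => ?_
      by_cases ha : a ∈ nb C v
      · rw [h.phi_zero hv hα hne ha hq]; ring
      · rw [hω.supp v a fun h' => ha (mem_nb.2 h')]; ring
    rw [h2] at h1
    have h3 := (mul_eq_zero.1 h1.symm).resolve_left hσ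
    rw [← h3]
    refine sum_congr rfl fun i _ => ?_
    rw [mul_sum]
    exact sum_congr rfl fun k _ => by ring
  obtain ⟨c, hc, hcs, hcl⟩ := span_lem p (gdel C v) (Ll p α (p v)) hl
  have hcv : ∀ j, c v j = 0 := fun j => hcs v j fun h' => h'.2.1 rfl
  have hce : ∀ i k, ∑ j, c i j * (p i k - p j k) = α i * (p i k - p v k) := by
    intro i k
    have h1 := hcl (fun i' k' => if i' = i ∧ k' = k then 1 else 0)
    rw [single_eval i k] at h1
    rw [← h1]
    exact single_eval i k (fun i k => α i * (p i k - p v k))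
  let ω' : V → V → ℝ := fun i j => c i j - (if i = v then α j else 0) - (if j = v then α i else 0)
  have hαv : α v = 0 := hα.supp v hvN
  have hst : IsStress p C ω' := by
    refine ⟨fun i j => by simp only [ω', hc i j]; ring, fun i j hij => ?_, fun i k => ?_⟩
    · simp only [ω']
      rw [hcs i j fun h' => hij h'.1]
      have e1 : (if i = v then α j else 0) = 0 := by
        split_ifs with hi
        · subst hi; exact hα.supp j fun h' => hij (mem_nb.1 h')
        · rfl
      have e2 : (if j = v then α i else 0) = 0 := by
        split_ifs with hi
        · subst hi; exact hα.supp i fun h' => hij (mem_nb.1 h').symm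
        · rfl
      rw [e1, e2]; ring
    · have e1 : ∑ j, ω' i j * (p i k - p j k) = ∑ j, c i j * (p i k - p j k) -
          ∑ j, (if i = v then α j else 0) * (p i k - p j k) - α i * (p i k - p v k) := by
        simp only [ω', sub_mul, sum_sub_distrib]
        simp [ite_mul]
      rw [e1, hce]
      by_cases hi : i = v
      · simp only [hi, if_true]
        have := hα.eq k
        have e2 : ∑ j, α j * (p v k - p j k) = (∑ j, α j) * p v k - ∑ j, α j * p j k := by
          rw [sum_mul, ← sum_sub_distrib]; exact sum_congr rfl fun j _ => by ring
        rw [e2, hα.sum, this]; ring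
      · simp [hi]
  have hω'v : ∀ j, ω' v j = - α j := by
    intro j
    simp only [ω', hcv, hαv]
    simp
  obtain ⟨u, hu⟩ := mem_su.1 hv
  have hcomb := hω.lin hst (α u) (ω v u)
  have hz := circ_unique h.hC hcomb hu (by rw [hω'v]; ring)
  have hαu := hne u (mem_nb.2 hu)
  apply hσ
  apply mul_left_cancel₀ hαu
  rw [mul_zero, mul_sum]
  have e1 : ∀ j, α u * ω v j = ω v u * α j := by
    intro j
    have := hz v j
    rw [hω'v] at this
    linarith
  rw [sum_congr rfl fun j _ => e1 j, ← mul_sum, hα.sum, mul_zero]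

theorem Ctx.su_adj {p : V → Fin 3 → ℝ} {C : SimpleGraph V} (h : Ctx p C) {v w : V} (hw : C.Adj v w) :
    (nb C w).card = 5 := h.nbc (mem_su.2 ⟨v, hw.symm⟩)

theorem Ctx.twin_eq {p : V → Fin 3 → ℝ} {C : SimpleGraph V} (h : Ctx p C) {v y : V} (hv : v ∈ su C)
    (hs : nb C v ⊆ nb C y) : nb C v = nb C y := by
  have h5 := h.nbc hv
  obtain ⟨w, hw⟩ := mem_su.1 hv
  have hy : y ∈ su C := mem_su.2 ⟨w, mem_nb.1 (hs (mem_nb.2 hw))⟩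
  exact eq_of_subset_of_card_le hs (by rw [h.nbc hy, h5])

theorem Ctx.twins {p : V → Fin 3 → ℝ} {C : SimpleGraph V} (h : Ctx p C) :
    ∃ v ∈ su C, ∃ y0, ∀ y, y ≠ v → nb C v ⊆ nb C y → y = y0 := by
  by_contra hcon
  push Not at hcon
  have two : ∀ v ∈ su C, 3 ≤ ((su C).filter fun y => nb C v = nb C y).card := by
    intro v hv
    obtain ⟨y1, h1, s1, -⟩ := hcon v hv v
    obtain ⟨y2, h2, s2, h12⟩ := hcon v hv y1
    have e1 := h.twin_eq hv s1
    have e2 := h.twin_eq hv s2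
    obtain ⟨w, hw⟩ := mem_su.1 hv
    have m1 : y1 ∈ su C := mem_su.2 ⟨w, mem_nb.1 (s1 (mem_nb.2 hw))⟩
    have m2 : y2 ∈ su C := mem_su.2 ⟨w, mem_nb.1 (s2 (mem_nb.2 hw))⟩
    have hc : ({v, y1, y2} : Finset V).card = 3 := by
      rw [card_eq_three]; exact ⟨v, y1, y2, h1.symm, h2.symm, h12.symm, rfl⟩
    rw [← hc]
    apply card_le_card
    intro q hq
    simp only [mem_insert, mem_singleton] at hq
    rw [mem_filter]
    rcases hq with rfl | rfl | rfl
    exacts [⟨hv, rfl⟩, ⟨m1, e1⟩, ⟨m2, e2⟩]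
  obtain ⟨v, w, hvw⟩ := circ_adj h.hC
  have hv : v ∈ su C := mem_su.2 ⟨w, hvw⟩
  have hw : w ∈ su C := mem_su.2 ⟨v, hvw.symm⟩
  have same : ∀ w', C.Adj v w' → nb C w = nb C w' := by
    intro w' hw'
    by_contra hne
    have hd : Disjoint ((su C).filter fun y => nb C w = nb C y) ((su C).filter fun y => nb C w' = nb C y) := by
      rw [disjoint_left]
      intro q h1 h2
      exact hne ((mem_filter.1 h1).2.trans (mem_filter.1 h2).2.symm)
    have hsub : ((su C).filter fun y => nb C w = nb C y) ∪ ((su C).filter fun y => nb C w' = nb C y) ⊆ nb C v := by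
      intro q hq
      rw [mem_nb]
      rcases mem_union.1 hq with hq | hq
      · exact (mem_nb.1 ((mem_filter.1 hq).2 ▸ mem_nb.2 hvw.symm : v ∈ nb C q)).symm
      · exact (mem_nb.1 ((mem_filter.1 hq).2 ▸ mem_nb.2 hw'.symm : v ∈ nb C q)).symm
    have := card_le_card hsub
    rw [card_union_of_disjoint hd, h.nbc hv] at this
    have t1 := two w hw
    have t2 := two w' (mem_su.2 ⟨v, hw'.symm⟩)
    omega
  have same2 : ∀ m ∈ nb C w, nb C v = nb C m := by
    intro m hm
    apply h.twin_eq hv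
    intro w' hw'
    rw [same w' (mem_nb.1 hw')] at hm
    exact mem_nb.2 (mem_nb.1 hm).symm
  have hdis : Disjoint (nb C v) (nb C w) := by
    rw [disjoint_left]
    intro q h1 h2
    rw [same2 q h2] at h1
    exact C.irrefl (mem_nb.1 h1)
  have hcard : (nb C v ∪ nb C w).card = 10 := by
    rw [card_union_of_disjoint hdis, h.nbc hv, h.nbc hw]
  have hs := h.hs (nb C v ∪ nb C w) (by omega)
  have hdg : ∀ i ∈ nb C v ∪ nb C w, dg C (nb C v ∪ nb C w) i = 5 := by
    intro i hi
    rw [dg_eq_card]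
    rcases mem_union.1 hi with hi | hi
    · rw [← same i (mem_nb.1 hi), inter_eq_right.2 subset_union_right, h.nbc hw]; rfl
    · rw [← same2 i hi, inter_eq_right.2 subset_union_left, h.nbc hv]; rfl
  rw [ff, ee, sum_congr rfl hdg, sum_const, hcard] at hs
  norm_num at hs

theorem Ctx.count {p : V → Fin 3 → ℝ} {C : SimpleGraph V} (h : Ctx p C) {v : V} (hv : v ∈ su C)
    (D : Finset V) (hD : v ∉ D) : ∑ y ∈ D, dg C (nb C v) y ≤ 20 := by
  have h1 : ∑ y ∈ insert v D, dg C (nb C v) y ≤ ∑ y, dg C (nb C v) y :=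
    sum_le_univ_sum_of_nonneg fun y => dg_nonneg _ _ _
  rw [sum_insert hD] at h1
  have h2 : dg C (nb C v) v = 5 := by rw [dg_eq_card, inter_self, h.nbc hv]; rfl
  have h3 : ∑ y, dg C (nb C v) y = 25 := by
    have : ∑ y, dg C (nb C v) y = ∑ w ∈ nb C v, dg C univ w := by
      simp only [dg]
      rw [sum_comm]
      exact sum_congr rfl fun w _ => sum_congr rfl fun y _ => ad_comm _ _ _
    rw [this, sum_congr rfl fun w hw => by rw [dg_univ, h.su_adj (mem_nb.1 hw)], sum_const, h.nbc hv]
    norm_num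
  omega

theorem Ctx.choose {p : V → Fin 3 → ℝ} {C : SimpleGraph V} (h : Ctx p C) :
    ∃ v ∈ su C, ∃ u x, C.Adj v u ∧ ¬ ((nb C v).erase u ⊆ nb C u) ∧ x ≠ v ∧ x ≠ u ∧
      ∀ y, y ≠ v → (nb C v).erase u ⊆ nb C y → y = x := by
  obtain ⟨v, hv, y0, hy0⟩ := h.twins
  refine ⟨v, hv, ?_⟩
  by_contra hcon
  push Not at hcon
  let B : V → Finset V := fun u => univ.filter fun y => y ≠ v ∧ (nb C v).erase u ⊆ nb C y
  have mB : ∀ u y, y ∈ B u ↔ y ≠ v ∧ (nb C v).erase u ⊆ nb C y := fun u y => by simp [B]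
  -- every u is bad
  have bad : ∀ u, C.Adj v u → u ∈ B u ∨ ∀ x, ∃ y ∈ B u, y ≠ x := by
    intro u hu
    by_cases hs : (nb C v).erase u ⊆ nb C u
    · exact Or.inl ((mB _ _).2 ⟨hu.ne.symm, hs⟩)
    · right
      have hex : ∃ y, y ∈ B u := by
        by_contra hno
        push Not at hno
        obtain ⟨l, hl⟩ : ((nb C v).erase u).Nonempty := by
          rw [← card_pos, card_erase_of_mem (mem_nb.2 hu), h.nbc hv]; norm_num
        obtain ⟨y, h1, h2, -⟩ := hcon u l hu hs (by rintro rfl; simp [mem_nb] at hl) (mem_erase.1 hl).1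
        exact hno y ((mB _ _).2 ⟨h1, h2⟩)
      intro x
      by_cases hx : x = v ∨ x = u
      · obtain ⟨y, hy⟩ := hex
        refine ⟨y, hy, ?_⟩
        obtain ⟨h1, h2⟩ := (mB _ _).1 hy
        rcases hx with rfl | rfl
        · exact h1
        · rintro rfl; exact hs h2
      · push Not at hx
        obtain ⟨y, h1, h2, h3⟩ := hcon u x hu hs hx.1 hx.2
        exact ⟨y, (mB _ _).2 ⟨h1, h2⟩, h3⟩
  have two : ∀ u u', u ≠ u' → ∀ y, y ∈ B u → y ∈ B u' → nb C v ⊆ nb C y := by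
    intro u u' hne y h1 h2 q hq
    by_cases hqu : q = u
    · exact ((mB _ _).1 h2).2 (mem_erase.2 ⟨hqu ▸ hne, hq⟩)
    · exact ((mB _ _).1 h1).2 (mem_erase.2 ⟨hqu, hq⟩)
  have four : ∀ u, C.Adj v u → ∀ y ∈ B u, 4 ≤ dg C (nb C v) y := by
    intro u hu y hy
    rw [dg_eq_card]
    have : (nb C v).erase u ⊆ nb C v ∩ nb C y := subset_inter (erase_subset _ _) ((mB _ _).1 hy).2
    have := card_le_card this
    rw [card_erase_of_mem (mem_nb.2 hu), h.nbc hv] at this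
    exact_mod_cast this
  by_cases ht : y0 ≠ v ∧ nb C v ⊆ nb C y0
  · -- one twin
    obtain ⟨hyv, hs⟩ := ht
    have heq := h.twin_eq hv hs
    have hne : ∀ u ∈ nb C v, 1 ≤ ((B u).erase y0).card := by
      intro u hu
      rw [Nat.one_le_iff_ne_zero, ← Nat.pos_iff_ne_zero, card_pos]
      rcases bad u (mem_nb.1 hu) with hb | hb
      · refine ⟨u, mem_erase.2 ⟨?_, hb⟩⟩
        rintro rfl
        rw [heq] at hu
        exact C.irrefl (mem_nb.1 hu)
      · obtain ⟨y, h1, h2⟩ := hb y0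
        exact ⟨y, mem_erase.2 ⟨h2, h1⟩⟩
    have hdis : ∀ u ∈ nb C v, ∀ u' ∈ nb C v, u ≠ u' → Disjoint ((B u).erase y0) ((B u').erase y0) := by
      intro u _ u' _ huu
      rw [disjoint_left]
      intro q h1 h2
      have := two u u' huu q (mem_of_mem_erase h1) (mem_of_mem_erase h2)
      exact (mem_erase.1 h1).1 (hy0 q ((mB _ _).1 (mem_of_mem_erase h1)).1 this)
    have hcard := card_biUnion hdis
    have hge : 5 ≤ ((nb C v).biUnion fun u => (B u).erase y0).card := by
      rw [hcard]
      have := sum_le_sum hne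
      simpa [h.nbc hv] using this
    have hc := h.count hv ((nb C v).biUnion fun u => (B u).erase y0) (by
      simp only [mem_biUnion, not_exists, not_and]
      intro u _ hq
      exact ((mB _ _).1 (mem_of_mem_erase hq)).1 rfl)
    have hc := h.count hv (insert y0 ((nb C v).biUnion fun u => (B u).erase y0)) (by
      rw [mem_insert, not_or]
      refine ⟨hyv.symm, ?_⟩
      simp only [mem_biUnion, not_exists, not_and]
      intro u _ hq
      exact ((mB _ _).1 (mem_of_mem_erase hq)).1 rfl)
    rw [sum_insert (by simp)] at hc
    have hlow : ∑ y ∈ ((nb C v).biUnion fun u => (B u).erase y0), (4 : ℤ) ≤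
        ∑ y ∈ ((nb C v).biUnion fun u => (B u).erase y0), dg C (nb C v) y := by
      apply sum_le_sum
      intro y hy
      obtain ⟨u, hu, hy⟩ := mem_biUnion.1 hy
      exact four u (mem_nb.1 hu) y (mem_of_mem_erase hy)
    rw [sum_const, nsmul_eq_mul] at hlow
    have h5 : dg C (nb C v) y0 = 5 := by
      rw [dg_eq_card, ← heq, inter_self, h.nbc hv]; rfl
    rw [h5] at hc
    have : (5 : ℤ) ≤ (((nb C v).biUnion fun u => (B u).erase y0).card : ℤ) := by exact_mod_cast hge
    linarith
  · have not_tw : ∀ y, y ≠ v → ¬ nb C v ⊆ nb C y := by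
      intro y hy hs
      have := hy0 y hy hs
      exact ht (this ▸ ⟨hy, hs⟩)
    have hdis : ∀ u ∈ nb C v, ∀ u' ∈ nb C v, u ≠ u' → Disjoint (B u) (B u') := by
      intro u _ u' _ huu
      rw [disjoint_left]
      intro q h1 h2
      exact not_tw q ((mB _ _).1 h1).1 (two u u' huu q h1 h2)
    have hne : ∀ u ∈ nb C v, 1 ≤ (B u).card := by
      intro u hu
      rw [Nat.one_le_iff_ne_zero, ← Nat.pos_iff_ne_zero, card_pos]
      rcases bad u (mem_nb.1 hu) with hb | hb
      · exact ⟨u, hb⟩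
      · obtain ⟨y, h1, h2⟩ := hb v
        exact ⟨y, h1⟩
    obtain ⟨u0, hu0, hu0B⟩ : ∃ u ∈ nb C v, u ∉ B u := by
      by_contra hno
      push Not at hno
      have := h.no4 hv (S := nb C v) subset_rfl fun a ha b hb hab =>
        mem_nb.1 (((mB _ _).1 (hno a ha)).2 (mem_erase.2 ⟨hab.symm, hb⟩))
      rw [h.nbc hv] at this
      omega
    have h2 : 2 ≤ (B u0).card := by
      rcases bad u0 (mem_nb.1 hu0) with hb | hb
      · exact absurd hb hu0B
      · obtain ⟨y, h1, -⟩ := hb v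
        obtain ⟨y', h1', h2'⟩ := hb y
        exact one_lt_card.2 ⟨y', h1', y, h1, h2'⟩
    have hge : 6 ≤ ((nb C v).biUnion B).card := by
      rw [card_biUnion hdis, ← add_sum_erase _ _ hu0]
      have := sum_le_sum (s := (nb C v).erase u0) fun u hu => hne u (mem_of_mem_erase hu)
      simp only [sum_const, card_erase_of_mem hu0, h.nbc hv, smul_eq_mul] at this
      omega
    have hc := h.count hv ((nb C v).biUnion B) (by
      simp only [mem_biUnion, not_exists, not_and]
      intro u _ hq
      exact ((mB _ _).1 hq).1 rfl)
    have hlow : ∑ y ∈ ((nb C v).biUnion B), (4 : ℤ) ≤ ∑ y ∈ ((nb C v).biUnion B), dg C (nb C v) y := by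
      apply sum_le_sum
      intro y hy
      obtain ⟨u, hu, hy⟩ := mem_biUnion.1 hy
      exact four u (mem_nb.1 hu) y hy
    rw [sum_const, nsmul_eq_mul] at hlow
    have : (6 : ℤ) ≤ (((nb C v).biUnion B).card : ℤ) := by exact_mod_cast hge
    linarith

noncomputable def pcol (p : V → Fin 3 → ℝ) (l : V) (T : Finset V) : V → Fin 3 → ℝ :=
  fun i k => if i = l then (1 / 3) * ∑ j ∈ T, p j k else p i k

theorem affI_congr {p q : V → Fin 3 → ℝ} {S : Finset V} (h : ∀ i ∈ S, ∀ k, p i k = q i k)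
    (hp : AffI p S) : AffI q S := by
  intro μ h1 h2 h3
  refine hp μ h1 h2 fun k => ?_
  rw [← h3 k]
  refine sum_congr rfl fun i _ => ?_
  by_cases hi : i ∈ S
  · rw [h i hi]
  · rw [h1 i hi]; simp

theorem affI_pcol {p : V → Fin 3 → ℝ} (hg : Gn p) {l : V} {T : Finset V} (hl : l ∉ T)
    {S : Finset V} (hS : S.card = 4) (hT : ¬ insert l T ⊆ S) : AffI (pcol p l T) S := by
  by_cases hlS : l ∈ S
  swap
  · refine affI_congr (p := p) (fun i hi k => ?_) (affI_gen hg.gen hg.card S hS.le)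
    rw [pcol, if_neg]
    rintro rfl; exact hlS hi
  obtain ⟨m, hm, hmS⟩ : ∃ m ∈ T, m ∉ S := by
    by_contra hno
    push Not at hno
    exact hT (insert_subset hlS hno)
  obtain ⟨a, b, c, hab, hac, hbc, hE⟩ := card_eq_three.1 (show (S.erase l).card = 3 by
    rw [card_erase_of_mem hlS, hS])
  have ha : a ∈ S.erase l := by rw [hE]; simp
  have hb : b ∈ S.erase l := by rw [hE]; simp
  have hc : c ∈ S.erase l := by rw [hE]; simp
  obtain ⟨hal, ha⟩ := mem_erase.1 ha
  obtain ⟨hbl, hb⟩ := mem_erase.1 hb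
  obtain ⟨hcl, hc⟩ := mem_erase.1 hc
  let y : V → Fin 3 → ℝ := fun i k => if i = a then (if k = 0 then 1 else 0) else if i = b then (if k = 1 then 1 else 0)
      else if i = c then (if k = 2 then 1 else 0) else 0
  let x : V → Fin 3 → ℝ := fun i k => if i = m then - ∑ j ∈ T.erase m, y j k else y i k
  have ev : ∀ (z : V → Fin 3 → ℝ), (fun i k => MvPolynomial.aeval (fun y : V × Fin 3 => z y.1 y.2)
      ((fun i k => if i = l then MvPolynomial.C (1 / 3) * ∑ j ∈ T, MvPolynomial.X (j, k) else MvPolynomial.X (i, k) :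
        V → Fin 3 → MvPolynomial (V × Fin 3) ℚ) i k)) = pcol z l T := by
    intro z
    funext i k
    simp only [pcol]
    split_ifs
    · simp
    · simp
  have key := affI_transfer (fun i k => if i = l then MvPolynomial.C (1 / 3) * ∑ j ∈ T, MvPolynomial.X (j, k)
      else MvPolynomial.X (i, k)) hg.gen S x (by
    rw [ev]
    have nm : ∀ i ∈ S, i ≠ m := fun i hi => by rintro rfl; exact hmS hi
    apply affI_simplex S l a b c
    · intro i hi
      by_cases h : i = l
      · exact Or.inl h
      · right
        have : i ∈ S.erase l := mem_erase.2 ⟨h, hi⟩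
        rw [hE] at this
        simpa using this
    · intro k
      simp only [pcol, if_true]
      rw [← add_sum_erase _ _ hm]
      have : ∑ j ∈ T.erase m, x j k = ∑ j ∈ T.erase m, y j k := by
        refine sum_congr rfl fun j hj => ?_
        simp only [x, if_neg (mem_erase.1 hj).1]
      rw [this]
      simp [x]
    · intro k
      simp [pcol, hal, x, nm a ha, y]
    · intro k
      simp [pcol, hbl, x, nm b hb, y, hab.symm]
    · intro k
      simp [pcol, hcl, x, nm c hc, y, hac.symm, hbc.symm])
  rw [ev] at key
  exact key

theorem pcol_dep {p : V → Fin 3 → ℝ} (hg : Gn p) {l u : V} {T : Finset V} (hl : l ∉ T) (hT : T.card = 3)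
    (hul : u ≠ l) (huT : u ∉ T) {μ : V → ℝ} (h1 : ∀ i, i ∉ insert u (insert l T) → μ i = 0)
    (h2 : ∑ i, μ i = 0) (h3 : ∀ k, ∑ i, μ i * pcol p l T i k = 0) : μ u = 0 := by
  let ν : V → ℝ := fun i => if i = l then 0 else if i ∈ T then μ i + μ l / 3 else μ i
  have hsum : ∀ g : V → ℝ, ∑ i, ν i * g i = ∑ i, μ i * g i - μ l * g l + μ l / 3 * ∑ j ∈ T, g j := by
    intro g
    have : ∀ i, ν i * g i = μ i * g i - (if i = l then μ l * g l else 0) + (if i ∈ T then μ l / 3 * g i else 0) := by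
      intro i
      simp only [ν]
      by_cases h : i = l
      · subst h; simp [hl]
      · by_cases h' : i ∈ T
        · simp [h, h']; ring
        · simp [h, h']
    rw [sum_congr rfl fun i _ => this i, sum_add_distrib, sum_sub_distrib, mul_sum]
    simp [sum_ite_mem]
  have haff := affI_gen hg.gen hg.card (insert u T) (by rw [card_insert_of_notMem huT, hT])
  have := haff ν (by
    intro i hi
    simp only [mem_insert, not_or] at hi
    simp only [ν]
    by_cases h : i = l
    · simp [h]
    · rw [if_neg h, if_neg hi.2]
      exact h1 i (by simp [h, hi.1, hi.2])) (by
    have := hsum fun _ => 1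
    simp only [mul_one, h2, sum_const, hT] at this
    rw [this]; norm_num) (by
    intro k
    have := hsum fun i => pcol p l T i k
    rw [h3 k] at this
    have e1 : ∑ j ∈ T, pcol p l T j k = ∑ j ∈ T, p j k := sum_congr rfl fun j hj => by
      rw [pcol, if_neg]; rintro rfl; exact hl hj
    have e2 : pcol p l T l k = 1 / 3 * ∑ j ∈ T, p j k := by simp [pcol]
    rw [e1, e2] at this
    have e3 : ∑ i, ν i * p i k = ∑ i, ν i * pcol p l T i k := sum_congr rfl fun i _ => by
      by_cases h : i = l
      · simp [ν, h]
      · rw [pcol, if_neg h]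
    rw [e3, this]; ring) u
  simpa [ν, hul, huT] using this

theorem Ctx.false {p : V → Fin 3 → ℝ} {C : SimpleGraph V} (h : Ctx p C) : False := by
  obtain ⟨v, hv, u, x, hvu, hLu, hxv, hxu, hx⟩ := h.choose
  have hLc : ((nb C v).erase u).card = 4 := by
    rw [card_erase_of_mem (mem_nb.2 hvu), h.nbc hv]
  obtain ⟨l, hlL⟩ : ((nb C v).erase u).Nonempty := by rw [← card_pos, hLc]; norm_num
  obtain ⟨T, hTdef⟩ : ∃ T, T = ((nb C v).erase u).erase l := ⟨_, rfl⟩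
  have hTc : T.card = 3 := by rw [hTdef, card_erase_of_mem hlL, hLc]
  have hlT : l ∉ T := by rw [hTdef]; exact notMem_erase _ _
  have hins : insert l T = (nb C v).erase u := by rw [hTdef, insert_erase hlL]
  have hul : u ≠ l := fun e => by subst e; simp at hlL
  have huT : u ∉ T := by rw [hTdef]; simp
  have main : ∀ ω, IsStress (pcol p l T) C ω → (True → ∀ i, ∑ j, ω i j = 0) → ∀ i j, ω i j = 0 := by
    intro ω hω hs
    have hs : ∀ i, ∑ j, ω i j = 0 := hs trivial
    have heq : ∀ i k, ∑ j, ω i j * pcol p l T j k = 0 := by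
      intro i k
      have := hω.eq i k
      simp only [mul_sub, sum_sub_distrib] at this
      rw [← sum_mul, hs i] at this
      linarith
    -- propagation
    have step : ∀ z b, C.Adj z b → ω z b = 0 → ¬ ((nb C v).erase u ⊆ nb C b) → ∀ j, ω b j = 0 := by
      intro z b hzb h0 hL
      have hb : b ∈ su C := mem_su.2 ⟨z, hzb.symm⟩
      have := affI_pcol h.hg hlT (S := (nb C b).erase z)
        (by rw [card_erase_of_mem (mem_nb.2 hzb.symm), h.nbc hb])
        (by rw [hins]; exact fun h' => hL (h'.trans (erase_subset _ _)))
      refine this (ω b) (fun i hi => ?_) (hs b) (heq b)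
      by_cases hiz : i = z
      · rw [hiz, hω.symm, h0]
      · apply hω.supp
        intro h'
        exact hi (mem_erase.2 ⟨hiz, mem_nb.2 h'⟩)
    have hvu0 : ω v u = 0 := by
      refine pcol_dep h.hg hlT hTc hul huT (fun i hi => ?_) (hs v) (heq v)
      rw [hins, insert_erase (mem_nb.2 hvu)] at hi
      exact hω.supp _ _ fun h' => hi (mem_nb.2 h')
    have hu0 := step v u hvu hvu0 hLu
    let S : Finset V := univ.filter fun i => (∀ j, ω i j = 0) ∧ i ≠ v ∧ i ≠ x
    have mS : ∀ i, i ∈ S ↔ (∀ j, ω i j = 0) ∧ i ≠ v ∧ i ≠ x := fun i => by simp [S]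
    have hz : ∀ z, z ≠ v → z ≠ x → ∀ j, ω z j = 0 := by
      intro z hzv hzx
      by_contra hno
      push Not at hno
      obtain ⟨j, hj⟩ := hno
      have hzsu : z ∈ su C := by
        by_contra h'
        exact hj (hω.supp z j fun h'' => h' (mem_su.2 ⟨j, h''⟩))
      refine lem4 h.hg h.hC (u := x) (v := v) (S := S) (s := u) (z := z) hxv (by simp [mS]) (by simp [mS])
        ((mS u).2 ⟨hu0, hvu.ne.symm, hxu.symm⟩) (mem_su.2 ⟨v, hvu.symm⟩) ?_ hzsu
        (fun h' => hj (((mS z).1 h').1 j)) hzx hzv (h.hd x)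
      intro i hi b hib
      by_cases hbx : b = x
      · exact Or.inr (Or.inl hbx)
      by_cases hbv : b = v
      · exact Or.inr (Or.inr hbv)
      refine Or.inl ((mS b).2 ⟨?_, hbv, hbx⟩)
      exact step i b hib (((mS i).1 hi).1 b) fun h' => hbx (hx b hbv h')
    have hvx : ω v x = 0 := by
      have := hs v
      rw [sum_eq_single x] at this
      · exact this
      · intro j _ hj
        by_cases hjv : j = v
        · rw [hjv]; exact hω.supp v v (C.irrefl)
        · rw [hω.symm, hz j hjv hj]
      · simp
    intro i j
    by_cases hi : i ≠ v ∧ i ≠ x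
    · exact hz i hi.1 hi.2 j
    by_cases hj : j ≠ v ∧ j ≠ x
    · rw [hω.symm]; exact hz j hj.1 hj.2 i
    have hi' : i = v ∨ i = x := by tauto
    have hj' : j = v ∨ j = x := by tauto
    rcases hi' with rfl | rfl <;> rcases hj' with rfl | rfl
    · exact hω.supp _ _ C.irrefl
    · exact hvx
    · rw [hω.symm]; exact hvx
    · exact hω.supp _ _ C.irrefl
  refine h.hC.dep fun ω hω => ?_
  exact stress_transfer True (pcol p l T) p h.hg.gen C main ω hω fun _ => h.lem14 hω

theorem sp_of_sparse {G : SimpleGraph V} [DecidableRel G.Adj] :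
    Sparse3 G ↔ Sp G := by
  have key : ∀ X : Finset V, ee G X = (((X ×ˢ X).filter fun p => G.Adj p.1 p.2).card : ℤ) := by
    intro X
    rw [card_filter]
    push_cast
    rw [sum_product]
    refine sum_congr rfl fun i _ => sum_congr rfl fun j _ => ?_
    by_cases h : G.Adj i j
    · rw [ad_eq_one h, if_pos h]
    · rw [ad_eq_zero h, if_neg h]
  refine forall_congr' fun X => imp_congr_right fun _ => ?_
  obtain ⟨k, hk⟩ := ff_even G X
  have := key X
  rw [ff] at *
  rw [edgesWithin]
  omega

theorem main_ind {G : SimpleGraph V} [DecidableRel G.Adj] (hreg : ∀ v, G.degree v = 5) (hs : Sparse3 G)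
    {p : V → Fin 3 → ℝ} (hp : Gen p) : Ind p G := by
  by_contra hno
  obtain ⟨C, hCG, hC⟩ := exists_circ hno
  obtain ⟨a, b, hab⟩ := circ_adj hC
  have hcard : 4 ≤ Fintype.card V := by
    have := G.degree_lt_card_verts a
    rw [hreg a] at this
    omega
  refine Ctx.false (p := p) (C := C) ⟨⟨hp, hcard⟩, hC, (sp_of_sparse.1 hs).mono hCG, fun i => ?_⟩
  refine (dg_gmono hCG _ _).trans ?_
  rw [dg_univ]
  have : nb G i = G.neighborFinset i := by ext j; simp [mem_nb]
  rw [this, G.card_neighborFinset_eq_degree, hreg i]; rfl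

theorem stmt19 (G : SimpleGraph V) [DecidableRel G.Adj]
    (hreg : ∀ v, G.degree v = 5) :
    ((∀ p : V → Fin 3 → ℝ,
        AlgebraicIndependent ℚ (fun x : V × Fin 3 => p x.1 x.2) →
        LinearIndependent ℝ (fun e : G.edgeSet => rigidityRow p e.1)) ↔ Sparse3 G)
    ∧ (∀ p : V → Fin 3 → ℝ,
        AlgebraicIndependent ℚ (fun x : V × Fin 3 => p x.1 x.2) →
        Sparse3 G →
        Module.finrank ℝ
          (Submodule.span ℝ (Set.range fun e : G.edgeSet => rigidityRow p e.1))
          = G.edgeFinset.card) := by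
  refine ⟨⟨fun H => ?_, fun hs p hp => li_of_ind (main_ind hreg hs hp)⟩, fun p hp hs => ?_⟩
  · rcases isEmpty_or_nonempty V with hV | ⟨⟨a⟩⟩
    · intro X hX
      have : X = ∅ := Finset.eq_empty_of_isEmpty X
      subst this
      simp at hX
    · obtain ⟨p, hp⟩ := exists_gen V
      have hcard : 4 ≤ Fintype.card V := by
        have := G.degree_lt_card_verts a
        rw [hreg a] at this
        omega
      exact sp_of_sparse.2 (lem5 ⟨hp, hcard⟩ (ind_of_li (H p hp)))
  · rw [finrank_span_eq_card (li_of_ind (main_ind hreg hs hp)), SimpleGraph.edgeFinset, Set.toFinset_card]
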